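/- Let q be a braiding matrix with connected Dynkin diagram such that B_q is finite dimensional, and let B be a pre-Nichols algebra of q with finite GKdim. Let i,j,k ∈ I_θ satisfy one of: (a) q̃_{ij} = q_{jj} = −1, q_{ii} = −q̃_{jk}² ∈ G_3', q̃_{ik} = 1; (b) q_{kk} = q̃_{jk} = q_{jj} = −1, q_{ii} = −q̃_{ij} ∈ G_3', q̃_{ik} = 1; (c) q_{jj} = −1, q̃_{ij} = q_{ii}^{−2} ≠ 1, q_{kk} = q̃_{jk}^{−1} = −q_{ii}³, q̃_{ik} = 1; (d) q_{ii} = q_{jj} = q_{kk} = −1, −q̃_{ij} = q̃_{jk} ∈ G_3', q̃_{ik} = 1. Then [[x_{ij}, x_{ijk}]_c, x_j]_c = 0 in B. -/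

import Mathlib

/-
Common framework for formalizing statements from
"Finite GK-dimensional pre-Nichols algebras of (super)modular and unidentified type"
(Angiono, Campagnolo, Sanmarco).

We work over `ℂ` (an algebraically closed field of characteristic zero).
A braiding matrix is `q : Fin θ → Fin θ → ℂˣ`.  The tensor algebra `T(V)` of the
associated braided vector space of diagonal type is realized as the free algebra
on `Fin θ`.  The braided bialgebra structure on `T(V)` (the braided coproduct,
uniquely determined by the braiding matrix) is packaged in the structure
`BraidedStr`: its fields characterize it uniquely, so quantifying over
`S : BraidedStr θ q` is equivalent to using "the" braided coproduct.

A pre-Nichols algebra of `q` is the quotient `T(V)/I` by an ℕ₀-homogeneous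
(two-sided) braided bi-ideal `I` generated in degrees ≥ 2 (`IsPreNicholsIdeal`);
such an ideal is automatically contained in the defining ideal `Jq` of the
Nichols algebra, which is the largest such ideal.  A statement
"`x = 0` holds in the pre-Nichols algebra `T(V)/I`" is formalized as `x ∈ I`.
-/

open scoped TensorProduct

noncomputable section

namespace PreNicholsPaper

/-- The tensor algebra `T(V)` of the braided vector space of diagonal type of rank `θ`. -/
abbrev TV (θ : ℕ) := FreeAlgebra ℂ (Fin θ)

/-- The generator `x_i` of `T(V)`. -/
def gen (θ : ℕ) (i : Fin θ) : TV θ := FreeAlgebra.ι ℂ i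

/-- The monomial `x_{i_1} ⋯ x_{i_n}` associated to a word. -/
def wordElem (θ : ℕ) (w : List (Fin θ)) : TV θ := (w.map (gen θ)).prod

/-- The multidegree in `ℕ₀^θ` of a word. -/
def degW (θ : ℕ) (w : List (Fin θ)) : Fin θ → ℕ := fun i => w.count i

/-- `α_i`, the `i`-th canonical basis vector of `ℕ₀^θ`. -/
def δ (θ : ℕ) (i : Fin θ) : Fin θ → ℕ := fun k => if k = i then 1 else 0

/-- The bilinear form `ℕ₀^θ × ℕ₀^θ → ℂˣ` attached to the braiding matrix,
`q(α_i, α_j) = q_{ij}`, evaluated in `ℂ`. -/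
def qf {θ : ℕ} (q : Fin θ → Fin θ → ℂˣ) (a b : Fin θ → ℕ) : ℂ :=
  ∏ i : Fin θ, ∏ j : Fin θ, (q i j : ℂ) ^ (a i * b j)

/-- `q̃_{ij} = q_{ij} q_{ji}`. -/
def qtil {θ : ℕ} (q : Fin θ → Fin θ → ℂˣ) (i j : Fin θ) : ℂ := (q i j : ℂ) * (q j i : ℂ)

/-- The braided commutator `[u,v]_c = uv - q(a,b) vu` of elements `u, v`
which are homogeneous of multidegrees `a`, `b` respectively. -/
def brk {θ : ℕ} (q : Fin θ → Fin θ → ℂˣ) (a b : Fin θ → ℕ) (u v : TV θ) : TV θ :=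
  u * v - qf q a b • (v * u)

/-- `(ad_c x_i) y = x_i y - q(α_i, b) y x_i` for `y` homogeneous of multidegree `b`. -/
def ad1 {θ : ℕ} (q : Fin θ → Fin θ → ℂˣ) (i : Fin θ) (b : Fin θ → ℕ) (y : TV θ) : TV θ :=
  brk q (δ θ i) b (gen θ i) y

/-- The iterated braided adjoint `x_{i_1 i_2 ⋯ i_k} = (ad_c x_{i_1}) x_{i_2 ⋯ i_k}`. -/
def xw {θ : ℕ} (q : Fin θ → Fin θ → ℂˣ) : List (Fin θ) → TV θ
  | [] => 1
  | [i] => gen θ i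
  | i :: w => ad1 q i (degW θ w) (xw q w)

/-- `(ad_c x_i)^m x_j`. -/
def adpow {θ : ℕ} (q : Fin θ → Fin θ → ℂˣ) (i j : Fin θ) : ℕ → TV θ
  | 0 => gen θ j
  | m + 1 => ad1 q i (fun k => m * δ θ i k + δ θ j k) (adpow q i j m)

/-- The homogeneous component of total degree `n` of `T(V)`. -/
def homogTot (θ : ℕ) (n : ℕ) : Submodule ℂ (TV θ) :=
  Submodule.span ℂ {x | ∃ w : List (Fin θ), w.length = n ∧ x = wordElem θ w}

/-- The homogeneous component of multidegree `d ∈ ℕ₀^θ` of `T(V)`. -/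
def homogD (θ : ℕ) (d : Fin θ → ℕ) : Submodule ℂ (TV θ) :=
  Submodule.span ℂ {x | ∃ w : List (Fin θ), degW θ w = d ∧ x = wordElem θ w}

/-- The braided bialgebra structure on `T(V)` determined by the braiding matrix `q`:
the braided coproduct `Δ` together with the multiplication `mulB` of the braided
tensor product `T(V) ⊗ T(V)`.  These axioms determine `Δ` and `mulB` uniquely. -/
structure BraidedStr (θ : ℕ) (q : Fin θ → Fin θ → ℂˣ) where
  Δ : TV θ →ₗ[ℂ] TensorProduct ℂ (TV θ) (TV θ)
  mulB : TensorProduct ℂ (TV θ) (TV θ) →ₗ[ℂ]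
    TensorProduct ℂ (TV θ) (TV θ) →ₗ[ℂ] TensorProduct ℂ (TV θ) (TV θ)
  mulB_spec : ∀ (a d : TV θ) (wb wc : List (Fin θ)),
    mulB (a ⊗ₜ[ℂ] wordElem θ wb) (wordElem θ wc ⊗ₜ[ℂ] d)
      = qf q (degW θ wb) (degW θ wc) • ((a * wordElem θ wc) ⊗ₜ[ℂ] (wordElem θ wb * d))
  Δ_one : Δ 1 = 1 ⊗ₜ[ℂ] 1
  Δ_gen : ∀ i, Δ (gen θ i) = gen θ i ⊗ₜ[ℂ] 1 + 1 ⊗ₜ[ℂ] gen θ i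
  Δ_mul : ∀ u v : TV θ, Δ (u * v) = mulB (Δ u) (Δ v)

variable {θ : ℕ} {q : Fin θ → Fin θ → ℂˣ}

/-- `x` is a primitive element. -/
def IsPrimitiveIn (S : BraidedStr θ q) (x : TV θ) : Prop :=
  S.Δ x = x ⊗ₜ[ℂ] (1 : TV θ) + (1 : TV θ) ⊗ₜ[ℂ] x

/-- The submodule `I ⊗ T(V) + T(V) ⊗ J` of `T(V) ⊗ T(V)`. -/
def mixedPair (I J : Submodule ℂ (TV θ)) : Submodule ℂ (TensorProduct ℂ (TV θ) (TV θ)) :=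
  Submodule.span ℂ
    ({x | ∃ a b : TV θ, a ∈ I ∧ x = a ⊗ₜ[ℂ] b} ∪ {x | ∃ a b : TV θ, b ∈ J ∧ x = a ⊗ₜ[ℂ] b})

/-- The submodule `I ⊗ T(V) + T(V) ⊗ I` of `T(V) ⊗ T(V)`. -/
def mixedSub (I : Submodule ℂ (TV θ)) : Submodule ℂ (TensorProduct ℂ (TV θ) (TV θ)) :=
  mixedPair I I

/-- `I` is the defining ideal of a pre-Nichols algebra of `q`：an ℕ₀-homogeneous
two-sided (bi-)ideal of `T(V)` generated in degrees `≥ 2` which is also a coideal.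
Such an ideal is automatically contained in the defining ideal `Jq` of the Nichols
algebra, and the pre-Nichols algebra is the quotient `T(V)/I`. -/
structure IsPreNicholsIdeal (S : BraidedStr θ q) (I : Submodule ℂ (TV θ)) : Prop where
  mul_left : ∀ a x : TV θ, x ∈ I → a * x ∈ I
  mul_right : ∀ a x : TV θ, x ∈ I → x * a ∈ I
  homog_ge2 : I = Submodule.span ℂ {x | x ∈ I ∧ ∃ n, 2 ≤ n ∧ x ∈ homogTot θ n}
  coideal : ∀ x ∈ I, S.Δ x ∈ mixedSub I

/-- The defining ideal `J_q` of the Nichols algebra `B_q = T(V)/J_q`: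
the maximal homogeneous braided Hopf ideal generated in degrees `≥ 2`. -/
def Jq (S : BraidedStr θ q) : Submodule ℂ (TV θ) := sSup {I | IsPreNicholsIdeal S I}

/-- The standard filtration of `T(V)`: span of words of length `≤ n`. -/
def Wfil (θ : ℕ) (n : ℕ) : Submodule ℂ (TV θ) :=
  Submodule.span ℂ {x | ∃ w : List (Fin θ), w.length ≤ n ∧ x = wordElem θ w}

/-- The quotient algebra `T(V)/I` has finite Gelfand–Kirillov dimension, i.e.
the standard filtration of the (finitely generated) quotient has polynomial growth. -/
def FinGK (I : Submodule ℂ (TV θ)) : Prop :=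
  ∃ C d : ℕ, ∀ n : ℕ, Module.finrank ℂ ((Wfil θ n).map I.mkQ) ≤ C * (n + 1) ^ d

/-- The Gelfand–Kirillov dimension of the quotient algebra `T(V)/I`. -/
def GKdim (I : Submodule ℂ (TV θ)) : ℝ :=
  Filter.limsup
    (fun n : ℕ => Real.log (Module.finrank ℂ ((Wfil θ n).map I.mkQ)) / Real.log n)
    Filter.atTop

/-- `I` defines an eminent pre-Nichols algebra: it is a finite-GKdim pre-Nichols
algebra, and every finite-GKdim pre-Nichols algebra of `q` is a quotient of it. -/
def IsEminent (S : BraidedStr θ q) (I : Submodule ℂ (TV θ)) : Prop :=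
  IsPreNicholsIdeal S I ∧ FinGK I ∧
    ∀ I' : Submodule ℂ (TV θ), IsPreNicholsIdeal S I' → FinGK I' → I ≤ I'

/-- The Dynkin diagram of the braiding matrix `q`: vertices `Fin θ`, an edge between
`i ≠ j` iff `q̃_{ij} ≠ 1`. -/
def dynkin {θ : ℕ} (q : Fin θ → Fin θ → ℂˣ) : SimpleGraph (Fin θ) :=
  SimpleGraph.fromRel (fun i j => qtil q i j ≠ 1)

/-- The quantum number `(m)_t = 1 + t + ⋯ + t^{m-1}`. -/
def qnum (t : ℂ) (m : ℕ) : ℂ := ∑ k ∈ Finset.range m, t ^ k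

/-- The set of `n ∈ ℕ₀` such that `(n+1)_{q_{ii}} (1 - q_{ii}^n q̃_{ij}) = 0`,
i.e. such that `(ad_c x_i)^{n+1} x_j = 0` in the Nichols algebra.  The entry
`c_{ij}` of the generalized Cartan matrix is `-(min of this set)`. -/
def cSet {θ : ℕ} (q : Fin θ → Fin θ → ℂˣ) (i j : Fin θ) : Set ℕ :=
  {n | qnum (q i i : ℂ) (n + 1) * (1 - (q i i : ℂ) ^ n * qtil q i j) = 0}

/-- The generalized Cartan matrix of `q`. -/
def cij {θ : ℕ} (q : Fin θ → Fin θ → ℂˣ) (i j : Fin θ) : ℤ :=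
  if i = j then 2 else -(Int.ofNat (sInf (cSet q i j)))

/-- All entries `c_{ij}` are defined at the vertex `i`. -/
def reflectable {θ : ℕ} (q : Fin θ → Fin θ → ℂˣ) (i : Fin θ) : Prop :=
  ∀ j, j ≠ i → (cSet q i j).Nonempty

/-- The `i`-th reflection of the braiding matrix:
`(r_i q)_{jk} = q(s_i α_j, s_i α_k)` where `s_i α_j = α_j - c_{ij} α_i`. -/
def reflectMat {θ : ℕ} (q : Fin θ → Fin θ → ℂˣ) (i : Fin θ) : Fin θ → Fin θ → ℂˣ :=
  fun j k =>
    q j k * q j i ^ (-(cij q i k)) * q i k ^ (-(cij q i j)) * q i i ^ (cij q i j * cij q i k)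

/-- The reflection `s_i` acting on `ℤ^θ`. -/
def sRefl {θ : ℕ} (q : Fin θ → Fin θ → ℂˣ) (i : Fin θ) (β : Fin θ → ℤ) : Fin θ → ℤ :=
  fun k => β k - (if k = i then ∑ j, cij q i j * β j else 0)

/-- The (real) roots of `q`, together with the base points of the Weyl groupoid at
which they live: pairs `(q', β)` obtained from a simple root of `q` by iterated
reflections. -/
inductive ReachRoot {θ : ℕ} (q₀ : Fin θ → Fin θ → ℂˣ) :
    (Fin θ → Fin θ → ℂˣ) → (Fin θ → ℤ) → Prop
  | simple (j : Fin θ) : ReachRoot q₀ q₀ (fun k => if k = j then 1 else 0)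
  | reflect {q' : Fin θ → Fin θ → ℂˣ} {β : Fin θ → ℤ} (i : Fin θ) :
      ReachRoot q₀ q' β → ReachRoot q₀ (reflectMat q' i) (sRefl q' i β)

/-- `q` has a finite (generalized) root system: all reflections are defined at every
point of the Weyl groupoid, and the set of roots so obtained is finite. -/
def FiniteRootSystem {θ : ℕ} (q : Fin θ → Fin θ → ℂˣ) : Prop :=
  (∀ q' i, (∃ β, ReachRoot q q' β) → reflectable q' i) ∧
    Set.Finite {β : Fin θ → ℤ | ∃ q', ReachRoot q q' β}

/-- Conjecture (Andruskiewitsch–Angiono–Heckenberger): the root system of a Nichols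
algebra of diagonal type with finite Gelfand–Kirillov dimension is finite. -/
def AAH : Prop :=
  ∀ (θ : ℕ) (q : Fin θ → Fin θ → ℂˣ) (S : BraidedStr θ q), FinGK (Jq S) → FiniteRootSystem q

/-- The two-sided ideal of `T(V)` generated by a set. -/
def idealGen (θ : ℕ) (s : Set (TV θ)) : Submodule ℂ (TV θ) :=
  Submodule.span ℂ {x | ∃ g ∈ s, ∃ a b : TV θ, x = a * g * b}

end PreNicholsPaper

namespace PreNicholsPaper

/-! Let `x` be a multihomogeneous element of degree at least two that is primitive modulo `I` but
not in `I`. Then `x` and a generator `x_l` span a braided subspace of `T(V)/I` of diagonal type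
whose Nichols algebra is a subquotient of `T(V)/I`, so by the AAH conjecture its rank two braiding
matrix has a finite root system. A few reflections exclude this whenever they lead to a vertex
labelled `1` with an edge, or to a matrix fixed by both reflections whose Cartan matrix is not
finite. This forces `x_j²` and `x_{ik}` to vanish, then the skew derivative at `j` of
`[x_{ij}, [x_{ij}, x_{kj}]_c]_c`, and finally this commutator itself, which by then is primitive. It
agrees with `[[x_{ij}, x_{ijk}]_c, x_j]_c` once `x_j² = x_{ik} = 0`.

Skew derivations give pairs of operators generating a Nichols algebra inside the dual of `B_q`. The
same rank two argument for such pairs shows that `B_q` has infinite GKdim in family (a), and also in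
family (c) unless `-q_{ii}⁻¹` has order five or six. -/

section
variable {θ : ℕ} {q : Fin θ → Fin θ → ℂˣ}

/-! ### Words and degrees -/

@[simp] lemma wordElem_nil : wordElem θ [] = 1 := rfl

lemma wordElem_cons (a : Fin θ) (w : List (Fin θ)) :
    wordElem θ (a :: w) = gen θ a * wordElem θ w := by
  simp [wordElem]

lemma wordElem_append (v w : List (Fin θ)) :
    wordElem θ (v ++ w) = wordElem θ v * wordElem θ w := by
  simp [wordElem]

lemma wordElem_singleton (a : Fin θ) : wordElem θ [a] = gen θ a := by
  simp [wordElem]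

@[simp] lemma degW_nil : degW θ [] = 0 := by
  ext; simp [degW]

lemma degW_append (v w : List (Fin θ)) : degW θ (v ++ w) = degW θ v + degW θ w := by
  ext; simp [degW]

lemma degW_singleton (a : Fin θ) : degW θ [a] = δ θ a := by
  ext i; simp [degW, δ, List.count_singleton', @eq_comm _ a i]

lemma degW_cons (a : Fin θ) (w : List (Fin θ)) : degW θ (a :: w) = δ θ a + degW θ w := by
  rw [← List.singleton_append, degW_append, degW_singleton]

lemma sum_degW (w : List (Fin θ)) : ∑ l, degW θ w l = w.length := by
  induction w with
  | nil => simp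
  | cons a w ih => simp [degW_cons, Finset.sum_add_distrib, ih, δ, add_comm]

lemma algHom_ext_gen {A : Type*} [Semiring A] [Algebra ℂ A] {f g : TV θ →ₐ[ℂ] A}
    (h : ∀ a, f (gen θ a) = g (gen θ a)) : f = g :=
  FreeAlgebra.hom_ext (funext h)

/-- The span of the monomials whose words lie in `s`.  The graded components `homogTot` and
`homogD` and the filtration `Wfil` are, by definition, of this form. -/
def wordSpan (s : Set (List (Fin θ))) : Submodule ℂ (TV θ) :=
  Submodule.span ℂ {x | ∃ w ∈ s, x = wordElem θ w}

section wordSpan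
variable {s t u : Set (List (Fin θ))}

lemma wordElem_mem_wordSpan {w : List (Fin θ)} (hw : w ∈ s) : wordElem θ w ∈ wordSpan s :=
  Submodule.subset_span ⟨w, hw, rfl⟩

lemma wordSpan_le_iff {P : Submodule ℂ (TV θ)} :
    wordSpan s ≤ P ↔ ∀ w ∈ s, wordElem θ w ∈ P := by
  refine Submodule.span_le.trans ⟨fun h w hw => h ⟨w, hw, rfl⟩, ?_⟩
  rintro h _ ⟨w, hw, rfl⟩
  exact h w hw

lemma wordSpan_mono (h : s ⊆ t) : wordSpan s ≤ wordSpan t :=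
  wordSpan_le_iff.2 fun _ hw => wordElem_mem_wordSpan (h hw)

lemma map_mem_of_wordSpan {M : Type*} [AddCommMonoid M] [Module ℂ M] {f : TV θ →ₗ[ℂ] M}
    {P : Submodule ℂ M} (h : ∀ w ∈ s, f (wordElem θ w) ∈ P) {x : TV θ}
    (hx : x ∈ wordSpan s) : f x ∈ P :=
  (wordSpan_le_iff.2 h : wordSpan s ≤ P.comap f) hx

lemma eq_of_mem_wordSpan {M : Type*} [AddCommMonoid M] [Module ℂ M] {f g : TV θ →ₗ[ℂ] M}
    (h : ∀ w ∈ s, f (wordElem θ w) = g (wordElem θ w)) {x : TV θ}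
    (hx : x ∈ wordSpan s) : f x = g x :=
  (wordSpan_le_iff.2 h : wordSpan s ≤ LinearMap.eqLocus f g) hx

lemma mul_mem_wordSpan (h : ∀ v ∈ s, ∀ w ∈ t, v ++ w ∈ u) {x y : TV θ}
    (hx : x ∈ wordSpan s) (hy : y ∈ wordSpan t) : x * y ∈ wordSpan u := by
  refine map_mem_of_wordSpan (f := (LinearMap.mul ℂ (TV θ)).flip y) (fun v hv => ?_) hx
  refine map_mem_of_wordSpan (f := LinearMap.mulLeft ℂ (wordElem θ v)) (fun w hw => ?_) hy
  rw [LinearMap.mulLeft_apply, ← wordElem_append]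
  exact wordElem_mem_wordSpan (h v hv w hw)

lemma wordSpan_univ : wordSpan (Set.univ : Set (List (Fin θ))) = ⊤ := by
  refine eq_top_iff.2 fun x _ => ?_
  induction x using FreeAlgebra.induction with
  | grade0 c =>
    rw [Algebra.algebraMap_eq_smul_one]
    exact Submodule.smul_mem _ c (wordElem_mem_wordSpan (w := []) trivial)
  | grade1 a =>
    change gen θ a ∈ _
    exact wordElem_singleton a ▸ wordElem_mem_wordSpan trivial
  | mul x y hx hy =>
    exact mul_mem_wordSpan (fun _ _ _ _ => Set.mem_univ _) (hx trivial) (hy trivial)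
  | add x y hx hy => exact Submodule.add_mem _ (hx trivial) (hy trivial)

lemma finiteDimensional_wordSpan (h : s.Finite) : FiniteDimensional ℂ (wordSpan s) :=
  FiniteDimensional.span_of_finite ℂ
    ((h.image (wordElem θ)).subset (by rintro _ ⟨w, hw, rfl⟩; exact ⟨w, hw, rfl⟩))

end wordSpan

lemma map_mem_of_forall_wordElem {M : Type*} [AddCommMonoid M] [Module ℂ M] {f : TV θ →ₗ[ℂ] M}
    {P : Submodule ℂ M} (h : ∀ w, f (wordElem θ w) ∈ P) (x : TV θ) : f x ∈ P :=
  map_mem_of_wordSpan (s := Set.univ) (fun w _ => h w) (wordSpan_univ ▸ Submodule.mem_top)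

lemma word_ext {M : Type*} [AddCommMonoid M] [Module ℂ M] {f g : TV θ →ₗ[ℂ] M}
    (h : ∀ w, f (wordElem θ w) = g (wordElem θ w)) : f = g :=
  LinearMap.ext fun _ => eq_of_mem_wordSpan (s := Set.univ) (fun w _ => h w)
    (wordSpan_univ ▸ Submodule.mem_top)

lemma linearMap_ext_of_gen_mul {M : Type*} [AddCommMonoid M] [Module ℂ M] {f g : TV θ →ₗ[ℂ] M}
    (h_one : f 1 = g 1)
    (h_mul : ∀ a v, f v = g v → f (gen θ a * v) = g (gen θ a * v)) : f = g := by
  refine word_ext fun w => ?_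
  induction w with
  | nil => exact h_one
  | cons a w ih => rw [wordElem_cons]; exact h_mul a _ ih

lemma wordElem_mem_homogD (w : List (Fin θ)) : wordElem θ w ∈ homogD θ (degW θ w) :=
  Submodule.subset_span ⟨w, rfl, rfl⟩

lemma one_mem_homogD : (1 : TV θ) ∈ homogD θ 0 :=
  degW_nil (θ := θ) ▸ wordElem_mem_homogD []

lemma gen_mem_homogD (a : Fin θ) : gen θ a ∈ homogD θ (δ θ a) :=
  degW_singleton a ▸ wordElem_singleton a ▸ wordElem_mem_homogD [a]

lemma mul_mem_homogD {d e : Fin θ → ℕ} {x y : TV θ} (hx : x ∈ homogD θ d)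
    (hy : y ∈ homogD θ e) : x * y ∈ homogD θ (d + e) :=
  mul_mem_wordSpan (s := {w | degW θ w = d}) (t := {w | degW θ w = e})
    (u := {w | degW θ w = d + e})
    (by rintro v rfl w rfl; exact degW_append v w) hx hy

lemma brk_mem_homogD {d e : Fin θ → ℕ} {x y : TV θ} (hx : x ∈ homogD θ d)
    (hy : y ∈ homogD θ e) : brk q d e x y ∈ homogD θ (d + e) :=
  Submodule.sub_mem _ (mul_mem_homogD hx hy)
    (Submodule.smul_mem _ _ (add_comm d e ▸ mul_mem_homogD hy hx))

lemma homogD_le_homogTot (d : Fin θ → ℕ) : homogD θ d ≤ homogTot θ (∑ l, d l) :=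
  wordSpan_mono (s := {w | degW θ w = d}) (t := {w | w.length = ∑ l, d l})
    (by rintro w rfl; exact (sum_degW w).symm)

/-! ### The bicharacter and diagonal automorphisms -/

lemma qf_add_left (a b c : Fin θ → ℕ) : qf q (a + b) c = qf q a c * qf q b c := by
  simp [qf, add_mul, pow_add, Finset.prod_mul_distrib]

lemma qf_add_right (a b c : Fin θ → ℕ) : qf q a (b + c) = qf q a b * qf q a c := by
  simp [qf, mul_add, pow_add, Finset.prod_mul_distrib]

@[simp] lemma qf_zero_left (a : Fin θ → ℕ) : qf q 0 a = 1 := by simp [qf]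

@[simp] lemma qf_zero_right (a : Fin θ → ℕ) : qf q a 0 = 1 := by simp [qf]

lemma qf_delta (i j : Fin θ) : qf q (δ θ i) (δ θ j) = q i j := by
  simp [qf, δ, pow_ite]

lemma qf_ne_zero (a b : Fin θ → ℕ) : qf q a b ≠ 0 := by
  simp [qf, Finset.prod_eq_zero_iff]

/-- The diagonal automorphism of `T(V)` acting on degree `e` by `q(d, e)`. -/
def twist (q : Fin θ → Fin θ → ℂˣ) (d : Fin θ → ℕ) : TV θ →ₐ[ℂ] TV θ :=
  FreeAlgebra.lift ℂ fun l => qf q d (δ θ l) • gen θ l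

lemma twist_gen (d : Fin θ → ℕ) (l : Fin θ) :
    twist q d (gen θ l) = qf q d (δ θ l) • gen θ l :=
  FreeAlgebra.lift_ι_apply _ l

lemma twist_zero : twist q 0 = AlgHom.id ℂ (TV θ) :=
  algHom_ext_gen fun l => by simp [twist_gen]

lemma twist_add (d e : Fin θ → ℕ) : twist q (d + e) = (twist q d).comp (twist q e) :=
  algHom_ext_gen fun l => by simp [twist_gen, qf_add_left, smul_smul, mul_comm]

lemma twist_comm (d e : Fin θ → ℕ) (x : TV θ) :
    twist q d (twist q e x) = twist q e (twist q d x) := by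
  simp only [← AlgHom.comp_apply, ← twist_add, add_comm d e]

lemma twist_wordElem (d : Fin θ → ℕ) (w : List (Fin θ)) :
    twist q d (wordElem θ w) = qf q d (degW θ w) • wordElem θ w := by
  induction w with
  | nil => simp
  | cons a w ih =>
    rw [wordElem_cons, map_mul, ih, twist_gen, degW_cons, qf_add_right, smul_mul_smul_comm]

lemma twist_of_mem_homogD {d e : Fin θ → ℕ} {x : TV θ} (hx : x ∈ homogD θ e) :
    twist q d x = qf q d e • x := by
  have h := eq_of_mem_wordSpan (s := {w | degW θ w = e}) (f := (twist q d).toLinearMap)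
    (g := qf q d e • LinearMap.id) (by rintro w rfl; exact twist_wordElem d w) hx
  exact h

/-! ### The braided coproduct -/

/-- The action `b ↦ ((1 ⊗ b) · -)` of `T(V)` on its braided tensor square. -/
def oneTmulAct (q : Fin θ → Fin θ → ℂˣ) : TV θ →ₐ[ℂ] Module.End ℂ (TV θ ⊗[ℂ] TV θ) :=
  FreeAlgebra.lift ℂ fun a =>
    TensorProduct.map (twist q (δ θ a)).toLinearMap (LinearMap.mulLeft ℂ (gen θ a))

lemma oneTmulAct_gen (a : Fin θ) : oneTmulAct q (gen θ a) =
    TensorProduct.map (twist q (δ θ a)).toLinearMap (LinearMap.mulLeft ℂ (gen θ a)) :=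
  FreeAlgebra.lift_ι_apply _ a

lemma oneTmulAct_wordElem (w : List (Fin θ)) (c d : TV θ) :
    oneTmulAct q (wordElem θ w) (c ⊗ₜ d) = twist q (degW θ w) c ⊗ₜ (wordElem θ w * d) := by
  induction w with
  | nil => simp [twist_zero]
  | cons a w ih =>
    simp [wordElem_cons, degW_cons, twist_add, oneTmulAct_gen, ih, mul_assoc]

lemma oneTmulAct_of_mem_homogD {β : Fin θ → ℕ} {b : TV θ} (hb : b ∈ homogD θ β) (c d : TV θ) :
    oneTmulAct q b (c ⊗ₜ d) = twist q β c ⊗ₜ (b * d) := by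
  have h := eq_of_mem_wordSpan (s := {w | degW θ w = β})
    (f := (LinearMap.applyₗ (c ⊗ₜ d)).comp (oneTmulAct q).toLinearMap)
    (g := (TensorProduct.mk ℂ _ _ (twist q β c)).comp ((LinearMap.mul ℂ (TV θ)).flip d))
    (by rintro w rfl; simpa using oneTmulAct_wordElem w c d) hb
  simpa using h

lemma oneTmulAct_gen_mul_rTensor (a : Fin θ) (c : TV θ) :
    oneTmulAct q (gen θ a) * (LinearMap.mulLeft ℂ c).rTensor (TV θ) =
      (LinearMap.mulLeft ℂ (twist q (δ θ a) c)).rTensor (TV θ) * oneTmulAct q (gen θ a) :=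
  TensorProduct.ext' fun e f => by simp [oneTmulAct_gen]

/-- The multiplication of the braided tensor square of `T(V)`. -/
def braidedMul (q : Fin θ → Fin θ → ℂˣ) :
    TV θ ⊗[ℂ] TV θ →ₗ[ℂ] Module.End ℂ (TV θ ⊗[ℂ] TV θ) :=
  TensorProduct.lift ((LinearMap.mul ℂ (Module.End ℂ (TV θ ⊗[ℂ] TV θ))).compl₁₂
    ((LinearMap.rTensorHom (TV θ)).comp (LinearMap.mul ℂ (TV θ))) (oneTmulAct q).toLinearMap)

lemma braidedMul_tmul (a b : TV θ) : braidedMul q (a ⊗ₜ b) =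
    (LinearMap.mulLeft ℂ a).rTensor (TV θ) * oneTmulAct q b := rfl

lemma braidedMul_tmul_of_mem_homogD {β : Fin θ → ℕ} {b : TV θ} (hb : b ∈ homogD θ β)
    (a c d : TV θ) : braidedMul q (a ⊗ₜ b) (c ⊗ₜ d) = (a * twist q β c) ⊗ₜ (b * d) := by
  simp [braidedMul_tmul, oneTmulAct_of_mem_homogD hb]

lemma braidedMul_one_tmul_one : braidedMul q (1 ⊗ₜ 1) = 1 := by
  rw [braidedMul_tmul, map_one, LinearMap.mulLeft_one, LinearMap.rTensor_id]
  rfl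

lemma braidedMul_rTensor (a : TV θ) (y : TV θ ⊗[ℂ] TV θ) :
    braidedMul q ((LinearMap.mulLeft ℂ a).rTensor (TV θ) y) =
      (LinearMap.mulLeft ℂ a).rTensor (TV θ) * braidedMul q y := by
  induction y with
  | zero => simp
  | add y z hy hz => simp only [map_add, hy, hz, mul_add]
  | tmul c d =>
    simp only [LinearMap.rTensor_tmul, LinearMap.mulLeft_apply, braidedMul_tmul,
      LinearMap.mulLeft_mul, LinearMap.rTensor_comp]
    rfl

lemma braidedMul_oneTmulAct (b : TV θ) (y : TV θ ⊗[ℂ] TV θ) :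
    braidedMul q (oneTmulAct q b y) = oneTmulAct q b * braidedMul q y := by
  induction b using FreeAlgebra.induction generalizing y with
  | grade0 c => simp [Algebra.algebraMap_eq_smul_one]
  | grade1 a =>
    change braidedMul q (oneTmulAct q (gen θ a) y) = oneTmulAct q (gen θ a) * braidedMul q y
    induction y with
    | zero => simp
    | add y z hy hz => simp only [map_add, hy, hz, mul_add]
    | tmul c d =>
      rw [braidedMul_tmul, ← mul_assoc, oneTmulAct_gen_mul_rTensor, mul_assoc, ← map_mul,
        ← braidedMul_tmul, oneTmulAct_gen]
      rfl
  | mul b c hb hc => rw [map_mul, Module.End.mul_apply, hb, hc, mul_assoc]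
  | add b c hb hc => rw [map_add, LinearMap.add_apply, map_add, hb, hc, add_mul]

lemma braidedMul_braidedMul (x y : TV θ ⊗[ℂ] TV θ) :
    braidedMul q (braidedMul q x y) = braidedMul q x * braidedMul q y := by
  induction x with
  | zero => simp
  | add x z hx hz => rw [map_add, LinearMap.add_apply, map_add, hx, hz, add_mul]
  | tmul a b =>
    rw [braidedMul_tmul, Module.End.mul_apply, braidedMul_rTensor, braidedMul_oneTmulAct, mul_assoc]

/-- Left multiplication by `Δ(x_a) = x_a ⊗ 1 + 1 ⊗ x_a` in the braided tensor square. -/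
def coprodGenAct (q : Fin θ → Fin θ → ℂˣ) (a : Fin θ) : Module.End ℂ (TV θ ⊗[ℂ] TV θ) :=
  braidedMul q (gen θ a ⊗ₜ 1 + 1 ⊗ₜ gen θ a)

lemma coprodGenAct_tmul (a : Fin θ) (c d : TV θ) : coprodGenAct q a (c ⊗ₜ d) =
    (gen θ a * c) ⊗ₜ d + twist q (δ θ a) c ⊗ₜ (gen θ a * d) := by
  simp [coprodGenAct, braidedMul_tmul_of_mem_homogD one_mem_homogD,
    braidedMul_tmul_of_mem_homogD (gen_mem_homogD a), twist_zero]

/-- The left regular representation of `T(V)` on its braided tensor square, through `Δ`. -/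
def coprodAct (q : Fin θ → Fin θ → ℂˣ) : TV θ →ₐ[ℂ] Module.End ℂ (TV θ ⊗[ℂ] TV θ) :=
  FreeAlgebra.lift ℂ (coprodGenAct q)

lemma coprodAct_gen (a : Fin θ) : coprodAct q (gen θ a) = coprodGenAct q a :=
  FreeAlgebra.lift_ι_apply _ a

lemma braidedMul_coprodAct (u : TV θ) :
    braidedMul q (coprodAct q u (1 ⊗ₜ 1)) = coprodAct q u := by
  induction u using FreeAlgebra.induction with
  | grade0 c => simp [Algebra.algebraMap_eq_smul_one, braidedMul_one_tmul_one]
  | grade1 a =>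
    change braidedMul q (coprodAct q (gen θ a) (1 ⊗ₜ 1)) = coprodAct q (gen θ a)
    rw [coprodAct_gen, coprodGenAct_tmul]
    simp [coprodGenAct]
  | mul u v hu hv =>
    rw [map_mul, Module.End.mul_apply, ← hu, braidedMul_braidedMul, hv]
  | add u v hu hv => rw [map_add, LinearMap.add_apply, map_add, hu, hv]

/-- The braided bialgebra structure on `T(V)`. -/
def braidedStr (q : Fin θ → Fin θ → ℂˣ) : BraidedStr θ q where
  Δ := (LinearMap.applyₗ (1 ⊗ₜ 1)).comp (coprodAct q).toLinearMap
  mulB := braidedMul q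
  mulB_spec a d wb wc := by
    rw [braidedMul_tmul_of_mem_homogD (wordElem_mem_homogD wb), twist_wordElem, mul_smul_comm,
      TensorProduct.smul_tmul']
  Δ_one := by simp
  Δ_gen a := by simp [coprodAct_gen, coprodGenAct_tmul]
  Δ_mul u v := by simp [braidedMul_coprodAct]

namespace BraidedStr
variable (S : BraidedStr θ q)

lemma mulB_eq_braidedMul : S.mulB = braidedMul q := by
  apply TensorProduct.ext
  ext a : 1
  apply word_ext
  intro v
  apply TensorProduct.ext
  apply word_ext
  intro w
  ext d : 1
  simp [S.mulB_spec, braidedMul_tmul_of_mem_homogD (wordElem_mem_homogD v), twist_wordElem,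
    TensorProduct.smul_tmul']

lemma Δ_gen_mul (a : Fin θ) (v : TV θ) : S.Δ (gen θ a * v) = coprodGenAct q a (S.Δ v) := by
  rw [S.Δ_mul, S.Δ_gen, mulB_eq_braidedMul, coprodGenAct]

end BraidedStr

/-! ### Skew derivations and their radical -/

/-- `x ↦ [[x, ∂_a x], [0, x']]` with `x'` the twist of `x` by `α_a`; multiplicativity of this map
is the skew Leibniz rule for `∂_a`. -/
def skewDerMatrix (q : Fin θ → Fin θ → ℂˣ) (a : Fin θ) :
    TV θ →ₐ[ℂ] Matrix (Fin 2) (Fin 2) (TV θ) :=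
  FreeAlgebra.lift ℂ fun l =>
    !![gen θ l, if l = a then 1 else 0; 0, twist q (δ θ a) (gen θ l)]

/-- The skew derivation `∂_a` of `T(V)`, with `∂_a(x_l) = δ_{la}` and
`∂_a(uv) = u ∂_a(v) + ∂_a(u) v'`, where `v'` is the twist of `v` by `α_a`. -/
def skewDer (q : Fin θ → Fin θ → ℂˣ) (a : Fin θ) : TV θ →ₗ[ℂ] TV θ :=
  (Matrix.entryLinearMap ℂ (TV θ) 0 1).comp (skewDerMatrix q a).toLinearMap

lemma skewDerMatrix_gen (a l : Fin θ) : skewDerMatrix q a (gen θ l) =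
    !![gen θ l, if l = a then 1 else 0; 0, twist q (δ θ a) (gen θ l)] :=
  FreeAlgebra.lift_ι_apply _ l

lemma skewDer_gen (a l : Fin θ) : skewDer q a (gen θ l) = if l = a then 1 else 0 := by
  simp [skewDer, skewDerMatrix_gen]

@[simp] lemma skewDer_one (a : Fin θ) : skewDer q a 1 = 0 := by
  simp [skewDer]

lemma skewDerMatrix_apply (a : Fin θ) (x : TV θ) :
    skewDerMatrix q a x = !![x, skewDer q a x; 0, twist q (δ θ a) x] := by
  induction x using FreeAlgebra.induction with
  | grade0 c => simp [Matrix.algebraMap_eq_diagonal, skewDer, ← Matrix.ext_iff, Fin.forall_fin_two]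
  | grade1 l =>
    change skewDerMatrix q a (gen θ l) =
      !![gen θ l, skewDer q a (gen θ l); 0, twist q (δ θ a) (gen θ l)]
    rw [skewDerMatrix_gen, skewDer_gen]
  | mul x y hx hy =>
    have h : skewDer q a (x * y) = (skewDerMatrix q a x * skewDerMatrix q a y) 0 1 := by
      rw [← map_mul]; rfl
    rw [h, map_mul, hx, hy]
    simp
  | add x y hx hy => simp [hx, hy]

lemma skewDer_mul (a : Fin θ) (u v : TV θ) :
    skewDer q a (u * v) = u * skewDer q a v + skewDer q a u * twist q (δ θ a) v := by
  have h : skewDer q a (u * v) = (skewDerMatrix q a u * skewDerMatrix q a v) 0 1 := by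
    rw [← map_mul]; rfl
  simp [h, skewDerMatrix_apply]

lemma skewDer_gen_mul (a l : Fin θ) (v : TV θ) : skewDer q a (gen θ l * v) =
    gen θ l * skewDer q a v + if l = a then twist q (δ θ a) v else 0 := by
  rw [skewDer_mul, skewDer_gen, ite_mul, one_mul, zero_mul]

lemma skewDer_twist (a : Fin θ) (d : Fin θ → ℕ) (x : TV θ) :
    skewDer q a (twist q d x) = qf q d (δ θ a) • twist q d (skewDer q a x) := by
  suffices h : (skewDer q a).comp (twist q d).toLinearMap =
      qf q d (δ θ a) • (twist q d).toLinearMap.comp (skewDer q a) from LinearMap.congr_fun h x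
  refine linearMap_ext_of_gen_mul (by simp) fun l v ih => ?_
  simp only [LinearMap.comp_apply, LinearMap.smul_apply, AlgHom.toLinearMap_apply] at ih ⊢
  rw [map_mul, skewDer_mul, ih, skewDer_gen_mul, map_add, map_mul, twist_gen, map_smul,
    skewDer_gen]
  split_ifs with hl
  · subst hl
    simp [twist_comm d, smul_smul]
  · simp [smul_smul]

/-- The counit of `T(V)`. -/
def counit (θ : ℕ) : TV θ →ₐ[ℂ] ℂ := FreeAlgebra.lift ℂ fun _ => 0

@[simp] lemma counit_gen (a : Fin θ) : counit θ (gen θ a) = 0 := FreeAlgebra.lift_ι_apply _ a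

@[simp] lemma counit_twist (d : Fin θ → ℕ) (x : TV θ) : counit θ (twist q d x) = counit θ x := by
  have h : (counit θ).comp (twist q d) = counit θ := algHom_ext_gen fun l => by simp [twist_gen]
  exact DFunLike.congr_fun h x

/-- `∂_w`: the composition of the skew derivations along a word, the first letter acting first. -/
def skewDers (q : Fin θ → Fin θ → ℂˣ) : List (Fin θ) → TV θ →ₗ[ℂ] TV θ
  | [] => LinearMap.id
  | a :: w => (skewDers q w).comp (skewDer q a)

lemma skewDers_nil (x : TV θ) : skewDers q [] x = x := rfl

lemma skewDers_cons (a : Fin θ) (w : List (Fin θ)) (x : TV θ) :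
    skewDers q (a :: w) x = skewDers q w (skewDer q a x) := rfl

/-- The functional `ε ∘ ∂_w`. -/
def skewCoeff (q : Fin θ → Fin θ → ℂˣ) (w : List (Fin θ)) : TV θ →ₗ[ℂ] ℂ :=
  (counit θ).toLinearMap.comp (skewDers q w)

lemma skewCoeff_nil (x : TV θ) : skewCoeff q [] x = counit θ x := rfl

lemma skewCoeff_cons (a : Fin θ) (w : List (Fin θ)) (x : TV θ) :
    skewCoeff q (a :: w) x = skewCoeff q w (skewDer q a x) := rfl

/-- The elements annihilated by all the functionals `ε ∘ ∂_w`.  This is the defining ideal of the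
Nichols algebra, see `Jq_eq_skewRad`. -/
def skewRad (q : Fin θ → Fin θ → ℂˣ) : Submodule ℂ (TV θ) := ⨅ w, LinearMap.ker (skewCoeff q w)

lemma mem_skewRad {x : TV θ} : x ∈ skewRad q ↔ ∀ w, skewCoeff q w x = 0 := by
  simp [skewRad]

lemma counit_of_mem_skewRad {x : TV θ} (hx : x ∈ skewRad q) : counit θ x = 0 := mem_skewRad.1 hx []

lemma skewDer_mem_skewRad {x : TV θ} (hx : x ∈ skewRad q) (a : Fin θ) :
    skewDer q a x ∈ skewRad q :=
  mem_skewRad.2 fun w => mem_skewRad.1 hx (a :: w)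

lemma le_skewRad {N : Submodule ℂ (TV θ)} (h_counit : ∀ x ∈ N, counit θ x = 0)
    (h_skewDer : ∀ a, ∀ x ∈ N, skewDer q a x ∈ N) : N ≤ skewRad q := by
  intro x hx
  rw [mem_skewRad]
  intro w
  induction w generalizing x with
  | nil => exact h_counit x hx
  | cons a _ ih => exact ih (h_skewDer a x hx)

lemma twist_mem_skewRad {x : TV θ} (hx : x ∈ skewRad q) (d : Fin θ → ℕ) :
    twist q d x ∈ skewRad q := by
  suffices h : (skewRad q).map (twist q d).toLinearMap ≤ skewRad q from h ⟨x, hx, rfl⟩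
  refine le_skewRad ?_ ?_
  · rintro _ ⟨y, hy, rfl⟩
    simpa using counit_of_mem_skewRad hy
  · rintro a _ ⟨y, hy, rfl⟩
    exact ⟨qf q d (δ θ a) • skewDer q a y, Submodule.smul_mem _ _ (skewDer_mem_skewRad hy a),
      by simp [skewDer_twist]⟩

/-- Taking `(M, N)` to be `(⊤, skewRad q)` or `(skewRad q, ⊤)` shows that `skewRad q` is a left,
resp. right, ideal. -/
lemma mul_le_skewRad {M N : Submodule ℂ (TV θ)}
    (h_counit : ∀ m ∈ M, ∀ n ∈ N, counit θ m * counit θ n = 0)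
    (hM : ∀ a, ∀ m ∈ M, skewDer q a m ∈ M) (hN : ∀ a, ∀ n ∈ N, skewDer q a n ∈ N)
    (h_twist : ∀ d, ∀ n ∈ N, twist q d n ∈ N) : M * N ≤ skewRad q := by
  refine le_skewRad (fun z hz => ?_) fun a z hz => ?_
  · refine (Submodule.mul_le.2 fun m hm n hn => ?_ :
      M * N ≤ LinearMap.ker (counit θ).toLinearMap) hz
    simpa using h_counit m hm n hn
  · refine (Submodule.mul_le.2 fun m hm n hn => ?_ : M * N ≤ (M * N).comap (skewDer q a)) hz
    rw [Submodule.mem_comap, skewDer_mul]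
    exact Submodule.add_mem _ (Submodule.mul_mem_mul hm (hN a n hn))
      (Submodule.mul_mem_mul (hM a m hm) (h_twist _ n hn))

lemma skewRad_mul_left (a x : TV θ) (hx : x ∈ skewRad q) : a * x ∈ skewRad q :=
  mul_le_skewRad (M := ⊤) (fun _ _ _ hn => by rw [counit_of_mem_skewRad hn, mul_zero])
    (fun _ _ _ => trivial) (fun b _ hn => skewDer_mem_skewRad hn b)
    (fun d _ hn => twist_mem_skewRad hn d) (Submodule.mul_mem_mul trivial hx)

lemma skewRad_mul_right (a x : TV θ) (hx : x ∈ skewRad q) : x * a ∈ skewRad q :=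
  mul_le_skewRad (N := ⊤) (fun _ hm _ _ => by rw [counit_of_mem_skewRad hm, zero_mul])
    (fun b _ hm => skewDer_mem_skewRad hm b) (fun _ _ _ => trivial) (fun _ _ _ => trivial)
    (Submodule.mul_mem_mul hx trivial)

/-! ### Total degree -/

lemma skewDer_wordElem_mem (a : Fin θ) (w : List (Fin θ)) :
    skewDer q a (wordElem θ w) ∈ wordSpan {v | δ θ a + degW θ v = degW θ w} := by
  induction w with
  | nil => simp
  | cons l w ih =>
    rw [wordElem_cons, skewDer_gen_mul]
    refine Submodule.add_mem _ ?_ ?_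
    · refine mul_mem_wordSpan (s := {[l]}) ?_
        (wordElem_singleton l ▸ wordElem_mem_wordSpan rfl) ih
      rintro _ rfl v hv
      simp only [Set.mem_ofPred_eq, degW_append, degW_cons, degW_nil] at hv ⊢
      rw [← hv]
      abel
    · split_ifs with h
      · subst h
        rw [twist_wordElem]
        exact Submodule.smul_mem _ _ (wordElem_mem_wordSpan (degW_cons l w).symm)
      · exact Submodule.zero_mem _

lemma length_of_add_degW_eq {a : Fin θ} {v w : List (Fin θ)}
    (h : δ θ a + degW θ v = degW θ w) : v.length + 1 = w.length := by
  rw [← sum_degW w, ← h, ← degW_cons, sum_degW, List.length_cons]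

lemma skewDer_wordElem_mem_length (a : Fin θ) (w : List (Fin θ)) :
    skewDer q a (wordElem θ w) ∈ wordSpan {v | v.length + 1 = w.length} :=
  wordSpan_mono (fun _ hv => length_of_add_degW_eq hv) (skewDer_wordElem_mem a w)

lemma skewDer_mem_homogD (a : Fin θ) {d : Fin θ → ℕ} {x : TV θ} (hx : x ∈ homogD θ d) :
    skewDer q a x ∈ homogD θ (d - δ θ a) := by
  refine map_mem_of_wordSpan (s := {w | degW θ w = d}) (fun w (hw : degW θ w = d) => ?_) hx
  refine wordSpan_mono (t := {v | degW θ v = d - δ θ a}) (fun v hv => ?_) (skewDer_wordElem_mem a w)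
  exact hw ▸ eq_tsub_of_add_eq ((add_comm _ _).trans hv)

lemma counit_wordElem {w : List (Fin θ)} (hw : w ≠ []) : counit θ (wordElem θ w) = 0 := by
  obtain ⟨l, w, rfl⟩ := List.exists_cons_of_ne_nil hw
  simp [wordElem_cons]

lemma skewCoeff_wordElem_of_length_ne {v w : List (Fin θ)} (h : w.length ≠ v.length) :
    skewCoeff q v (wordElem θ w) = 0 := by
  induction v generalizing w with
  | nil => exact counit_wordElem fun hw => h (by simp [hw])
  | cons a v ih =>
    rw [skewCoeff_cons, ← Submodule.mem_bot ℂ]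
    refine map_mem_of_wordSpan (fun u hu => ih fun huv => h ?_) (skewDer_wordElem_mem_length a w)
    have hu' : u.length + 1 = w.length := hu
    rw [← hu', huv, List.length_cons]

/-- `x ↦ ∑ₙ xₙ tⁿ`, where `xₙ` is the component of `x` of total degree `n`. -/
def gradingHom (θ : ℕ) : TV θ →ₐ[ℂ] Polynomial (TV θ) :=
  FreeAlgebra.lift ℂ fun l => Polynomial.monomial 1 (gen θ l)

lemma gradingHom_wordElem (w : List (Fin θ)) :
    gradingHom θ (wordElem θ w) = Polynomial.monomial w.length (wordElem θ w) := by
  induction w with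
  | nil => simp
  | cons a w ih =>
    have hgen : gradingHom θ (gen θ a) = Polynomial.monomial 1 (gen θ a) :=
      FreeAlgebra.lift_ι_apply _ a
    rw [wordElem_cons, map_mul, ih, hgen, Polynomial.monomial_mul_monomial, add_comm,
      List.length_cons]

/-- The projection of `T(V)` onto its component of total degree `n`. -/
def homogComponent (θ n : ℕ) : TV θ →ₗ[ℂ] TV θ :=
  ((Polynomial.lcoeff (TV θ) n).restrictScalars ℂ).comp (gradingHom θ).toLinearMap

lemma homogComponent_wordElem (n : ℕ) (w : List (Fin θ)) :
    homogComponent θ n (wordElem θ w) = if w.length = n then wordElem θ w else 0 := by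
  simp [homogComponent, gradingHom_wordElem, Polynomial.coeff_monomial]

lemma homogComponent_of_mem_homogTot {m n : ℕ} {x : TV θ} (hx : x ∈ homogTot θ m) :
    homogComponent θ n x = if m = n then x else 0 := by
  have h := eq_of_mem_wordSpan (s := {w | w.length = m}) (f := homogComponent θ n)
    (g := if m = n then LinearMap.id else 0) ?_ hx
  · rw [h]; split_ifs <;> rfl
  · rintro w rfl
    rw [homogComponent_wordElem]; split_ifs <;> rfl

lemma homogComponent_mem (n : ℕ) (x : TV θ) : homogComponent θ n x ∈ homogTot θ n := by
  refine map_mem_of_forall_wordElem (fun w => ?_) x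
  rw [homogComponent_wordElem]
  split_ifs with h
  · exact wordElem_mem_wordSpan (s := {w | w.length = n}) h
  · exact Submodule.zero_mem _

lemma eq_sum_homogComponent (x : TV θ) :
    x = ∑ n ∈ (gradingHom θ x).support, homogComponent θ n x := by
  have h : ((Polynomial.leval (1 : TV θ)).restrictScalars ℂ).comp (gradingHom θ).toLinearMap =
      LinearMap.id := word_ext fun w => by simp [gradingHom_wordElem, Polynomial.leval]
  conv_lhs => rw [← LinearMap.id_apply (R := ℂ) x, ← h]
  simp [Polynomial.leval, Polynomial.eval_eq_sum, Polynomial.sum, homogComponent]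

lemma skewCoeff_homogComponent (w : List (Fin θ)) (n : ℕ) (x : TV θ) :
    skewCoeff q w (homogComponent θ n x) = if w.length = n then skewCoeff q w x else 0 := by
  have h : (skewCoeff q w).comp (homogComponent θ n) = if w.length = n then skewCoeff q w else 0 :=
    word_ext fun v => by
      rw [LinearMap.comp_apply, homogComponent_wordElem]
      by_cases hvw : v.length = w.length
      · split_ifs <;> simp_all
      · split_ifs <;> simp [skewCoeff_wordElem_of_length_ne hvw]
  rw [← LinearMap.comp_apply, h]
  split_ifs <;> rfl

lemma homogComponent_mem_skewRad {x : TV θ} (hx : x ∈ skewRad q) (n : ℕ) :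
    homogComponent θ n x ∈ skewRad q :=
  mem_skewRad.2 fun w => by rw [skewCoeff_homogComponent, mem_skewRad.1 hx, ite_self]

lemma eq_counit_of_mem_homogTot_zero {x : TV θ} (hx : x ∈ homogTot θ 0) :
    x = counit θ x • 1 := by
  refine eq_of_mem_wordSpan (s := {w | w.length = 0}) (f := LinearMap.id)
    (g := (counit θ).toLinearMap.smulRight 1) (fun w hw => ?_) hx
  obtain rfl := List.length_eq_zero_iff.1 hw
  simp

lemma eq_sum_of_mem_homogTot_one (q : Fin θ → Fin θ → ℂˣ) {x : TV θ} (hx : x ∈ homogTot θ 1) :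
    x = ∑ a, skewCoeff q [a] x • gen θ a := by
  have h := eq_of_mem_wordSpan (s := {w | w.length = 1}) (f := LinearMap.id)
    (g := ∑ a, (skewCoeff q [a]).smulRight (gen θ a)) (fun w hw => ?_) hx
  · simpa using h
  · obtain ⟨l, rfl⟩ := List.length_eq_one_iff.1 hw
    simp [wordElem_singleton, skewCoeff_cons, skewCoeff_nil, skewDer_gen, apply_ite]

lemma skewRad_eq_span_homogTot : skewRad q =
    Submodule.span ℂ {x | x ∈ skewRad q ∧ ∃ n, 2 ≤ n ∧ x ∈ homogTot θ n} := by
  refine le_antisymm (fun x hx => ?_) (Submodule.span_le.2 fun x hx => hx.1)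
  rw [eq_sum_homogComponent x]
  refine Submodule.sum_mem _ fun n _ => ?_
  have hrad := homogComponent_mem_skewRad hx n
  have hdeg := homogComponent_mem n x
  match n with
  | 0 =>
    rw [eq_counit_of_mem_homogTot_zero hdeg, counit_of_mem_skewRad hrad, zero_smul]
    exact Submodule.zero_mem _
  | 1 =>
    rw [eq_sum_of_mem_homogTot_one q hdeg]
    simp [mem_skewRad.1 hrad]
  | n + 2 => exact Submodule.subset_span ⟨hrad, n + 2, by omega, hdeg⟩

/-! ### The coproduct and the defining ideal of the Nichols algebra -/

/-- Contraction of the second tensor factor with a functional. -/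
def contractRight (ψ : TV θ →ₗ[ℂ] ℂ) : TV θ ⊗[ℂ] TV θ →ₗ[ℂ] TV θ :=
  (TensorProduct.rid ℂ (TV θ)).toLinearMap.comp (ψ.lTensor (TV θ))

@[simp] lemma contractRight_tmul (ψ : TV θ →ₗ[ℂ] ℂ) (a b : TV θ) :
    contractRight ψ (a ⊗ₜ b) = ψ b • a := by
  simp [contractRight]

namespace BraidedStr
variable (S : BraidedStr θ q)

lemma contractRight_counit_Δ (v : TV θ) :
    contractRight (counit θ).toLinearMap (S.Δ v) = v := by
  suffices h : (contractRight (counit θ).toLinearMap).comp S.Δ = LinearMap.id from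
    LinearMap.congr_fun h v
  have hgen (a : Fin θ) : (contractRight (counit θ).toLinearMap).comp (coprodGenAct q a) =
      (LinearMap.mulLeft ℂ (gen θ a)).comp (contractRight (counit θ).toLinearMap) :=
    TensorProduct.ext' fun c d => by simp [coprodGenAct_tmul]
  refine linearMap_ext_of_gen_mul (by simp [S.Δ_one]) fun a v ih => ?_
  have h := LinearMap.congr_fun (hgen a) (S.Δ v)
  simp only [LinearMap.comp_apply, LinearMap.mulLeft_apply, LinearMap.id_apply] at h ih ⊢
  rw [S.Δ_gen_mul, h, ih]

lemma Δ_twist (d : Fin θ → ℕ) (v : TV θ) : S.Δ (twist q d v) =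
    TensorProduct.map (twist q d).toLinearMap (twist q d).toLinearMap (S.Δ v) := by
  set T := TensorProduct.map (twist q d).toLinearMap (twist q d).toLinearMap
  suffices h : S.Δ.comp (twist q d).toLinearMap = T.comp S.Δ from LinearMap.congr_fun h v
  have hgen (a : Fin θ) :
      T.comp (coprodGenAct q a) = qf q d (δ θ a) • (coprodGenAct q a).comp T :=
    TensorProduct.ext' fun c e => by
      simp [T, coprodGenAct_tmul, twist_gen, TensorProduct.smul_tmul', TensorProduct.tmul_smul,
        twist_comm _ (δ θ a)]
  refine linearMap_ext_of_gen_mul (by simp [T, S.Δ_one]) fun a v ih => ?_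
  have h := LinearMap.congr_fun (hgen a) (S.Δ v)
  simp only [LinearMap.comp_apply, AlgHom.toLinearMap_apply, LinearMap.smul_apply] at h ih ⊢
  rw [map_mul, twist_gen, smul_mul_assoc, map_smul, S.Δ_gen_mul, S.Δ_gen_mul, h, ih]

lemma Δ_skewDer (a : Fin θ) (v : TV θ) :
    S.Δ (skewDer q a v) = (skewDer q a).lTensor (TV θ) (S.Δ v) := by
  set D := (skewDer q a).lTensor (TV θ)
  suffices h : S.Δ.comp (skewDer q a) = D.comp S.Δ from LinearMap.congr_fun h v
  have hgen (l : Fin θ) : D.comp (coprodGenAct q l) = (coprodGenAct q l).comp D +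
      if l = a then TensorProduct.map (twist q (δ θ a)).toLinearMap (twist q (δ θ a)).toLinearMap
        else 0 :=
    TensorProduct.ext' fun c d => by
      split_ifs with h
      · subst h
        simp [D, coprodGenAct_tmul, skewDer_gen_mul, TensorProduct.tmul_add, add_assoc]
      · simp [D, coprodGenAct_tmul, skewDer_gen_mul, h]
  refine linearMap_ext_of_gen_mul (by simp [D, S.Δ_one]) fun l v ih => ?_
  have h := LinearMap.congr_fun (hgen l) (S.Δ v)
  simp only [LinearMap.comp_apply, LinearMap.add_apply] at h ih ⊢
  rw [skewDer_gen_mul, map_add, S.Δ_gen_mul, S.Δ_gen_mul, h, ih]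
  split_ifs <;> simp [S.Δ_twist]

lemma contractRight_skewCoeff_Δ (w : List (Fin θ)) (v : TV θ) :
    contractRight (skewCoeff q w) (S.Δ v) = skewDers q w v := by
  induction w generalizing v with
  | nil => exact S.contractRight_counit_Δ v
  | cons a w ih =>
    have h : contractRight (skewCoeff q (a :: w)) =
        (contractRight (skewCoeff q w)).comp ((skewDer q a).lTensor (TV θ)) :=
      TensorProduct.ext' fun c d => by simp [skewCoeff_cons]
    rw [h, LinearMap.comp_apply, ← S.Δ_skewDer, ih]
    rfl

end BraidedStr

lemma tmul_mem_mixedPair_left {I J : Submodule ℂ (TV θ)} {a : TV θ} (ha : a ∈ I) (b : TV θ) :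
    a ⊗ₜ b ∈ mixedPair I J :=
  Submodule.subset_span (Or.inl ⟨a, b, ha, rfl⟩)

lemma tmul_mem_mixedPair_right {I J : Submodule ℂ (TV θ)} (a : TV θ) {b : TV θ} (hb : b ∈ J) :
    a ⊗ₜ b ∈ mixedPair I J :=
  Submodule.subset_span (Or.inr ⟨a, b, hb, rfl⟩)

lemma mixedPair_le {I J : Submodule ℂ (TV θ)} {P : Submodule ℂ (TV θ ⊗[ℂ] TV θ)}
    (hI : ∀ a ∈ I, ∀ b, a ⊗ₜ b ∈ P) (hJ : ∀ a, ∀ b ∈ J, a ⊗ₜ b ∈ P) : mixedPair I J ≤ P := by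
  refine Submodule.span_le.2 ?_
  rintro _ (⟨a, b, ha, rfl⟩ | ⟨a, b, hb, rfl⟩)
  exacts [hI a ha b, hJ a b hb]

lemma mixedPair_eq_ker (I J : Submodule ℂ (TV θ)) :
    mixedPair I J = LinearMap.ker (TensorProduct.map I.mkQ J.mkQ) := by
  refine le_antisymm (mixedPair_le (fun a ha b => ?_) fun a b hb => ?_) ?_
  · simp [(Submodule.Quotient.mk_eq_zero I).2 ha]
  · simp [(Submodule.Quotient.mk_eq_zero J).2 hb]
  · rw [TensorProduct.map_ker (f := I.subtype) (f' := J.subtype)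
      (LinearMap.exact_iff.2 (by simp)) I.mkQ_surjective
      (LinearMap.exact_iff.2 (by simp)) J.mkQ_surjective]
    refine sup_le (LinearMap.range_le_iff_comap.2 ?_) (LinearMap.range_le_iff_comap.2 ?_) <;>
      rw [← top_le_iff, ← TensorProduct.span_tmul_eq_top, Submodule.span_le]
    · rintro _ ⟨a, b, rfl⟩
      exact tmul_mem_mixedPair_right a b.2
    · rintro _ ⟨a, b, rfl⟩
      exact tmul_mem_mixedPair_left a.2 b

lemma contractRight_mem_of_mem_mixedPair {I J : Submodule ℂ (TV θ)} {ψ : TV θ →ₗ[ℂ] ℂ}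
    (hψ : ∀ x ∈ J, ψ x = 0) {z : TV θ ⊗[ℂ] TV θ} (hz : z ∈ mixedPair I J) :
    contractRight ψ z ∈ I := by
  refine (mixedPair_le (fun a ha b => ?_) fun a b hb => ?_ :
    mixedPair I J ≤ I.comap (contractRight ψ)) hz
  · simpa using Submodule.smul_mem _ _ ha
  · simp [hψ b hb]

lemma lTensor_mkQ_eq_zero_of_forall_lTensor {K M N ι : Type*} [Field K] [AddCommGroup M]
    [Module K M] [AddCommGroup N] [Module K N] (f : ι → N →ₗ[K] K) {P : Submodule K N}
    (hP : ∀ y, (∀ i, f i y = 0) → y ∈ P) {z : M ⊗[K] N} (hz : ∀ i, (f i).lTensor M z = 0) :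
    P.mkQ.lTensor M z = 0 := by
  classical
  let b := Module.Basis.ofVectorSpace K M
  let e := TensorProduct.equivFinsuppOfBasisLeft (N := N) b
  have hcoord (i l) : f i (e z l) = 0 := by
    have h : (f i).comp ((Finsupp.lapply l).comp e.toLinearMap) =
        (TensorProduct.lid K K).toLinearMap.comp (TensorProduct.map (b.coord l) (f i)) :=
      TensorProduct.ext' fun c d => by simp [e]
    have hz' : TensorProduct.map (b.coord l) (f i) z = 0 := by
      rw [← LinearMap.rTensor_comp_lTensor, LinearMap.comp_apply, hz, map_zero]
    simpa [hz'] using LinearMap.congr_fun h z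
  rw [← e.symm_apply_apply z, TensorProduct.equivFinsuppOfBasisLeft_symm_apply, Finsupp.sum,
    map_sum]
  refine Finset.sum_eq_zero fun l _ => ?_
  have hl : P.mkQ (e z l) = 0 :=
    (Submodule.Quotient.mk_eq_zero P).2 (hP _ fun i => hcoord i l)
  rw [LinearMap.lTensor_tmul, hl, TensorProduct.tmul_zero]

lemma mem_mixedSub_of_contractRight {ι : Type*} {J : Submodule ℂ (TV θ)}
    (f : ι → TV θ →ₗ[ℂ] ℂ) (hJ : ∀ x, (∀ i, f i x = 0) → x ∈ J) {z : TV θ ⊗[ℂ] TV θ}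
    (hz : ∀ i, contractRight (f i) z ∈ J) : z ∈ mixedSub J := by
  rw [mixedSub, mixedPair_eq_ker, LinearMap.mem_ker, ← LinearMap.lTensor_comp_rTensor,
    LinearMap.comp_apply]
  refine lTensor_mkQ_eq_zero_of_forall_lTensor f hJ fun i => ?_
  have h : (TensorProduct.rid ℂ _).toLinearMap.comp (((f i).lTensor (TV θ ⧸ J)).comp
      (J.mkQ.rTensor (TV θ))) = J.mkQ.comp (contractRight (f i)) :=
    TensorProduct.ext' fun c d => by simp
  rw [← LinearEquiv.map_eq_zero_iff (TensorProduct.rid ℂ (TV θ ⧸ J))]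
  exact (LinearMap.congr_fun h z).trans ((Submodule.Quotient.mk_eq_zero J).2 (hz i))

lemma skewDers_mem_skewRad {x : TV θ} (hx : x ∈ skewRad q) (w : List (Fin θ)) :
    skewDers q w x ∈ skewRad q := by
  induction w generalizing x with
  | nil => exact hx
  | cons a _ ih => exact ih (skewDer_mem_skewRad hx a)

lemma isPreNicholsIdeal_skewRad (S : BraidedStr θ q) : IsPreNicholsIdeal S (skewRad q) where
  mul_left := skewRad_mul_left
  mul_right := skewRad_mul_right
  homog_ge2 := skewRad_eq_span_homogTot
  coideal x hx := mem_mixedSub_of_contractRight (skewCoeff q) (fun _ h => mem_skewRad.2 h)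
    fun w => S.contractRight_skewCoeff_Δ w x ▸ skewDers_mem_skewRad hx w

namespace IsPreNicholsIdeal
variable {S : BraidedStr θ q} {I : Submodule ℂ (TV θ)}

lemma le_of_homogTot (hI : IsPreNicholsIdeal S I) {P : Submodule ℂ (TV θ)}
    (h : ∀ n, 2 ≤ n → ∀ x ∈ I, x ∈ homogTot θ n → x ∈ P) : I ≤ P := by
  rw [hI.homog_ge2, Submodule.span_le]
  rintro x ⟨hx, n, hn, hxn⟩
  exact h n hn x hx hxn

lemma skewCoeff_eq_zero (hI : IsPreNicholsIdeal S I) {w : List (Fin θ)} (hw : w.length < 2)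
    {x : TV θ} (hx : x ∈ I) : skewCoeff q w x = 0 := by
  refine (hI.le_of_homogTot fun n hn y _ hy => ?_ : I ≤ LinearMap.ker (skewCoeff q w)) hx
  exact eq_of_mem_wordSpan (s := {v | v.length = n}) (g := 0)
    (fun v hv => skewCoeff_wordElem_of_length_ne (by rw [hv]; omega)) hy

lemma skewDer_mem (hI : IsPreNicholsIdeal S I) {x : TV θ} (hx : x ∈ I) (a : Fin θ) :
    skewDer q a x ∈ I := by
  have h : contractRight (skewCoeff q [a]) (S.Δ x) = skewDer q a x :=
    S.contractRight_skewCoeff_Δ [a] x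
  exact h ▸ contractRight_mem_of_mem_mixedPair
    (fun y hy => hI.skewCoeff_eq_zero (by simp) hy) (hI.coideal x hx)

lemma le_skewRad (hI : IsPreNicholsIdeal S I) : I ≤ skewRad q :=
  PreNicholsPaper.le_skewRad (fun _ hx => hI.skewCoeff_eq_zero (w := []) (by simp) hx)
    fun a _ hx => hI.skewDer_mem hx a

lemma homogComponent_mem (hI : IsPreNicholsIdeal S I) {x : TV θ} (hx : x ∈ I) (n : ℕ) :
    homogComponent θ n x ∈ I := by
  refine (hI.le_of_homogTot fun m _ y hy hym => ?_ : I ≤ I.comap (homogComponent θ n)) hx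
  rw [Submodule.mem_comap, homogComponent_of_mem_homogTot hym]
  split_ifs
  exacts [hy, I.zero_mem]

end IsPreNicholsIdeal

lemma Jq_eq_skewRad (S : BraidedStr θ q) : Jq S = skewRad q :=
  le_antisymm (sSup_le fun _ hI => hI.le_skewRad) (le_sSup (isPreNicholsIdeal_skewRad S))

/-! ### Growth of quotients -/

lemma finiteDimensional_homogTot (θ n : ℕ) : FiniteDimensional ℂ (homogTot θ n) :=
  finiteDimensional_wordSpan (List.finite_length_eq (Fin θ) n)

lemma finiteDimensional_Wfil (θ n : ℕ) : FiniteDimensional ℂ (Wfil θ n) :=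
  finiteDimensional_wordSpan (List.finite_length_le (Fin θ) n)

lemma Wfil_mono {m n : ℕ} (h : m ≤ n) : Wfil θ m ≤ Wfil θ n :=
  wordSpan_mono fun _ hw => le_trans hw h

lemma homogTot_le_Wfil {m n : ℕ} (h : m ≤ n) : homogTot θ m ≤ Wfil θ n :=
  wordSpan_mono fun _ hw => hw.trans_le h

lemma Wfil_zero : Wfil θ 0 = homogTot θ 0 := by
  simp only [Wfil, homogTot, Nat.le_zero]

lemma mul_mem_Wfil {m n : ℕ} {x y : TV θ} (hx : x ∈ Wfil θ m) (hy : y ∈ Wfil θ n) :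
    x * y ∈ Wfil θ (m + n) :=
  mul_mem_wordSpan (s := {v | v.length ≤ m}) (t := {w | w.length ≤ n})
    (u := {w | w.length ≤ m + n})
    (fun _ hv _ hw => List.length_append.trans_le (Nat.add_le_add hv hw)) hx hy

lemma Wfil_succ_le (n : ℕ) : Wfil θ (n + 1) ≤ Wfil θ n ⊔ homogTot θ (n + 1) := by
  refine wordSpan_le_iff.2 fun w hw => ?_
  rcases Nat.le_succ_iff.1 hw with h | h
  · exact Submodule.mem_sup_left (wordElem_mem_wordSpan h)
  · exact Submodule.mem_sup_right (wordElem_mem_wordSpan h)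

lemma exists_mem_Wfil (x : TV θ) : ∃ n, x ∈ Wfil θ n := by
  refine ⟨(gradingHom θ x).support.sup id, ?_⟩
  nth_rw 2 [eq_sum_homogComponent x]
  exact Submodule.sum_mem _ fun n hn =>
    homogTot_le_Wfil (Finset.le_sup (f := id) hn) (homogComponent_mem n x)

lemma exists_forall_mem_Wfil {ι : Type*} [Finite ι] (y : ι → TV θ) :
    ∃ n, ∀ a, y a ∈ Wfil θ n := by
  cases nonempty_fintype ι
  choose n hn using fun a => exists_mem_Wfil (y a)
  exact ⟨∑ a, n a, fun a => Wfil_mono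
    (Finset.single_le_sum (fun _ _ => Nat.zero_le _) (Finset.mem_univ a)) (hn a)⟩

lemma skewDer_mem_Wfil {n : ℕ} (a : Fin θ) {f : TV θ} (hf : f ∈ Wfil θ (n + 1)) :
    skewDer q a f ∈ Wfil θ n :=
  map_mem_of_wordSpan (s := {w | w.length ≤ n + 1}) (fun w hw =>
    wordSpan_mono (t := {v | v.length ≤ n})
      (fun _ hv => Nat.le_of_succ_le_succ ((Eq.le hv).trans hw))
      (skewDer_wordElem_mem_length a w)) hf

lemma finrank_map_le_of_ker {K V W₁ W₂ : Type*} [Field K] [AddCommGroup V] [Module K V]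
    [AddCommGroup W₁] [Module K W₁] [AddCommGroup W₂] [Module K W₂]
    (p : Submodule K V) [FiniteDimensional K p] (f : V →ₗ[K] W₁) (g : V →ₗ[K] W₂)
    (h : ∀ x ∈ p, g x = 0 → f x = 0) :
    Module.finrank K (p.map f) ≤ Module.finrank K (p.map g) := by
  have hf := LinearMap.finrank_range_add_finrank_ker (f.domRestrict p)
  have hg := LinearMap.finrank_range_add_finrank_ker (g.domRestrict p)
  rw [LinearMap.range_domRestrict] at hf hg
  have hker : LinearMap.ker (g.domRestrict p) ≤ LinearMap.ker (f.domRestrict p) :=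
    fun x hx => h x x.2 hx
  have := Submodule.finrank_mono hker
  omega

lemma FinGK.mono {I J : Submodule ℂ (TV θ)} (h : FinGK I) (hIJ : I ≤ J) : FinGK J := by
  obtain ⟨C, d, hC⟩ := h
  refine ⟨C, d, fun n => le_trans ?_ (hC n)⟩
  have := finiteDimensional_Wfil θ n
  refine finrank_map_le_of_ker _ _ _ fun x _ hx => ?_
  rw [Submodule.mkQ_apply, Submodule.Quotient.mk_eq_zero] at hx ⊢
  exact hIJ hx

lemma finrank_map_Wfil_le (I : Submodule ℂ (TV θ)) (n : ℕ) :
    Module.finrank ℂ ((Wfil θ n).map I.mkQ)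
      ≤ ∑ k ∈ Finset.range (n + 1), Module.finrank ℂ ((homogTot θ k).map I.mkQ) := by
  induction n with
  | zero => rw [Wfil_zero, zero_add, Finset.sum_range_one]
  | succ n ih =>
    have := finiteDimensional_Wfil θ n
    have := finiteDimensional_homogTot θ (n + 1)
    rw [Finset.sum_range_succ]
    refine (Submodule.finrank_mono (Submodule.map_mono (Wfil_succ_le n))).trans ?_
    rw [Submodule.map_sup]
    exact (Submodule.finrank_add_le_finrank_add_finrank _ _).trans (by gcongr)

lemma finGK_of_finrank_homogTot_le {I : Submodule ℂ (TV θ)} {C D d : ℕ}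
    (h : ∀ k, Module.finrank ℂ ((homogTot θ k).map I.mkQ) ≤ C * (D * k + 1) ^ d) :
    FinGK I := by
  refine ⟨C * (D + 1) ^ d, d + 1, fun n => ?_⟩
  calc Module.finrank ℂ ((Wfil θ n).map I.mkQ)
      ≤ ∑ k ∈ Finset.range (n + 1), C * (D * k + 1) ^ d :=
        (finrank_map_Wfil_le I n).trans (Finset.sum_le_sum fun k _ => h k)
    _ ≤ ∑ _k ∈ Finset.range (n + 1), C * ((D + 1) * (n + 1)) ^ d := by
        refine Finset.sum_le_sum fun k hk => ?_
        have hk' : k ≤ n := Finset.mem_range_succ_iff.1 hk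
        gcongr
        nlinarith
    _ = C * (D + 1) ^ d * (n + 1) ^ (d + 1) := by
        rw [Finset.sum_const, Finset.card_range, smul_eq_mul, mul_pow, pow_succ]
        ring

/-! ### Transporting skew derivations to a quotient -/

/-- Operators `E a` on `T(V)` preserving the subspace `I` and acting on words in the elements
`y b` as the skew derivations of the braiding matrix `q'`, up to shorter words. Modulo `I` they
make the elements `y b` generate a subspace at least as large as the Nichols algebra of `q'`. -/
structure SkewAction {m : ℕ} (I : Submodule ℂ (TV θ)) (y : Fin m → TV θ)
    (q' : Fin m → Fin m → ℂˣ) (E : Fin m → TV θ →ₗ[ℂ] TV θ) : Prop where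
  one_notMem : (1 : TV θ) ∉ I
  map_mem : ∀ a, ∀ x ∈ I, E a x ∈ I
  action : ∀ a w, E a (FreeAlgebra.lift ℂ y (wordElem m w))
      - FreeAlgebra.lift ℂ y (skewDer q' a (wordElem m w))
    ∈ I ⊔ (wordSpan {v : List (Fin m) | v.length + 2 ≤ w.length}).map
        (FreeAlgebra.lift ℂ y).toLinearMap

namespace SkewAction

variable {m : ℕ} {I : Submodule ℂ (TV θ)} {y : Fin m → TV θ} {q' : Fin m → Fin m → ℂˣ}
  {E : Fin m → TV θ →ₗ[ℂ] TV θ}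

lemma action_of_mem_Wfil (h : SkewAction I y q' E) (a : Fin m) {n : ℕ} {f : TV m}
    (hf : f ∈ Wfil m (n + 1)) :
    ∃ g ∈ wordSpan {v : List (Fin m) | v.length + 1 ≤ n},
      E a (FreeAlgebra.lift ℂ y f) - FreeAlgebra.lift ℂ y (skewDer q' a f + g) ∈ I := by
  have hmem : ((E a).comp (FreeAlgebra.lift ℂ y).toLinearMap
        - (FreeAlgebra.lift ℂ y).toLinearMap.comp (skewDer q' a)) f
      ∈ I ⊔ (wordSpan {v : List (Fin m) | v.length + 1 ≤ n}).map
          (FreeAlgebra.lift ℂ y).toLinearMap := by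
    refine map_mem_of_wordSpan (fun v (hv : v.length ≤ n + 1) => ?_) hf
    refine sup_le_sup_left (Submodule.map_mono (wordSpan_mono ?_)) I (h.action a v)
    exact fun u (hu : u.length + 2 ≤ v.length) => Nat.le_of_succ_le_succ (hu.trans hv)
  obtain ⟨z, hz, _, ⟨g, hg, rfl⟩, hzg⟩ := Submodule.mem_sup.1 hmem
  refine ⟨g, hg, ?_⟩
  convert hz using 1
  rw [map_add, ← sub_sub]
  exact sub_eq_of_eq_add hzg.symm

lemma skewCoeff_eq_zero (h : SkewAction I y q' E) (w : List (Fin m)) {f : TV m}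
    (hf : f ∈ Wfil m w.length) (hfI : FreeAlgebra.lift ℂ y f ∈ I) : skewCoeff q' w f = 0 := by
  induction w generalizing f with
  | nil =>
    rw [List.length_nil, Wfil_zero] at hf
    rw [eq_counit_of_mem_homogTot_zero hf, map_smul, map_one] at hfI
    rw [skewCoeff_nil]
    by_contra hne
    exact h.one_notMem ((Submodule.smul_mem_iff _ hne).1 hfI)
  | cons a w ih =>
    obtain ⟨g, hg, hgI⟩ := h.action_of_mem_Wfil a hf
    have hgW : g ∈ Wfil m w.length :=
      wordSpan_mono (fun v (hv : v.length + 1 ≤ w.length) => Nat.le_of_succ_le hv) hg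
    have hsum := ih (Submodule.add_mem _ (skewDer_mem_Wfil a hf) hgW)
      ((Submodule.sub_mem_iff_right _ (h.map_mem a _ hfI)).1 hgI)
    have hzero : skewCoeff q' w g = 0 :=
      eq_of_mem_wordSpan (g := 0) (fun v (hv : v.length + 1 ≤ w.length) =>
        skewCoeff_wordElem_of_length_ne (by omega)) hg
    rwa [map_add, hzero, add_zero] at hsum

lemma lift_mem_Wfil {D : ℕ} (hD : ∀ a, y a ∈ Wfil θ D) (w : List (Fin m)) :
    FreeAlgebra.lift ℂ y (wordElem m w) ∈ Wfil θ (D * w.length) := by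
  induction w with
  | nil =>
    rw [wordElem_nil, map_one]
    exact wordElem_mem_wordSpan (s := {v | v.length ≤ D * 0}) (w := []) (Nat.zero_le _)
  | cons a w ih =>
    rw [wordElem_cons, map_mul, gen, FreeAlgebra.lift_ι_apply, List.length_cons, Nat.mul_succ,
      add_comm]
    exact mul_mem_Wfil (hD a) ih

theorem finGK (h : SkewAction I y q' E) (hGK : FinGK I) : FinGK (skewRad q') := by
  obtain ⟨C, d, hC⟩ := hGK
  obtain ⟨D, hD⟩ := exists_forall_mem_Wfil y
  refine finGK_of_finrank_homogTot_le (C := C) (D := D) (d := d) fun k => ?_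
  have := finiteDimensional_homogTot m k
  have := finiteDimensional_Wfil θ (D * k)
  calc Module.finrank ℂ ((homogTot m k).map (skewRad q').mkQ)
      ≤ Module.finrank ℂ ((homogTot m k).map (I.mkQ ∘ₗ (FreeAlgebra.lift ℂ y).toLinearMap)) := by
        refine finrank_map_le_of_ker _ _ _ fun f hf hfI => ?_
        have hfI' : FreeAlgebra.lift ℂ y f ∈ I := by simpa using hfI
        rw [Submodule.mkQ_apply, Submodule.Quotient.mk_eq_zero, mem_skewRad]
        intro w
        by_cases hw : w.length = k
        · exact h.skewCoeff_eq_zero w (homogTot_le_Wfil hw.ge hf) hfI'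
        · exact eq_of_mem_wordSpan (g := 0) (fun v (hv : v.length = k) =>
            skewCoeff_wordElem_of_length_ne fun hvw => hw (hvw ▸ hv)) hf
    _ ≤ Module.finrank ℂ ((Wfil θ (D * k)).map I.mkQ) := by
        rw [Submodule.map_comp]
        refine Submodule.finrank_mono (Submodule.map_mono (Submodule.map_le_iff_le_comap.2 ?_))
        exact wordSpan_le_iff.2 fun w (hw : w.length = k) => hw ▸ lift_mem_Wfil hD w
    _ ≤ C * (D * k + 1) ^ d := hC (D * k)

end SkewAction

lemma finiteRootSystem_of_finGK_skewRad (h : FinGK (skewRad q)) (hAAH : AAH) :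
    FiniteRootSystem q :=
  hAAH θ q (braidedStr q) (by rwa [Jq_eq_skewRad])

/-! ### Elements primitive modulo an ideal -/

/-- Two-sided ideals of `T(V)` spanned by multihomogeneous elements. -/
structure IsMultihomogIdeal (J : Submodule ℂ (TV θ)) : Prop where
  mul_left : ∀ a x : TV θ, x ∈ J → a * x ∈ J
  mul_right : ∀ a x : TV θ, x ∈ J → x * a ∈ J
  le_span : J ≤ Submodule.span ℂ {x | x ∈ J ∧ ∃ d, x ∈ homogD θ d}

/-- The span of the multihomogeneous elements of `I`: the defining ideal of a pre-Nichols algebra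
is only assumed to be `ℕ₀`-homogeneous, so this may be smaller than `I`. -/
def multihomogPart (I : Submodule ℂ (TV θ)) : Submodule ℂ (TV θ) :=
  Submodule.span ℂ {x | x ∈ I ∧ ∃ d, x ∈ homogD θ d}

lemma multihomogPart_le (I : Submodule ℂ (TV θ)) : multihomogPart I ≤ I :=
  Submodule.span_le.2 fun _ hx => hx.1

lemma mem_multihomogPart {I : Submodule ℂ (TV θ)} {x : TV θ} {d : Fin θ → ℕ} (hx : x ∈ I)
    (hd : x ∈ homogD θ d) : x ∈ multihomogPart I :=
  Submodule.subset_span ⟨hx, d, hd⟩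

lemma multihomogPart_le_iff {I P : Submodule ℂ (TV θ)} :
    multihomogPart I ≤ P ↔ ∀ x ∈ I, ∀ d, x ∈ homogD θ d → x ∈ P :=
  Submodule.span_le.trans
    ⟨fun h _ hx d hd => h ⟨hx, d, hd⟩, fun h x hx => hx.2.elim fun d => h x hx.1 d⟩

lemma isMultihomogIdeal_multihomogPart {S : BraidedStr θ q} {I : Submodule ℂ (TV θ)}
    (hI : IsPreNicholsIdeal S I) : IsMultihomogIdeal (multihomogPart I) where
  mul_left a x hx := by
    refine map_mem_of_forall_wordElem (f := LinearMap.mulRight ℂ x) (fun w => ?_) a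
    refine (multihomogPart_le_iff.2 fun y hy d hd => ?_ :
      multihomogPart I ≤ (multihomogPart I).comap (LinearMap.mulLeft ℂ (wordElem θ w))) hx
    exact mem_multihomogPart (hI.mul_left _ _ hy) (mul_mem_homogD (wordElem_mem_homogD w) hd)
  mul_right a x hx := by
    refine map_mem_of_forall_wordElem (f := LinearMap.mulLeft ℂ x) (fun w => ?_) a
    refine (multihomogPart_le_iff.2 fun y hy d hd => ?_ :
      multihomogPart I ≤ (multihomogPart I).comap (LinearMap.mulRight ℂ (wordElem θ w))) hx
    exact mem_multihomogPart (hI.mul_right _ _ hy) (mul_mem_homogD hd (wordElem_mem_homogD w))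
  le_span := multihomogPart_le_iff.2 fun _ hx d hd =>
    Submodule.subset_span ⟨mem_multihomogPart hx hd, d, hd⟩

namespace IsMultihomogIdeal
variable {J : Submodule ℂ (TV θ)}

lemma le_of_homogD (hJ : IsMultihomogIdeal J) {P : Submodule ℂ (TV θ)}
    (h : ∀ x ∈ J, ∀ d, x ∈ homogD θ d → x ∈ P) : J ≤ P :=
  hJ.le_span.trans (multihomogPart_le_iff.2 h)

lemma twist_mem (hJ : IsMultihomogIdeal J) (d : Fin θ → ℕ) {x : TV θ} (hx : x ∈ J) :
    twist q d x ∈ J := by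
  refine (hJ.le_of_homogD fun y hy e he => ?_ : J ≤ J.comap (twist q d).toLinearMap) hx
  change twist q d y ∈ J
  exact twist_of_mem_homogD (q := q) (d := d) he ▸ J.smul_mem _ hy

lemma braidedMul_mem_left (hJ : IsMultihomogIdeal J) {z : TV θ ⊗[ℂ] TV θ} (hz : z ∈ mixedSub J)
    (y : TV θ ⊗[ℂ] TV θ) : braidedMul q z y ∈ mixedSub J := by
  induction y with
  | zero => simp
  | add y y' hy hy' => rw [map_add]; exact Submodule.add_mem _ hy hy'
  | tmul c d =>
    refine (mixedPair_le (fun a ha b => ?_) fun a b hb => ?_ :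
      mixedSub J ≤ (mixedSub J).comap ((braidedMul q).flip (c ⊗ₜ d))) hz
    · refine map_mem_of_forall_wordElem (P := mixedSub J)
        (f := ((braidedMul q).flip (c ⊗ₜ d)).comp (TensorProduct.mk ℂ _ _ a)) (fun v => ?_) b
      change braidedMul q (a ⊗ₜ wordElem θ v) (c ⊗ₜ d) ∈ mixedSub J
      rw [braidedMul_tmul_of_mem_homogD (wordElem_mem_homogD v)]
      exact tmul_mem_mixedPair_left (hJ.mul_right _ _ ha) _
    · refine (hJ.le_of_homogD fun b hb β hβ => ?_ : J ≤ (mixedSub J).comap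
        (((braidedMul q).flip (c ⊗ₜ d)).comp (TensorProduct.mk ℂ _ _ a))) hb
      change braidedMul q (a ⊗ₜ b) (c ⊗ₜ d) ∈ mixedSub J
      rw [braidedMul_tmul_of_mem_homogD hβ]
      exact tmul_mem_mixedPair_right _ (hJ.mul_right _ _ hb)

lemma braidedMul_mem_right (hJ : IsMultihomogIdeal J) (z : TV θ ⊗[ℂ] TV θ)
    {y : TV θ ⊗[ℂ] TV θ} (hy : y ∈ mixedSub J) : braidedMul q z y ∈ mixedSub J := by
  induction z with
  | zero => simp
  | add z z' hz hz' => rw [map_add]; exact Submodule.add_mem _ hz hz'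
  | tmul a b =>
    refine map_mem_of_forall_wordElem
      (f := ((braidedMul q).flip y).comp (TensorProduct.mk ℂ _ _ a)) (fun v => ?_) b
    refine (mixedPair_le (fun c hc d => ?_) fun c d hd => ?_ :
      mixedSub J ≤ (mixedSub J).comap (braidedMul q (a ⊗ₜ wordElem θ v))) hy <;>
      rw [Submodule.mem_comap, braidedMul_tmul_of_mem_homogD (wordElem_mem_homogD v)]
    · exact tmul_mem_mixedPair_left (hJ.mul_left _ _ (hJ.twist_mem _ hc)) _
    · exact tmul_mem_mixedPair_right _ (hJ.mul_left _ _ hd)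

end IsMultihomogIdeal

lemma braidedMul_primitive {d : Fin θ → ℕ} {y : TV θ} (hy : y ∈ homogD θ d) :
    braidedMul q (y ⊗ₜ 1 + 1 ⊗ₜ y) = (LinearMap.mulLeft ℂ y).rTensor (TV θ) +
      TensorProduct.map (twist q d).toLinearMap (LinearMap.mulLeft ℂ y) :=
  TensorProduct.ext' fun a b => by
    simp [braidedMul_tmul_of_mem_homogD one_mem_homogD, braidedMul_tmul_of_mem_homogD hy,
      twist_zero]

/-- The image of `y` in `T(V)/J` is primitive. -/
def IsPrimitiveMod (S : BraidedStr θ q) (J : Submodule ℂ (TV θ)) (y : TV θ) : Prop :=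
  S.Δ y - (y ⊗ₜ 1 + 1 ⊗ₜ y) ∈ mixedSub J

lemma isPrimitiveMod_gen (S : BraidedStr θ q) (J : Submodule ℂ (TV θ)) (l : Fin θ) :
    IsPrimitiveMod S J (gen θ l) := by
  simp [IsPrimitiveMod, S.Δ_gen]

/-- The braiding matrix of a family of elements of multidegrees `d a`. -/
def degreeMatrix {m : ℕ} (q : Fin θ → Fin θ → ℂˣ) (d : Fin m → Fin θ → ℕ) : Fin m → Fin m → ℂˣ :=
  fun a b => Units.mk0 (qf q (d a) (d b)) (qf_ne_zero (d a) (d b))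

@[simp] lemma coe_degreeMatrix {m : ℕ} (d : Fin m → Fin θ → ℕ) (a b : Fin m) :
    (degreeMatrix q d a b : ℂ) = qf q (d a) (d b) := rfl

lemma contractRight_map {m : ℕ} (φ : TV m →ₗ[ℂ] TV θ) (ψ : TV θ →ₗ[ℂ] ℂ)
    (z : TV m ⊗[ℂ] TV m) : contractRight ψ (TensorProduct.map φ φ z) =
      φ (contractRight (ψ.comp φ) z) := by
  suffices h : (contractRight ψ).comp (TensorProduct.map φ φ) =
      φ.comp (contractRight (ψ.comp φ)) from LinearMap.congr_fun h z
  exact TensorProduct.ext' fun a b => by simp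

lemma contractRight_sub (ψ ψ' : TV θ →ₗ[ℂ] ℂ) :
    contractRight (ψ - ψ') = contractRight ψ - contractRight ψ' :=
  TensorProduct.ext' fun a b => by simp [sub_smul]

lemma BraidedStr.Δ_wordElem_mem (S : BraidedStr θ q) (w : List (Fin θ)) :
    S.Δ (wordElem θ w) ∈ Submodule.span ℂ {z | ∃ u v : List (Fin θ),
      u.length + v.length = w.length ∧ z = wordElem θ u ⊗ₜ[ℂ] wordElem θ v} := by
  induction w with
  | nil =>
    rw [wordElem_nil, S.Δ_one]
    exact Submodule.subset_span ⟨[], [], rfl, by simp⟩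
  | cons a w ih =>
    rw [wordElem_cons, S.Δ_gen_mul]
    refine (Submodule.map_span_le _ _ _).2 ?_ (Submodule.mem_map_of_mem ih)
    rintro _ ⟨u, v, huv, rfl⟩
    rw [coprodGenAct_tmul, twist_wordElem, ← TensorProduct.smul_tmul', ← wordElem_cons,
      ← wordElem_cons]
    refine Submodule.add_mem _ (Submodule.subset_span ⟨a :: u, v, ?_, rfl⟩)
      (Submodule.smul_mem _ _ (Submodule.subset_span ⟨u, a :: v, ?_, rfl⟩)) <;>
      simp only [List.length_cons] <;> omega

lemma BraidedStr.contractRight_Δ_wordElem_mem (S : BraidedStr θ q) {ψ : TV θ →ₗ[ℂ] ℂ}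
    (h_one : ψ 1 = 0) (h_gen : ∀ a, ψ (gen θ a) = 0) (w : List (Fin θ)) :
    contractRight ψ (S.Δ (wordElem θ w)) ∈ wordSpan {v | v.length + 2 ≤ w.length} := by
  refine (Submodule.map_span_le _ _ _).2 ?_ (Submodule.mem_map_of_mem (S.Δ_wordElem_mem w))
  rintro _ ⟨u, v, huv, rfl⟩
  rw [contractRight_tmul]
  match v with
  | [] => simp [wordElem_nil, h_one]
  | [a] => simp [wordElem_singleton, h_gen]
  | a :: b :: v =>
    refine Submodule.smul_mem _ _ (wordElem_mem_wordSpan (s := {v | v.length + 2 ≤ w.length}) ?_)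
    change u.length + 2 ≤ w.length
    simp only [List.length_cons] at huv
    omega

section lift
variable {m : ℕ} {S : BraidedStr θ q} {I : Submodule ℂ (TV θ)} {y : Fin m → TV θ}
  {d : Fin m → Fin θ → ℕ}

lemma lift_gen (y : Fin m → TV θ) (a : Fin m) : FreeAlgebra.lift ℂ y (gen m a) = y a :=
  FreeAlgebra.lift_ι_apply y a

lemma lift_twist (hy : ∀ b, y b ∈ homogD θ (d b)) (a : Fin m) (f : TV m) :
    FreeAlgebra.lift ℂ y (twist (degreeMatrix q d) (δ m a) f) =
      twist q (d a) (FreeAlgebra.lift ℂ y f) := by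
  suffices h : (FreeAlgebra.lift ℂ y).comp (twist (degreeMatrix q d) (δ m a)) =
      (twist q (d a)).comp (FreeAlgebra.lift ℂ y) from DFunLike.congr_fun h f
  refine algHom_ext_gen fun b => ?_
  simp only [AlgHom.comp_apply, twist_gen, map_smul, lift_gen, twist_of_mem_homogD (hy b),
    qf_delta, coe_degreeMatrix]

/-- A family of elements that are primitive modulo `J` induces a morphism of braided bialgebras
from a tensor algebra to `T(V)/J`. -/
lemma Δ_lift_sub_mem {J : Submodule ℂ (TV θ)} (hJ : IsMultihomogIdeal J)
    (hy : ∀ b, y b ∈ homogD θ (d b)) (hp : ∀ b, IsPrimitiveMod S J (y b))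
    (S' : BraidedStr m (degreeMatrix q d)) (w : List (Fin m)) :
    S.Δ (FreeAlgebra.lift ℂ y (wordElem m w)) -
      TensorProduct.map (FreeAlgebra.lift ℂ y).toLinearMap (FreeAlgebra.lift ℂ y).toLinearMap
        (S'.Δ (wordElem m w)) ∈ mixedSub J := by
  set φ := FreeAlgebra.lift ℂ y
  induction w with
  | nil => simp [S.Δ_one, S'.Δ_one]
  | cons b w ih =>
    have hφ : (TensorProduct.map φ.toLinearMap φ.toLinearMap).comp
        (coprodGenAct (degreeMatrix q d) b) = (braidedMul q (y b ⊗ₜ 1 + 1 ⊗ₜ y b)).comp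
          (TensorProduct.map φ.toLinearMap φ.toLinearMap) :=
      TensorProduct.ext' fun u v => by
        simp [φ, coprodGenAct_tmul, braidedMul_primitive (hy b), lift_gen, lift_twist hy]
    have h := LinearMap.congr_fun hφ (S'.Δ (wordElem m w))
    simp only [LinearMap.comp_apply] at h
    rw [wordElem_cons, map_mul, lift_gen, S.Δ_mul, S'.Δ_gen_mul, h, S.mulB_eq_braidedMul]
    convert Submodule.add_mem _
      (hJ.braidedMul_mem_left (q := q) (hp b) (S.Δ (φ (wordElem m w))))
      (hJ.braidedMul_mem_right (q := q) (y b ⊗ₜ 1 + 1 ⊗ₜ y b) ih) using 1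
    rw [map_sub, map_sub, LinearMap.sub_apply]
    abel

lemma skewAction_of_isPrimitiveMod (hI : IsPreNicholsIdeal S I)
    (hy : ∀ b, y b ∈ homogD θ (d b)) (hp : ∀ b, IsPrimitiveMod S (multihomogPart I) (y b))
    (ψ : Fin m → TV θ →ₗ[ℂ] ℂ) (hψI : ∀ a, ∀ x ∈ I, ψ a x = 0) (hψ_one : ∀ a, ψ a 1 = 0)
    (hψ : ∀ a b, ψ a (y b) = if b = a then 1 else 0) :
    SkewAction I y (degreeMatrix q d) (fun a => (contractRight (ψ a)).comp S.Δ) where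
  one_notMem h := by
    simpa [skewCoeff_nil] using hI.skewCoeff_eq_zero (w := []) (by simp) h
  map_mem a x hx := contractRight_mem_of_mem_mixedPair (hψI a) (hI.coideal x hx)
  action a w := by
    set q' := degreeMatrix q d
    set φ := FreeAlgebra.lift ℂ y
    let S' := braidedStr q'
    have hI' := contractRight_mem_of_mem_mixedPair
      (fun x hx => hψI a x (multihomogPart_le I hx))
      (Δ_lift_sub_mem (isMultihomogIdeal_multihomogPart hI) hy hp S' w)
    have hlow := S'.contractRight_Δ_wordElem_mem
      (ψ := (ψ a).comp φ.toLinearMap - skewCoeff q' [a])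
      (by simp [hψ_one, skewCoeff_cons])
      (fun b => by
        by_cases h : b = a <;>
          simp [φ, lift_gen, hψ, skewCoeff_cons, skewCoeff_nil, skewDer_gen, h]) w
    refine Submodule.mem_sup.2 ⟨_, multihomogPart_le I hI', _, ⟨_, hlow, rfl⟩, ?_⟩
    rw [contractRight_sub, LinearMap.sub_apply, S'.contractRight_skewCoeff_Δ,
      map_sub (contractRight (ψ a)), contractRight_map]
    simp only [AlgHom.toLinearMap_apply, map_sub, LinearMap.comp_apply]
    exact sub_add_sub_cancel _ _ _

end lift

/-- The classes of `x_l` and `x` span a braided subspace of primitive elements of `T(V)/I`, whose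
Nichols algebra is a subquotient of `T(V)/I`. -/
theorem finiteRootSystem_of_isPrimitiveMod {S : BraidedStr θ q} {I : Submodule ℂ (TV θ)}
    (hI : IsPreNicholsIdeal S I) (hGK : FinGK I) (hAAH : AAH) (l : Fin θ) {x : TV θ}
    {d : Fin θ → ℕ} (hx : x ∈ homogD θ d) (hd : 2 ≤ ∑ l, d l)
    (hp : IsPrimitiveMod S (multihomogPart I) x) (hxI : x ∉ I) :
    FiniteRootSystem (degreeMatrix q ![δ θ l, d]) := by
  obtain ⟨f, hfx, hfI⟩ := Submodule.exists_le_ker_of_notMem hxI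
  set N := ∑ l, d l
  have hcomp (n : ℕ) (z : TV θ) (hz : z ∈ homogTot θ n) (hn : n ≠ N) :
      homogComponent θ N z = 0 := by
    rw [homogComponent_of_mem_homogTot hz, if_neg hn]
  have hxN : x ∈ homogTot θ N := homogD_le_homogTot d hx
  have hx_comp : homogComponent θ N x = x := by
    rw [homogComponent_of_mem_homogTot hxN, if_pos rfl]
  have hone : homogComponent θ N 1 = 0 :=
    hcomp 0 1 (wordElem_mem_wordSpan (s := {w | w.length = 0}) (w := []) rfl) (by omega)
  have hgen : homogComponent θ N (gen θ l) = 0 :=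
    hcomp 1 _ (wordElem_singleton l ▸
      wordElem_mem_wordSpan (s := {w | w.length = 1}) (w := [l]) rfl) (by omega)
  have hcoeff_gen : skewCoeff q [l] (gen θ l) = 1 := by
    simp [skewCoeff_cons, skewCoeff_nil, skewDer_gen]
  have hcoeff : skewCoeff q [l] x = 0 := by
    rw [← hx_comp, skewCoeff_homogComponent, if_neg (by simp only [List.length_singleton]; omega)]
  let ψ : Fin 2 → TV θ →ₗ[ℂ] ℂ := ![skewCoeff q [l], (f x)⁻¹ • f.comp (homogComponent θ N)]
  refine finiteRootSystem_of_finGK_skewRad ((skewAction_of_isPrimitiveMod (y := ![gen θ l, x])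
    hI ?_ ?_ ψ ?_ ?_ ?_).finGK hGK) hAAH
  · exact Fin.forall_fin_two.2 ⟨gen_mem_homogD l, hx⟩
  · exact Fin.forall_fin_two.2 ⟨isPrimitiveMod_gen S _ l, hp⟩
  · refine Fin.forall_fin_two.2 ⟨fun z hz => hI.skewCoeff_eq_zero (by simp) hz, fun z hz => ?_⟩
    simp [ψ, show f (homogComponent θ N z) = 0 from hfI (hI.homogComponent_mem hz N)]
  · simp [Fin.forall_fin_two, ψ, skewCoeff_cons, hone]
  · simp [Fin.forall_fin_two, ψ, hcoeff_gen, hcoeff, hgen, hx_comp, hfx]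

/-! ### Elements of the Nichols algebra detected by skew derivations -/

lemma skewDers_mul_left {w : List (Fin θ)} {y : TV θ} (hy : ∀ l ∈ w, skewDer q l y = 0) (z : TV θ) :
    skewDers q w (y * z) = y * skewDers q w z := by
  induction w generalizing z with
  | nil => rfl
  | cons a w ih =>
    rw [List.forall_mem_cons] at hy
    simp only [skewDers_cons, skewDer_mul, hy.1, zero_mul, add_zero, ih hy.2]

lemma skewDers_mul_right {w : List (Fin θ)} {z : TV θ} (hz : ∀ l ∈ w, skewDer q l z = 0)
    (y : TV θ) : skewDers q w (y * z) = skewDers q w y * twist q (degW θ w) z := by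
  induction w generalizing y z with
  | nil => simp [skewDers, twist_zero]
  | cons a w ih =>
    rw [List.forall_mem_cons] at hz
    have htwist (l : Fin θ) (hl : l ∈ w) : skewDer q l (twist q (δ θ a) z) = 0 := by
      rw [skewDer_twist, hz.2 l hl, map_zero, smul_zero]
    simp only [skewDers_cons, skewDer_mul, hz.1, mul_zero, zero_add, ih htwist,
      degW_cons, ← AlgHom.comp_apply, ← twist_add, add_comm (degW θ w)]

section dual
variable {m : ℕ} {y : Fin m → TV θ} {d : Fin m → Fin θ → ℕ}

lemma skewDer_lift_eq_zero {l : Fin θ} (hl : ∀ b, skewDer q l (y b) = 0) (f : TV m) :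
    skewDer q l (FreeAlgebra.lift ℂ y f) = 0 := by
  suffices h : (skewDer q l).comp (FreeAlgebra.lift ℂ y).toLinearMap = 0 from
    LinearMap.congr_fun h f
  refine linearMap_ext_of_gen_mul (by simp) fun b v ih => ?_
  simp only [LinearMap.comp_apply, AlgHom.toLinearMap_apply, LinearMap.zero_apply] at ih ⊢
  rw [map_mul, lift_gen, skewDer_mul, ih, hl, mul_zero, zero_mul, add_zero]

lemma skewDers_lift (hy : ∀ b, y b ∈ homogD θ (d b)) {a : Fin m} {u : Fin θ} {w : List (Fin θ)}
    (hd : degW θ (u :: w) = d a) (hw : ∀ b, ∀ l ∈ w, skewDer q l (y b) = 0) {c : ℂ}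
    (hE : ∀ b, skewDers q (u :: w) (y b) = if b = a then c • (1 : TV θ) else 0) (f : TV m) :
    skewDers q (u :: w) (FreeAlgebra.lift ℂ y f) =
      c • FreeAlgebra.lift ℂ y (skewDer (degreeMatrix q d) a f) := by
  suffices h : (skewDers q (u :: w)).comp (FreeAlgebra.lift ℂ y).toLinearMap =
      c • (FreeAlgebra.lift ℂ y).toLinearMap.comp (skewDer (degreeMatrix q d) a) from
    LinearMap.congr_fun h f
  refine linearMap_ext_of_gen_mul (by simp [skewDers]) fun b v ih => ?_
  simp only [LinearMap.comp_apply, AlgHom.toLinearMap_apply, LinearMap.smul_apply] at ih ⊢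
  have htwist (l : Fin θ) (hl : l ∈ w) :
      skewDer q l (twist q (δ θ u) (FreeAlgebra.lift ℂ y v)) = 0 := by
    rw [skewDer_twist, skewDer_lift_eq_zero (fun b => hw b l hl), map_zero, smul_zero]
  have hmul : skewDers q (u :: w) (y b * FreeAlgebra.lift ℂ y v) =
      y b * skewDers q (u :: w) (FreeAlgebra.lift ℂ y v) +
        skewDers q (u :: w) (y b) * twist q (d a) (FreeAlgebra.lift ℂ y v) := by
    simp only [← hd, skewDers_cons, skewDer_mul, map_add,
      skewDers_mul_left (hw b), skewDers_mul_right htwist, degW_cons, add_comm (δ θ u), twist_add,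
      AlgHom.comp_apply]
  rw [map_mul, lift_gen, hmul, ih, hE, skewDer_gen_mul, map_add, map_mul, lift_gen]
  split_ifs <;> simp [lift_twist hy]

lemma skewAction_of_skewDers (hy : ∀ b, y b ∈ homogD θ (d b)) (u : Fin m → Fin θ)
    (w : Fin m → List (Fin θ)) (hd : ∀ a, degW θ (u a :: w a) = d a)
    (hw : ∀ a b, ∀ l ∈ w a, skewDer q l (y b) = 0) (c : Fin m → ℂ) (hc : ∀ a, c a ≠ 0)
    (hE : ∀ a b, skewDers q (u a :: w a) (y b) = if b = a then c a • (1 : TV θ) else 0) :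
    SkewAction (skewRad q) y (degreeMatrix q d) (fun a => (c a)⁻¹ • skewDers q (u a :: w a)) where
  one_notMem h := by simpa using counit_of_mem_skewRad h
  map_mem a _ hx := Submodule.smul_mem _ _ (skewDers_mem_skewRad hx _)
  action a v := by
    rw [LinearMap.smul_apply, skewDers_lift hy (hd a) (hw a) (hE a), inv_smul_smul₀ (hc a),
      sub_self]
    exact Submodule.zero_mem _

end dual

/-- In the algebra of skew derivations, which is dual to the Nichols algebra, the operators
`∂_{u₀ w₀}` and `∂_{u₁ w₁}` play the role of the two partial derivatives on the subalgebra
generated by `y₀` and `y₁`. -/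
theorem finiteRootSystem_of_skewDers (hGK : FinGK (skewRad q)) (hAAH : AAH) {y₀ y₁ : TV θ}
    {d₀ d₁ : Fin θ → ℕ} (hy₀ : y₀ ∈ homogD θ d₀) (hy₁ : y₁ ∈ homogD θ d₁) {u₀ u₁ : Fin θ}
    {w₀ w₁ : List (Fin θ)} (hd₀ : degW θ (u₀ :: w₀) = d₀) (hd₁ : degW θ (u₁ :: w₁) = d₁)
    (hw₀ : ∀ l ∈ w₀, skewDer q l y₀ = 0 ∧ skewDer q l y₁ = 0)
    (hw₁ : ∀ l ∈ w₁, skewDer q l y₀ = 0 ∧ skewDer q l y₁ = 0) {c₀ c₁ : ℂ} (hc₀ : c₀ ≠ 0)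
    (hc₁ : c₁ ≠ 0) (h₀₀ : skewDers q (u₀ :: w₀) y₀ = c₀ • 1)
    (h₀₁ : skewDers q (u₀ :: w₀) y₁ = 0) (h₁₀ : skewDers q (u₁ :: w₁) y₀ = 0)
    (h₁₁ : skewDers q (u₁ :: w₁) y₁ = c₁ • 1) :
    FiniteRootSystem (degreeMatrix q ![d₀, d₁]) := by
  refine finiteRootSystem_of_finGK_skewRad ((skewAction_of_skewDers (y := ![y₀, y₁])
    ?_ ![u₀, u₁] ![w₀, w₁] ?_ ?_ ![c₀, c₁] ?_ ?_).finGK hGK) hAAH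
  · exact Fin.forall_fin_two.2 ⟨hy₀, hy₁⟩
  · exact Fin.forall_fin_two.2 ⟨hd₀, hd₁⟩
  · exact Fin.forall_fin_two.2
      ⟨Fin.forall_fin_two.2 ⟨fun l hl => (hw₀ l hl).1, fun l hl => (hw₀ l hl).2⟩,
        Fin.forall_fin_two.2 ⟨fun l hl => (hw₁ l hl).1, fun l hl => (hw₁ l hl).2⟩⟩
  · exact Fin.forall_fin_two.2 ⟨hc₀, hc₁⟩
  · exact Fin.forall_fin_two.2
      ⟨Fin.forall_fin_two.2 ⟨h₀₀, h₀₁⟩, Fin.forall_fin_two.2 ⟨h₁₀, h₁₁⟩⟩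

/-! ### Rank two diagrams with infinite root systems -/

lemma qtil_comm (i j : Fin θ) : qtil q i j = qtil q j i := mul_comm _ _

lemma mem_cSet_of_eq_one {i j : Fin θ} (h : (q i i : ℂ) = 1) (n : ℕ) :
    n ∈ cSet q i j ↔ qtil q i j = 1 := by
  have hn : (n + 1 : ℂ) ≠ 0 := n.cast_add_one_ne_zero
  simp [cSet, qnum, h, hn, sub_eq_zero, eq_comm (a := (1 : ℂ))]

lemma mem_cSet_of_ne_one {i j : Fin θ} (h : (q i i : ℂ) ≠ 1) (n : ℕ) :
    n ∈ cSet q i j ↔ (q i i : ℂ) ^ (n + 1) = 1 ∨ (q i i : ℂ) ^ n * qtil q i j = 1 := by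
  have hq : qnum (q i i : ℂ) (n + 1) = 0 ↔ (q i i : ℂ) ^ (n + 1) = 1 := by
    rw [qnum, geom_sum_eq h, div_eq_zero_iff, sub_eq_zero, sub_eq_zero, or_iff_left h]
  rw [cSet, Set.mem_ofPred_eq, mul_eq_zero, hq, sub_eq_zero, eq_comm (a := (1 : ℂ))]

lemma cij_eq_neg {i j : Fin θ} (hij : i ≠ j) {n : ℕ} (h : IsLeast (cSet q i j) n) :
    cij q i j = -n := by
  simp [cij, hij, h.csInf_eq]

/-- `q'` is obtained from `q` by iterated reflections. -/
def Reach (q q' : Fin θ → Fin θ → ℂˣ) : Prop := ∃ β, ReachRoot q q' β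

lemma Reach.refl (q : Fin θ → Fin θ → ℂˣ) (l : Fin θ) : Reach q q := ⟨_, ReachRoot.simple l⟩

lemma Reach.reflect {q q' : Fin θ → Fin θ → ℂˣ} (h : Reach q q') (i : Fin θ) :
    Reach q (reflectMat q' i) :=
  h.elim fun _ hβ => ⟨_, hβ.reflect i⟩

lemma FiniteRootSystem.nonempty_cSet {q q' : Fin θ → Fin θ → ℂˣ} (h : FiniteRootSystem q)
    (hr : Reach q q') {i j : Fin θ} (hij : j ≠ i) : (cSet q' i j).Nonempty :=
  h.1 q' i hr j hij

lemma FiniteRootSystem.qtil_eq_one {q q' : Fin θ → Fin θ → ℂˣ} (h : FiniteRootSystem q)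
    (hr : Reach q q') {i j : Fin θ} (hij : j ≠ i) (hi : (q' i i : ℂ) = 1) : qtil q' i j = 1 :=
  let ⟨n, hn⟩ := h.nonempty_cSet hr hij
  (mem_cSet_of_eq_one hi n).1 hn

section ranktwo
variable {p : Fin 2 → Fin 2 → ℂˣ}

/-- The Dynkin diagram of `p` has label `a` at the vertex `i`, label `b` at the vertex `j` and an
edge labelled `e` between them (no edge if `e = 1`). -/
structure Tri (p : Fin 2 → Fin 2 → ℂˣ) (i j : Fin 2) (a e b : ℂ) : Prop where
  fst : (p i i : ℂ) = a
  edge : qtil p i j = e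
  snd : (p j j : ℂ) = b

lemma Tri.symm {i j : Fin 2} {a e b : ℂ} (h : Tri p i j a e b) : Tri p j i b e a :=
  ⟨h.snd, by rw [qtil_comm, h.edge], h.fst⟩

lemma Tri.reflect {i j : Fin 2} (hij : i ≠ j) {a e b : ℂ} (h : Tri p i j a e b) {n : ℕ}
    (hn : IsLeast (cSet p i j) n) :
    Tri (reflectMat p i) i j a (e⁻¹ * (a ^ (2 * n))⁻¹) (b * e ^ n * a ^ (n * n)) := by
  have hij' := cij_eq_neg hij hn
  have hii : cij p i i = 2 := if_pos rfl
  obtain ⟨rfl, rfl, rfl⟩ := h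
  have h₀ : (p i i : ℂ) ≠ 0 := (p i i).ne_zero
  refine ⟨?_, ?_, ?_⟩
  · simp only [reflectMat, hii, Units.val_mul, Units.val_zpow_eq_zpow_val]
    rw [mul_assoc, mul_assoc, ← zpow_add₀ h₀, ← zpow_add₀ h₀]
    simp
  · have hneg : (p i i : ℂ) ^ (-((2 * n : ℕ) : ℤ)) = ((p i i : ℂ) ^ (2 * n))⁻¹ := by
      rw [zpow_neg, zpow_natCast]
    have hsq (z : ℂ) : z ^ (-2 : ℤ) = (z ^ 2)⁻¹ := by rw [zpow_neg, zpow_ofNat]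
    simp only [reflectMat, hii, hij', qtil, Units.val_mul, Units.val_zpow_eq_zpow_val,
      Units.val_pow_eq_pow_val, neg_neg, zpow_natCast, show 2 * -(n : ℤ) = -((2 * n : ℕ) : ℤ) by
        push_cast; ring, show -(n : ℤ) * 2 = -((2 * n : ℕ) : ℤ) by push_cast; ring, hneg, hsq]
    have h₁ : (p i j : ℂ) ≠ 0 := (p i j).ne_zero
    have h₂ : (p j i : ℂ) ≠ 0 := (p j i).ne_zero
    field_simp
    ring
  · simp only [reflectMat, hij', qtil, Units.val_mul, Units.val_pow_eq_pow_val, neg_neg,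
      neg_mul_neg, zpow_natCast, ← Nat.cast_mul]
    ring

/-- `-n` is the entry `c_{ij}` of the Cartan matrix when `q_{ii} = ω ^ a ≠ 1` and
`q̃_{ij} = ω ^ e` for a primitive `M`-th root of unity `ω`; stated so as to be decidable. -/
def CartanNum (M a e n : ℕ) : Prop :=
  ¬ M ∣ a ∧ (M ∣ a * (n + 1) ∨ M ∣ a * n + e) ∧
    ∀ k < n, ¬ M ∣ a * (k + 1) ∧ ¬ M ∣ a * k + e

instance (M a e n : ℕ) : Decidable (CartanNum M a e n) := by unfold CartanNum; infer_instance

variable {ω : ℂ} {M : ℕ}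

lemma Tri.isLeast_cSet (hω : IsPrimitiveRoot ω M) {i j : Fin 2} {a e : ℕ} {b : ℂ}
    (h : Tri p i j (ω ^ a) (ω ^ e) b) {n : ℕ} (hn : CartanNum M a e n) :
    IsLeast (cSet p i j) n := by
  obtain ⟨ha, hmem, hlt⟩ := hn
  have hne : (p i i : ℂ) ≠ 1 := by rwa [h.fst, Ne, hω.pow_eq_one_iff_dvd]
  have mem_iff (k : ℕ) : k ∈ cSet p i j ↔ M ∣ a * (k + 1) ∨ M ∣ a * k + e := by
    rw [mem_cSet_of_ne_one hne, h.fst, h.edge, ← pow_mul, ← pow_mul, ← pow_add,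
      hω.pow_eq_one_iff_dvd, hω.pow_eq_one_iff_dvd]
  refine ⟨(mem_iff n).2 hmem, fun k hk => not_lt.1 fun hkn => ?_⟩
  exact not_or.2 (hlt k hkn) ((mem_iff k).1 hk)

lemma pow_eq_pow_of_modEq (hω : IsPrimitiveRoot ω M) {a b : ℕ} (h : a ≡ b [MOD M]) :
    ω ^ a = ω ^ b := by
  rw [← pow_mod_orderOf ω a, ← pow_mod_orderOf ω b, ← hω.eq_orderOf, h]

lemma Tri.reflect_pow (hω : IsPrimitiveRoot ω M) {i j : Fin 2} (hij : i ≠ j) {a e b : ℕ}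
    (h : Tri p i j (ω ^ a) (ω ^ e) (ω ^ b)) {n : ℕ} (hn : CartanNum M a e n) {e' b' : ℕ}
    (he : M ∣ e' + e + a * (2 * n)) (hb : b + e * n + a * (n * n) ≡ b' [MOD M]) :
    Tri (reflectMat p i) i j (ω ^ a) (ω ^ e') (ω ^ b') := by
  have he' : ω ^ e' = (ω ^ e)⁻¹ * ((ω ^ a) ^ (2 * n))⁻¹ := by
    rw [← mul_inv, ← pow_mul, ← pow_add]
    refine eq_inv_of_mul_eq_one_left ?_
    rw [← pow_add, ← add_assoc, hω.pow_eq_one_iff_dvd]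
    exact he
  have hb' : ω ^ b' = ω ^ b * (ω ^ e) ^ n * (ω ^ a) ^ (n * n) := by
    rw [← pow_mul, ← pow_mul, ← pow_add, ← pow_add, pow_eq_pow_of_modEq hω hb]
  rw [he', hb']
  exact h.reflect hij (h.isLeast_cSet hω hn)

lemma sRefl_zero_cons (x y : ℤ) : sRefl p 0 ![x, y] = ![-cij p 0 1 * y - x, y] := by
  have h : cij p 0 0 = 2 := if_pos rfl
  ext c
  fin_cases c
  · simp only [sRefl, Fin.sum_univ_two, h, Fin.zero_eta, Matrix.cons_val_zero, Matrix.cons_val_one,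
      if_true]
    ring
  · simp [sRefl]

lemma sRefl_one_cons (x y : ℤ) : sRefl p 1 ![x, y] = ![x, -cij p 1 0 * x - y] := by
  have h : cij p 1 1 = 2 := if_pos rfl
  ext c
  fin_cases c
  · simp [sRefl]
  · simp only [sRefl, Fin.sum_univ_two, h, Fin.mk_one, Matrix.cons_val_zero, Matrix.cons_val_one,
      if_true]
    ring

section stable
variable {T : (Fin 2 → Fin 2 → ℂˣ) → Prop} {m n : ℕ}

lemma exists_reachRoot_le (hmn : 4 ≤ m * n)
    (hT : ∀ p, T p → cij p 0 1 = -m ∧ cij p 1 0 = -n ∧ T (reflectMat p 0) ∧ T (reflectMat p 1))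
    (hp : T p) (k : ℕ) :
    ∃ p', T p' ∧ ∃ x y : ℤ, ReachRoot p p' ![x, y] ∧ (k : ℤ) ≤ x ∧ 1 ≤ x ∧ 2 * x < m * y := by
  have hmn' : (4 : ℤ) ≤ m * n := by exact_mod_cast hmn
  induction k with
  | zero =>
    have hroot := (ReachRoot.simple (q₀ := p) 0).reflect 1
    have he : (fun k : Fin 2 => if k = 0 then (1 : ℤ) else 0) = ![1, 0] := by
      ext c; fin_cases c <;> rfl
    rw [he, sRefl_one_cons, (hT p hp).2.1] at hroot
    exact ⟨_, (hT p hp).2.2.2, _, _, hroot, by simp, le_rfl, by linarith⟩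
  | succ k ih =>
    obtain ⟨p', hp', x, y, hroot, hk, hx, hxy⟩ := ih
    have hp'' := (hT p' hp').2.2.1
    have hroot' := (hroot.reflect 0).reflect 1
    rw [sRefl_zero_cons, sRefl_one_cons, (hT p' hp').1, (hT _ hp'').2.1] at hroot'
    refine ⟨_, (hT _ hp'').2.2.2, _, _, hroot', by push_cast; linarith, by linarith, ?_⟩
    nlinarith [mul_nonneg (sub_nonneg.2 hmn') (by linarith : (0 : ℤ) ≤ m * y - 2 * x),
      mul_nonneg (sub_nonneg.2 hmn') (by linarith : (0 : ℤ) ≤ x)]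

theorem not_finiteRootSystem_of_stable (hmn : 4 ≤ m * n)
    (hT : ∀ p, T p → cij p 0 1 = -m ∧ cij p 1 0 = -n ∧ T (reflectMat p 0) ∧ T (reflectMat p 1))
    (hp : T p) : ¬ FiniteRootSystem p := by
  intro hfin
  obtain ⟨B, hB⟩ := (hfin.2.image fun β : Fin 2 → ℤ => β 0).bddAbove
  obtain ⟨p', _, x, y, hroot, hk, _⟩ := exists_reachRoot_le hmn hT hp (B.toNat + 1)
  have hxB : x ≤ B := hB ⟨_, ⟨p', hroot⟩, rfl⟩
  omega

end stable

/-- The numerical conditions under which the diagram `ω ^ a —ω ^ e— ω ^ b`, for a primitive `M`-th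
root of unity `ω`, has Cartan entries `-m`, `-n` with `4 ≤ m * n` and is fixed by both
reflections. -/
def StableTri (M a e b m n : ℕ) : Prop :=
  CartanNum M a e m ∧ CartanNum M b e n ∧ 4 ≤ m * n ∧
    M ∣ e + e + a * (2 * m) ∧ b + e * m + a * (m * m) ≡ b [MOD M] ∧
    M ∣ e + e + b * (2 * n) ∧ a + e * n + b * (n * n) ≡ a [MOD M]

instance (M a e b m n : ℕ) : Decidable (StableTri M a e b m n) := by
  unfold StableTri; infer_instance

theorem StableTri.not_finiteRootSystem {a e b m n : ℕ} (h : StableTri M a e b m n)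
    (hω : IsPrimitiveRoot ω M) (hp : Tri p 0 1 (ω ^ a) (ω ^ e) (ω ^ b)) :
    ¬ FiniteRootSystem p := by
  obtain ⟨hm, hn, hmn, he₀, hb, he₁, ha⟩ := h
  refine not_finiteRootSystem_of_stable (T := fun p => Tri p 0 1 (ω ^ a) (ω ^ e) (ω ^ b)) hmn
    (fun p hp => ?_) hp
  exact ⟨cij_eq_neg (by simp) (hp.isLeast_cSet hω hm),
    cij_eq_neg (by simp) (hp.symm.isLeast_cSet hω hn),
    hp.reflect_pow hω (by simp) hm he₀ hb, (hp.symm.reflect_pow hω (by simp) hn he₁ ha).symm⟩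

end ranktwo

/-! ### Commutators modulo multihomogeneous ideals -/

/-- `π` exhibits `B` as the quotient algebra `T(V)/J`. -/
structure IsQuotientHom {B : Type*} [Ring B] [Algebra ℂ B] (π : TV θ →ₐ[ℂ] B)
    (J : Submodule ℂ (TV θ)) : Prop where
  surjective : Function.Surjective π
  map_eq_zero_iff : ∀ x, π x = 0 ↔ x ∈ J

lemma IsMultihomogIdeal.exists_isQuotientHom {J : Submodule ℂ (TV θ)} (hJ : IsMultihomogIdeal J) :
    ∃ (B : Type) (_ : Ring B) (_ : Algebra ℂ B) (π : TV θ →ₐ[ℂ] B), IsQuotientHom π J := by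
  let t : TwoSidedIdeal (TV θ) := TwoSidedIdeal.mk' (J : Set (TV θ)) J.zero_mem J.add_mem J.neg_mem
    (fun hx => hJ.mul_left _ _ hx) (fun hx => hJ.mul_right _ _ hx)
  refine ⟨t.ringCon.Quotient, inferInstance, inferInstance, t.ringCon.mkₐ ℂ,
    t.ringCon.mkₐ_surjective, fun x => ?_⟩
  have hmem : t.ringCon.mkₐ ℂ x = 0 ↔ x ∈ t := by
    rw [TwoSidedIdeal.mem_iff, ← RingCon.eq]
    rfl
  exact hmem.trans (TwoSidedIdeal.mem_mk' ..)

section quotient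
variable {S : BraidedStr θ q} {J : Submodule ℂ (TV θ)} {B : Type*} [Ring B] [Algebra ℂ B]
  {π : TV θ →ₐ[ℂ] B}

/-- The map `π ⊗ π : T(V) ⊗ T(V) → B ⊗ B` induced by an algebra map `π : T(V) → B`. -/
def tensorSq (π : TV θ →ₐ[ℂ] B) : TV θ ⊗[ℂ] TV θ →ₗ[ℂ] B ⊗[ℂ] B :=
  TensorProduct.map π.toLinearMap π.toLinearMap

@[simp] lemma tensorSq_tmul (a b : TV θ) : tensorSq π (a ⊗ₜ b) = π a ⊗ₜ π b := rfl

namespace IsQuotientHom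

lemma tensorSq_eq_zero_iff (hπ : IsQuotientHom π J) (z : TV θ ⊗[ℂ] TV θ) :
    tensorSq π z = 0 ↔ z ∈ mixedSub J := by
  have hker : LinearMap.ker π.toLinearMap = J := Submodule.ext hπ.map_eq_zero_iff
  let e := (Submodule.quotEquivOfEq _ _ hker.symm).trans
    (π.toLinearMap.quotKerEquivOfSurjective hπ.surjective)
  have hfactor : tensorSq π = (TensorProduct.congr e e).toLinearMap.comp
      (TensorProduct.map J.mkQ J.mkQ) := TensorProduct.ext' fun _ _ => rfl
  rw [mixedSub, mixedPair_eq_ker, LinearMap.mem_ker, hfactor]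
  exact (TensorProduct.congr e e).map_eq_zero_iff

lemma tensorSq_braidedMul (hJ : IsMultihomogIdeal J) (hπ : IsQuotientHom π J)
    {U U' V V' : TV θ ⊗[ℂ] TV θ} (hU : tensorSq π U = tensorSq π U')
    (hV : tensorSq π V = tensorSq π V') :
    tensorSq π (braidedMul q U V) = tensorSq π (braidedMul q U' V') := by
  rw [← sub_eq_zero, ← map_sub, hπ.tensorSq_eq_zero_iff] at *
  have h := Submodule.add_mem _ (hJ.braidedMul_mem_left (q := q) hU V)
    (hJ.braidedMul_mem_right (q := q) U' hV)
  rwa [map_sub, map_sub, LinearMap.sub_apply, sub_add_sub_cancel] at h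

lemma tensorSq_Δ_brk (hJ : IsMultihomogIdeal J) (hπ : IsQuotientHom π J) {u v : TV θ}
    {U V : TV θ ⊗[ℂ] TV θ} (a b : Fin θ → ℕ) (hU : tensorSq π (S.Δ u) = tensorSq π U)
    (hV : tensorSq π (S.Δ v) = tensorSq π V) :
    tensorSq π (S.Δ (brk q a b u v)) =
      tensorSq π (braidedMul q U V) - qf q a b • tensorSq π (braidedMul q V U) := by
  rw [brk, map_sub, map_smul, map_sub, map_smul, S.Δ_mul, S.Δ_mul, S.mulB_eq_braidedMul,
    hπ.tensorSq_braidedMul hJ hU hV, hπ.tensorSq_braidedMul hJ hV hU]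

lemma isPrimitiveMod_iff (hπ : IsQuotientHom π J) (y : TV θ) :
    IsPrimitiveMod S J y ↔ tensorSq π (S.Δ y) = π y ⊗ₜ 1 + 1 ⊗ₜ π y := by
  rw [IsPrimitiveMod, ← hπ.tensorSq_eq_zero_iff, map_sub, sub_eq_zero, map_add, tensorSq_tmul,
    tensorSq_tmul, map_one]

end IsQuotientHom
end quotient

/-- The commutator `x_{ij} = [x_i, x_j]_c`. -/
def comm₂ (q : Fin θ → Fin θ → ℂˣ) (i j : Fin θ) : TV θ :=
  brk q (δ θ i) (δ θ j) (gen θ i) (gen θ j)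

/-- The commutator `[x_{ij}, x_k]_c`, which agrees with `x_{ijk}` modulo `x_{ik}`. -/
def comm₃ (q : Fin θ → Fin θ → ℂˣ) (i j k : Fin θ) : TV θ :=
  brk q (δ θ i + δ θ j) (δ θ k) (comm₂ q i j) (gen θ k)

/-- The commutator `[x_{ij}, x_{kj}]_c`. -/
def comm₄ (q : Fin θ → Fin θ → ℂˣ) (i j k : Fin θ) : TV θ :=
  brk q (δ θ i + δ θ j) (δ θ k + δ θ j) (comm₂ q i j) (comm₂ q k j)

/-- The commutator `[x_{ij}, [x_{ij}, x_{kj}]_c]_c`, which agrees with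
`[[x_{ij}, x_{ijk}]_c, x_j]_c` modulo `x_j²` and `x_{ik}`. -/
def comm₆ (q : Fin θ → Fin θ → ℂˣ) (i j k : Fin θ) : TV θ :=
  brk q (δ θ i + δ θ j) (δ θ i + δ θ j + (δ θ k + δ θ j)) (comm₂ q i j) (comm₄ q i j k)

lemma comm₂_eq (i j : Fin θ) :
    comm₂ q i j = gen θ i * gen θ j - (q i j : ℂ) • (gen θ j * gen θ i) := by
  rw [comm₂, brk, qf_delta]

lemma xw_pair (i j : Fin θ) : xw q [i, j] = comm₂ q i j := by
  simp only [xw, ad1, degW_singleton, comm₂]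

lemma xw_triple (i j k : Fin θ) :
    xw q [i, j, k] = brk q (δ θ i) (δ θ j + δ θ k) (gen θ i) (comm₂ q j k) := by
  rw [← xw_pair, ← degW_singleton k, ← degW_cons]
  rfl

lemma comm₂_mem_homogD (i j : Fin θ) : comm₂ q i j ∈ homogD θ (δ θ i + δ θ j) :=
  brk_mem_homogD (gen_mem_homogD i) (gen_mem_homogD j)

lemma comm₃_mem_homogD (i j k : Fin θ) : comm₃ q i j k ∈ homogD θ (δ θ i + δ θ j + δ θ k) :=
  brk_mem_homogD (comm₂_mem_homogD i j) (gen_mem_homogD k)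

lemma comm₄_mem_homogD (i j k : Fin θ) :
    comm₄ q i j k ∈ homogD θ (δ θ i + δ θ j + (δ θ k + δ θ j)) :=
  brk_mem_homogD (comm₂_mem_homogD i j) (comm₂_mem_homogD k j)

lemma comm₆_mem_homogD (i j k : Fin θ) :
    comm₆ q i j k ∈ homogD θ (δ θ i + δ θ j + (δ θ i + δ θ j + (δ θ k + δ θ j))) :=
  brk_mem_homogD (comm₂_mem_homogD i j) (comm₄_mem_homogD i j k)

lemma sq_mem_homogD (j : Fin θ) : gen θ j * gen θ j ∈ homogD θ (δ θ j + δ θ j) :=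
  mul_mem_homogD (gen_mem_homogD j) (gen_mem_homogD j)

lemma braidedMul_tmul_one (a c d : TV θ) : braidedMul q (a ⊗ₜ 1) (c ⊗ₜ d) = (a * c) ⊗ₜ d := by
  rw [braidedMul_tmul_of_mem_homogD one_mem_homogD, twist_zero, AlgHom.id_apply, one_mul]

lemma BraidedStr.Δ_comm₂ (S : BraidedStr θ q) (i j : Fin θ) :
    S.Δ (comm₂ q i j) = comm₂ q i j ⊗ₜ 1 + 1 ⊗ₜ comm₂ q i j
      + (1 - qtil q i j) • (gen θ i ⊗ₜ[ℂ] gen θ j) := by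
  simp only [comm₂_eq, map_sub, map_smul, S.Δ_mul, S.Δ_gen, S.mulB_eq_braidedMul, map_add,
    LinearMap.add_apply, braidedMul_tmul_of_mem_homogD (gen_mem_homogD _), braidedMul_tmul_one,
    twist_gen, qf_delta, map_one, mul_one, one_mul, TensorProduct.sub_tmul, TensorProduct.tmul_sub,
    ← TensorProduct.smul_tmul', TensorProduct.tmul_smul, qtil]
  module

lemma isPrimitiveMod_comm₂ (S : BraidedStr θ q) (J : Submodule ℂ (TV θ)) {i k : Fin θ}
    (h : qtil q i k = 1) : IsPrimitiveMod S J (comm₂ q i k) := by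
  simp [IsPrimitiveMod, S.Δ_comm₂, h]

lemma isPrimitiveMod_sq (S : BraidedStr θ q) (J : Submodule ℂ (TV θ)) {j : Fin θ}
    (h : (q j j : ℂ) = -1) : IsPrimitiveMod S J (gen θ j * gen θ j) := by
  have hΔ : S.Δ (gen θ j * gen θ j) = (gen θ j * gen θ j) ⊗ₜ 1 + 1 ⊗ₜ (gen θ j * gen θ j) := by
    simp only [S.Δ_mul, S.Δ_gen, S.mulB_eq_braidedMul, map_add, LinearMap.add_apply,
      braidedMul_tmul_of_mem_homogD (gen_mem_homogD _), braidedMul_tmul_one, twist_gen, qf_delta,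
      map_one, mul_one, one_mul, ← TensorProduct.smul_tmul', h]
    module
  rw [IsPrimitiveMod, hΔ, sub_self]
  exact Submodule.zero_mem _

lemma mul_mul_of_mul_eq_smul {B : Type*} [Ring B] [Algebra ℂ B] {x y : B} {c : ℂ}
    (h : x * y = c • (y * x)) (z : B) : x * (y * z) = c • (y * (x * z)) := by
  rw [← mul_assoc, h, smul_mul_assoc, mul_assoc]

lemma mul_mul_of_mul_self_eq_zero {B : Type*} [Ring B] {x : B} (h : x * x = 0) (z : B) :
    x * (x * z) = 0 := by
  rw [← mul_assoc, h, zero_mul]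

section relations
variable {S : BraidedStr θ q} {J : Submodule ℂ (TV θ)} {B : Type*} [Ring B] [Algebra ℂ B]
  {π : TV θ →ₐ[ℂ] B} {i j k : Fin θ}

lemma map_comm₂ (π : TV θ →ₐ[ℂ] B) (i j : Fin θ) : π (comm₂ q i j) =
    π (gen θ i) * π (gen θ j) - (q i j : ℂ) • (π (gen θ j) * π (gen θ i)) := by
  rw [comm₂_eq, map_sub, map_smul, map_mul, map_mul]

lemma map_comm₃ (π : TV θ →ₐ[ℂ] B) (i j k : Fin θ) : π (comm₃ q i j k) =
    π (comm₂ q i j) * π (gen θ k) - ((q i k : ℂ) * q j k) • (π (gen θ k) * π (comm₂ q i j)) := by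
  simp only [comm₃, brk, map_sub, map_smul, map_mul, qf_add_left, qf_delta]

lemma map_comm₄ (π : TV θ →ₐ[ℂ] B) (i j k : Fin θ) : π (comm₄ q i j k) =
    π (comm₂ q i j) * π (comm₂ q k j) -
      ((q i k : ℂ) * q i j * (q j k * q j j)) • (π (comm₂ q k j) * π (comm₂ q i j)) := by
  simp only [comm₄, brk, map_sub, map_smul, map_mul, qf_add_left, qf_add_right, qf_delta]
  module

lemma map_gen_mul_gen (hik : π (comm₂ q i k) = 0) :
    π (gen θ i) * π (gen θ k) = (q i k : ℂ) • (π (gen θ k) * π (gen θ i)) := by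
  rwa [map_comm₂, sub_eq_zero] at hik

lemma map_comm₂_mul_gen (π : TV θ →ₐ[ℂ] B) (i j k : Fin θ) : π (comm₂ q i j) * π (gen θ k) =
    π (comm₃ q i j k) + ((q i k : ℂ) * q j k) • (π (gen θ k) * π (comm₂ q i j)) := by
  rw [map_comm₃, sub_add_cancel]

lemma map_comm₂_mul_comm₂ (π : TV θ →ₐ[ℂ] B) (i j k : Fin θ) :
    π (comm₂ q i j) * π (comm₂ q k j) = π (comm₄ q i j k) +
      ((q i k : ℂ) * q i j * (q j k * q j j)) • (π (comm₂ q k j) * π (comm₂ q i j)) := by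
  rw [map_comm₄, sub_add_cancel]

lemma map_comm₂_mul_comm₄ (π : TV θ →ₐ[ℂ] B) (i j k : Fin θ) :
    π (comm₂ q i j) * π (comm₄ q i j k) = π (comm₆ q i j k) +
      qf q (δ θ i + δ θ j) (δ θ i + δ θ j + (δ θ k + δ θ j)) •
        (π (comm₄ q i j k) * π (comm₂ q i j)) := by
  rw [comm₆, brk, map_sub, map_smul, map_mul, map_mul, sub_add_cancel]

lemma map_comm₂_mul_gen_self (hj : π (gen θ j) * π (gen θ j) = 0) (i : Fin θ) :
    π (comm₂ q i j) * π (gen θ j) = -(q i j : ℂ) • (π (gen θ j) * π (comm₂ q i j)) := by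
  simp [map_comm₂, sub_mul, mul_sub, mul_assoc, hj, mul_mul_of_mul_self_eq_zero hj]

lemma map_gen_mul_comm₂_self (hi : π (gen θ i) * π (gen θ i) = 0) (j : Fin θ) :
    π (gen θ i) * π (comm₂ q i j) = -(q i j : ℂ) • (π (comm₂ q i j) * π (gen θ i)) := by
  simp [map_comm₂, sub_mul, mul_sub, mul_assoc, hi, mul_mul_of_mul_self_eq_zero hi]

lemma map_gen_mul_comm₂ (hik : π (comm₂ q i k) = 0) (j : Fin θ) :
    π (gen θ i) * π (comm₂ q k j) =
      ((q i k : ℂ) * q i j) • (π (comm₂ q k j) * π (gen θ i)) - (q k j : ℂ) • π (comm₃ q i j k)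
        + ((q i k : ℂ) * (1 - q j k * q k j)) • (π (gen θ k) * π (comm₂ q i j)) := by
  have hik' := map_gen_mul_gen hik
  simp only [map_comm₃, map_comm₂, sub_mul, mul_sub, smul_mul_assoc, mul_smul_comm, mul_assoc,
    hik', mul_mul_of_mul_eq_smul hik']
  module

lemma map_comm₄_mul_gen (hj : π (gen θ j) * π (gen θ j) = 0) (i k : Fin θ) :
    π (comm₄ q i j k) * π (gen θ j) =
      ((q i j : ℂ) * q k j) • (π (gen θ j) * π (comm₄ q i j k)) := by
  have hij := map_comm₂_mul_gen_self (q := q) hj i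
  have hkj := map_comm₂_mul_gen_self (q := q) hj k
  simp only [map_comm₄, sub_mul, mul_sub, smul_mul_assoc, mul_smul_comm, mul_assoc, hij, hkj,
    mul_mul_of_mul_eq_smul hij, mul_mul_of_mul_eq_smul hkj]
  module

lemma map_comm₃_mul_gen (hj : π (gen θ j) * π (gen θ j) = 0) (hjj : (q j j : ℂ) = -1)
    (i k : Fin θ) : π (comm₃ q i j k) * π (gen θ j) =
      π (comm₄ q i j k) - ((q i j : ℂ) * q k j) • (π (gen θ j) * π (comm₃ q i j k)) := by
  have hij := map_comm₂_mul_gen_self (q := q) hj i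
  simp only [map_comm₃, map_comm₄, map_comm₂ π k j, sub_mul, mul_sub, smul_mul_assoc,
    mul_smul_comm, mul_assoc, hij, mul_mul_of_mul_eq_smul hij, hjj]
  module

lemma map_xw_triple (hik : π (comm₂ q i k) = 0) (j : Fin θ) :
    π (xw q [i, j, k]) = π (comm₃ q i j k) := by
  have hik' := map_gen_mul_gen hik
  simp only [xw_triple, brk, qf_add_right, qf_delta, map_sub, map_smul, map_mul, map_comm₃,
    map_comm₂, sub_mul, mul_sub, smul_mul_assoc, mul_smul_comm, mul_assoc, hik',
    mul_mul_of_mul_eq_smul hik']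
  module

lemma map_brk_brk_xw (hjj : (q j j : ℂ) = -1) (hj : π (gen θ j) * π (gen θ j) = 0)
    (hik : π (comm₂ q i k) = 0) :
    π (brk q (δ θ i + δ θ j + (δ θ i + δ θ j + δ θ k)) (δ θ j)
      (brk q (δ θ i + δ θ j) (δ θ i + δ θ j + δ θ k) (xw q [i, j]) (xw q [i, j, k]))
      (gen θ j)) = π (comm₆ q i j k) := by
  have hij := map_comm₂_mul_gen_self (q := q) hj i
  have hijk := map_comm₃_mul_gen (q := q) hj hjj i k
  have hijk' (z : B) : π (comm₃ q i j k) * (π (gen θ j) * z) = π (comm₄ q i j k) * z -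
      ((q i j : ℂ) * q k j) • (π (gen θ j) * (π (comm₃ q i j k) * z)) := by
    rw [← mul_assoc, hijk, sub_mul, smul_mul_assoc, mul_assoc]
  simp only [xw_pair, comm₆, brk, qf_add_right, qf_add_left, qf_delta, map_sub, map_mul, map_smul,
    map_xw_triple hik, sub_mul, mul_sub, mul_assoc, smul_mul_assoc, mul_smul_comm,
    mul_mul_of_mul_eq_smul hij, hijk', hij, hijk, hjj]
  module

lemma coe_eq_inv_of_qtil_eq_one (h : qtil q i k = 1) : (q k i : ℂ) = (q i k : ℂ)⁻¹ :=
  eq_inv_of_mul_eq_one_right h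

theorem tensorSq_Δ_comm₄ (hJ : IsMultihomogIdeal J) (hπ : IsQuotientHom π J)
    (hjj : (q j j : ℂ) = -1) (hj : π (gen θ j) * π (gen θ j) = 0) (hik : π (comm₂ q i k) = 0)
    (hq : qtil q i k = 1) :
    tensorSq π (S.Δ (comm₄ q i j k)) = tensorSq π (comm₄ q i j k ⊗ₜ 1 + 1 ⊗ₜ comm₄ q i j k
      + (1 - qtil q i j * qtil q j k) • (comm₃ q i j k ⊗ₜ gen θ j + comm₂ q i j ⊗ₜ comm₂ q k j
        + (1 - qtil q i j) • (gen θ i ⊗ₜ (gen θ j * comm₂ q k j)))) := by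
  rw [comm₄, hπ.tensorSq_Δ_brk hJ _ _ (congrArg _ (S.Δ_comm₂ i j)) (congrArg _ (S.Δ_comm₂ k j)),
    ← comm₄]
  simp only [map_add, map_smul, LinearMap.add_apply, LinearMap.smul_apply,
    braidedMul_tmul_of_mem_homogD (gen_mem_homogD _),
    braidedMul_tmul_of_mem_homogD (comm₂_mem_homogD _ _), braidedMul_tmul_one, map_one, mul_one,
    one_mul, twist_gen, twist_of_mem_homogD (comm₂_mem_homogD _ _), qf_add_left, qf_add_right,
    qf_delta, tensorSq_tmul, map_mul, mul_smul_comm, hj, map_comm₂_mul_gen_self hj,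
    map_comm₂_mul_comm₂ π i j k, map_gen_mul_comm₂ hik, map_gen_mul_gen hik,
    map_comm₂_mul_gen π i j k, TensorProduct.tmul_add, TensorProduct.add_tmul,
    TensorProduct.tmul_smul, TensorProduct.sub_tmul, ← TensorProduct.smul_tmul',
    TensorProduct.tmul_zero, hjj]
  have h₀ : (q i k : ℂ) ≠ 0 := (q i k).ne_zero
  simp only [coe_eq_inv_of_qtil_eq_one hq, qtil]
  match_scalars <;> field_simp <;> ring

/-- The skew derivative of `[x_{ij}, [x_{ij}, x_{kj}]_c]_c` at `j`, modulo `x_j²` and `x_{ik}`. -/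
def comm₆Der (q : Fin θ → Fin θ → ℂˣ) (i j k : Fin θ) : TV θ :=
  (1 - qtil q i j * qtil q j k) • (comm₂ q i j * comm₃ q i j k
    + ((q i i : ℂ) * q i j ^ 2 * q j i ^ 2 * q i k * q j k) • (comm₃ q i j k * comm₂ q i j))
  + (1 - qtil q i j) • (((q j i : ℂ) * q j k) • (gen θ i * comm₄ q i j k)
    - ((q i i : ℂ) * q i j ^ 2 * q j i * q i k * q j k) • (comm₄ q i j k * gen θ i))

theorem tensorSq_Δ_comm₆ (hJ : IsMultihomogIdeal J) (hπ : IsQuotientHom π J)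
    (hjj : (q j j : ℂ) = -1) (hj : π (gen θ j) * π (gen θ j) = 0) (hik : π (comm₂ q i k) = 0)
    (hq : qtil q i k = 1) (hl : q i i * qtil q i j ^ 2 * qtil q j k = -1) :
    tensorSq π (S.Δ (comm₆ q i j k)) = tensorSq π (comm₆ q i j k ⊗ₜ 1 + 1 ⊗ₜ comm₆ q i j k
      + comm₆Der q i j k ⊗ₜ gen θ j) := by
  have hij := map_comm₂_mul_gen_self (q := q) hj i
  rw [comm₆, hπ.tensorSq_Δ_brk hJ _ _ (congrArg _ (S.Δ_comm₂ i j))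
    (tensorSq_Δ_comm₄ hJ hπ hjj hj hik hq), ← comm₆]
  simp only [comm₆Der, map_add, map_sub, map_smul, LinearMap.add_apply, LinearMap.smul_apply,
    braidedMul_tmul_of_mem_homogD (gen_mem_homogD _),
    braidedMul_tmul_of_mem_homogD (comm₂_mem_homogD _ _),
    braidedMul_tmul_of_mem_homogD (comm₄_mem_homogD _ _ _),
    braidedMul_tmul_of_mem_homogD (mul_mem_homogD (gen_mem_homogD j)
      (comm₂_mem_homogD (q := q) k j)),
    braidedMul_tmul_one, map_one, mul_one, one_mul, twist_gen,
    twist_of_mem_homogD (comm₂_mem_homogD _ _), twist_of_mem_homogD (comm₃_mem_homogD _ _ _),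
    twist_of_mem_homogD (comm₄_mem_homogD _ _ _), qf_add_left, qf_add_right, qf_delta,
    tensorSq_tmul, map_mul, mul_smul_comm, mul_add, mul_assoc, hj,
    mul_mul_of_mul_self_eq_zero hj, mul_mul_of_mul_eq_smul hij, map_comm₂_mul_gen_self hj,
    map_comm₂_mul_comm₄ π i j k, map_comm₂_mul_comm₂ π i j k, map_comm₄_mul_gen hj,
    TensorProduct.tmul_add, TensorProduct.add_tmul, TensorProduct.tmul_smul, TensorProduct.sub_tmul,
    ← TensorProduct.smul_tmul', TensorProduct.tmul_zero, hjj, smul_zero]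
  have h₀ : (q i k : ℂ) ≠ 0 := (q i k).ne_zero
  have h₁ : (q i j : ℂ) ≠ 0 := (q i j).ne_zero
  have h₂ : (q j i : ℂ) ≠ 0 := (q j i).ne_zero
  have h₃ : (q j k : ℂ) ≠ 0 := (q j k).ne_zero
  have h₄ : (q k j : ℂ) ≠ 0 := (q k j).ne_zero
  have hii : (q i i : ℂ) = -((q i j : ℂ) ^ 2 * q j i ^ 2 * (q j k * q k j))⁻¹ := by
    simp only [qtil] at hl
    field_simp
    linear_combination hl
  simp only [coe_eq_inv_of_qtil_eq_one hq, hii, qtil]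
  match_scalars <;> field_simp <;> ring

lemma map_comm₆Der_eq_zero (hii : (q i i : ℂ) = -1) (hi : π (gen θ i) * π (gen θ i) = 0)
    (hik : π (comm₂ q i k) = 0) (hjj : (q j j : ℂ) = -1)
    (hl : qtil q i j ^ 2 * qtil q j k = 1) : π (comm₆Der q i j k) = 0 := by
  have hij := map_gen_mul_comm₂_self (q := q) hi j
  have hkj (z : B) : π (gen θ i) * (π (comm₂ q k j) * z) =
      ((q i k : ℂ) * q i j) • (π (comm₂ q k j) * (π (gen θ i) * z))
        - (q k j : ℂ) • (π (comm₃ q i j k) * z)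
        + ((q i k : ℂ) * (1 - q j k * q k j)) • (π (gen θ k) * (π (comm₂ q i j) * z)) := by
    rw [← mul_assoc, map_gen_mul_comm₂ hik, add_mul, sub_mul, smul_mul_assoc, smul_mul_assoc,
      smul_mul_assoc, mul_assoc, mul_assoc]
  have hk : π (gen θ k) * π (comm₂ q i j) = ((q i k : ℂ) * q j k)⁻¹ •
      (π (comm₂ q i j) * π (gen θ k) - π (comm₃ q i j k)) := by
    rw [map_comm₂_mul_gen, add_sub_cancel_left, smul_smul, inv_mul_cancel₀ (by simp), one_smul]
  have hk' (z : B) : π (gen θ k) * (π (comm₂ q i j) * z) = ((q i k : ℂ) * q j k)⁻¹ •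
      (π (comm₂ q i j) * (π (gen θ k) * z) - π (comm₃ q i j k) * z) := by
    rw [← mul_assoc, hk, smul_mul_assoc, sub_mul, mul_assoc]
  simp only [comm₆Der, map_add, map_sub, map_mul, map_smul, map_comm₄, mul_sub, sub_mul, mul_add,
    smul_mul_assoc, mul_smul_comm, mul_assoc, hij, mul_mul_of_mul_eq_smul hij, hkj, hk,
    hk', map_gen_mul_comm₂ hik, hii, hjj]
  have h₀ : (q i k : ℂ) ≠ 0 := (q i k).ne_zero
  have h₁ : (q i j : ℂ) ≠ 0 := (q i j).ne_zero
  have h₂ : (q j i : ℂ) ≠ 0 := (q j i).ne_zero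
  have h₃ : (q j k : ℂ) ≠ 0 := (q j k).ne_zero
  have hkj_eq : (q k j : ℂ) = (q i j ^ 2 * q j i ^ 2 * q j k : ℂ)⁻¹ := by
    simp only [qtil] at hl
    field_simp
    linear_combination hl
  simp only [hkj_eq, qtil]
  match_scalars <;> field_simp <;> ring

end relations

section primitive
variable {S : BraidedStr θ q} {I : Submodule ℂ (TV θ)} {i j k : Fin θ}

lemma skewDer_mem_multihomogPart (hI : IsPreNicholsIdeal S I) {x : TV θ}
    (hx : x ∈ multihomogPart I) (a : Fin θ) : skewDer q a x ∈ multihomogPart I :=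
  (multihomogPart_le_iff.2 fun _ hy _ hd =>
    mem_multihomogPart (hI.skewDer_mem hy a) (skewDer_mem_homogD a hd) :
    multihomogPart I ≤ (multihomogPart I).comap (skewDer q a)) hx

section
variable {u v : TV θ} {d : Fin θ → ℕ} {a : Fin θ}

lemma skewDer_sub_mem (hI : IsPreNicholsIdeal S I) (hu : u ∈ homogD θ d) (hd : 2 ≤ ∑ l, d l)
    (h : S.Δ u - (u ⊗ₜ 1 + 1 ⊗ₜ u + v ⊗ₜ gen θ a) ∈ mixedSub (multihomogPart I)) :
    skewDer q a u - v ∈ multihomogPart I := by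
  have hu₀ : skewCoeff q [a] u = 0 := by
    rw [← (homogComponent_of_mem_homogTot (homogD_le_homogTot d hu)).trans (if_pos rfl),
      skewCoeff_homogComponent, if_neg (by simp only [List.length_singleton]; omega)]
  have hcontract := contractRight_mem_of_mem_mixedPair (ψ := skewCoeff q [a])
    (fun x hx => hI.skewCoeff_eq_zero (by simp) (multihomogPart_le I hx)) h
  rw [map_sub, S.contractRight_skewCoeff_Δ] at hcontract
  simpa [hu₀, skewCoeff_cons, skewCoeff_nil, skewDer_gen, skewDers] using hcontract

lemma isPrimitiveMod_skewDer (hI : IsPreNicholsIdeal S I) (hu : u ∈ homogD θ d)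
    (hd : 2 ≤ ∑ l, d l)
    (h : S.Δ u - (u ⊗ₜ 1 + 1 ⊗ₜ u + v ⊗ₜ gen θ a) ∈ mixedSub (multihomogPart I)) :
    IsPrimitiveMod S (multihomogPart I) (skewDer q a u) := by
  have hder : (skewDer q a).lTensor (TV θ) (S.Δ u - (u ⊗ₜ 1 + 1 ⊗ₜ u + v ⊗ₜ gen θ a)) ∈
      mixedSub (multihomogPart I) :=
    (mixedPair_le (fun b hb c => tmul_mem_mixedPair_left hb _)
      (fun b c hc => tmul_mem_mixedPair_right _ (skewDer_mem_multihomogPart hI hc a)) :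
      mixedSub (multihomogPart I) ≤
        (mixedSub (multihomogPart I)).comap ((skewDer q a).lTensor (TV θ))) h
  rw [map_sub, ← S.Δ_skewDer] at hder
  have hv := tmul_mem_mixedPair_left (J := multihomogPart I) (skewDer_sub_mem hI hu hd h) 1
  rw [IsPrimitiveMod]
  convert Submodule.sub_mem _ hder hv using 1
  simp only [map_add, LinearMap.lTensor_tmul, skewDer_one, skewDer_gen, if_true,
    TensorProduct.tmul_zero, TensorProduct.sub_tmul]
  abel

lemma isPrimitiveMod_of_skewDer_mem (hI : IsPreNicholsIdeal S I) (hu : u ∈ homogD θ d)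
    (hd : 2 ≤ ∑ l, d l)
    (h : S.Δ u - (u ⊗ₜ 1 + 1 ⊗ₜ u + v ⊗ₜ gen θ a) ∈ mixedSub (multihomogPart I))
    (hder : skewDer q a u ∈ I) : IsPrimitiveMod S (multihomogPart I) u := by
  have hv : v ∈ multihomogPart I := by
    simpa using Submodule.sub_mem _ (mem_multihomogPart hder (skewDer_mem_homogD a hu))
      (skewDer_sub_mem hI hu hd h)
  have hv' := tmul_mem_mixedPair_left (J := multihomogPart I) hv (gen θ a)
  rw [IsPrimitiveMod]
  convert Submodule.add_mem _ h hv' using 1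
  abel

end

lemma IsPreNicholsIdeal.exists_isQuotientHom (hI : IsPreNicholsIdeal S I) :
    ∃ (B : Type) (_ : Ring B) (_ : Algebra ℂ B) (π : TV θ →ₐ[ℂ] B),
      IsQuotientHom π (multihomogPart I) :=
  (isMultihomogIdeal_multihomogPart hI).exists_isQuotientHom

lemma IsQuotientHom.map_eq_zero {B : Type*} [Ring B] [Algebra ℂ B] {π : TV θ →ₐ[ℂ] B}
    (hπ : IsQuotientHom π (multihomogPart I)) {x : TV θ} {d : Fin θ → ℕ} (hx : x ∈ I)
    (hd : x ∈ homogD θ d) : π x = 0 :=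
  (hπ.map_eq_zero_iff x).2 (mem_multihomogPart hx hd)

lemma IsQuotientHom.map_gen_mul_self {B : Type*} [Ring B] [Algebra ℂ B] {π : TV θ →ₐ[ℂ] B}
    (hπ : IsQuotientHom π (multihomogPart I)) (hj : gen θ j * gen θ j ∈ I) :
    π (gen θ j) * π (gen θ j) = 0 :=
  (map_mul π _ _).symm.trans (hπ.map_eq_zero hj (sq_mem_homogD j))

lemma isPrimitiveMod_comm₄ (hI : IsPreNicholsIdeal S I) (hjj : (q j j : ℂ) = -1)
    (hj : gen θ j * gen θ j ∈ I) (hik : comm₂ q i k ∈ I) (hq : qtil q i k = 1)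
    (hκ : qtil q i j * qtil q j k = 1) :
    IsPrimitiveMod S (multihomogPart I) (comm₄ q i j k) := by
  obtain ⟨B, _, _, π, hπ⟩ := hI.exists_isQuotientHom
  rw [hπ.isPrimitiveMod_iff, tensorSq_Δ_comm₄ (isMultihomogIdeal_multihomogPart hI) hπ hjj
    (hπ.map_gen_mul_self hj) (hπ.map_eq_zero hik (comm₂_mem_homogD i k)) hq]
  simp [hκ]

lemma Δ_comm₆_sub_mem (hI : IsPreNicholsIdeal S I) (hjj : (q j j : ℂ) = -1)
    (hj : gen θ j * gen θ j ∈ I) (hik : comm₂ q i k ∈ I) (hq : qtil q i k = 1)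
    (hl : q i i * qtil q i j ^ 2 * qtil q j k = -1) :
    S.Δ (comm₆ q i j k) - (comm₆ q i j k ⊗ₜ 1 + 1 ⊗ₜ comm₆ q i j k + comm₆Der q i j k ⊗ₜ gen θ j) ∈
      mixedSub (multihomogPart I) := by
  obtain ⟨B, _, _, π, hπ⟩ := hI.exists_isQuotientHom
  rw [← hπ.tensorSq_eq_zero_iff, map_sub, sub_eq_zero]
  exact tensorSq_Δ_comm₆ (isMultihomogIdeal_multihomogPart hI) hπ hjj (hπ.map_gen_mul_self hj)
    (hπ.map_eq_zero hik (comm₂_mem_homogD i k)) hq hl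

lemma isPrimitiveMod_comm₆_of_sq_mem (hI : IsPreNicholsIdeal S I) (hii : (q i i : ℂ) = -1)
    (hjj : (q j j : ℂ) = -1) (hi : gen θ i * gen θ i ∈ I) (hj : gen θ j * gen θ j ∈ I)
    (hik : comm₂ q i k ∈ I) (hq : qtil q i k = 1) (hl : qtil q i j ^ 2 * qtil q j k = 1) :
    IsPrimitiveMod S (multihomogPart I) (comm₆ q i j k) := by
  obtain ⟨B, _, _, π, hπ⟩ := hI.exists_isQuotientHom
  have hik' := hπ.map_eq_zero hik (comm₂_mem_homogD i k)
  rw [hπ.isPrimitiveMod_iff, tensorSq_Δ_comm₆ (isMultihomogIdeal_multihomogPart hI) hπ hjj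
    (hπ.map_gen_mul_self hj) hik' hq (by rw [hii, mul_assoc, hl, mul_one])]
  simp [map_comm₆Der_eq_zero hii (hπ.map_gen_mul_self hi) hik' hjj hl]

lemma brk_brk_xw_mem (hI : IsPreNicholsIdeal S I) (hjj : (q j j : ℂ) = -1)
    (hj : gen θ j * gen θ j ∈ I) (hik : comm₂ q i k ∈ I) (h₆ : comm₆ q i j k ∈ I) :
    brk q (δ θ i + δ θ j + (δ θ i + δ θ j + δ θ k)) (δ θ j)
      (brk q (δ θ i + δ θ j) (δ θ i + δ θ j + δ θ k) (xw q [i, j]) (xw q [i, j, k]))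
      (gen θ j) ∈ I := by
  obtain ⟨B, _, _, π, hπ⟩ := hI.exists_isQuotientHom
  refine multihomogPart_le I ((hπ.map_eq_zero_iff _).1 ?_)
  rw [map_brk_brk_xw hjj (hπ.map_gen_mul_self hj) (hπ.map_eq_zero hik (comm₂_mem_homogD i k))]
  exact hπ.map_eq_zero h₆ (comm₆_mem_homogD i j k)

lemma comm₆_mem_of_comm₄_mem (hI : IsPreNicholsIdeal S I) (h : comm₄ q i j k ∈ I) :
    comm₆ q i j k ∈ I :=
  Submodule.sub_mem _ (hI.mul_left _ _ h) (Submodule.smul_mem _ _ (hI.mul_right _ _ h))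

end primitive

/-! ### Vanishing of primitive elements -/

lemma degreeMatrix_tri (q : Fin θ → Fin θ → ℂˣ) (a b : Fin θ → ℕ) :
    Tri (degreeMatrix q ![a, b]) 0 1 (qf q a a) (qf q a b * qf q b a) (qf q b b) :=
  ⟨rfl, rfl, rfl⟩

lemma Tri.edge_eq_one {p p' : Fin 2 → Fin 2 → ℂˣ} {s t : Fin 2} {a e b : ℂ} (h : Tri p' s t a e b)
    (hst : t ≠ s) (ha : a = 1) (hp : FiniteRootSystem p) (hr : Reach p p') : e = 1 := by
  rw [← h.edge]
  exact hp.qtil_eq_one hr hst (h.fst.trans ha)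

lemma qf_pair_self (i j : Fin θ) :
    qf q (δ θ i + δ θ j) (δ θ i + δ θ j) = q i i * q j j * qtil q i j := by
  simp only [qf_add_left, qf_add_right, qf_delta, qtil]
  ring

lemma qf_delta_pair (l i j : Fin θ) :
    qf q (δ θ l) (δ θ i + δ θ j) * qf q (δ θ i + δ θ j) (δ θ l) = qtil q l i * qtil q l j := by
  simp only [qf_add_left, qf_add_right, qf_delta, qtil]
  ring

lemma pow_eq_neg_one {ω : ℂ} {n : ℕ} (hω : IsPrimitiveRoot ω (n * 2)) (hn : n ≠ 0) : ω ^ n = -1 :=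
  (hω.pow (by omega) rfl).eq_neg_one_of_two_right

section
variable {S : BraidedStr θ q} {I : Submodule ℂ (TV θ)} {i j k : Fin θ}

lemma mem_of_qf_eq_one (hI : IsPreNicholsIdeal S I) (hGK : FinGK I) (hAAH : AAH) (l : Fin θ)
    {x : TV θ} {d : Fin θ → ℕ} (hx : x ∈ homogD θ d) (hd : 2 ≤ ∑ l, d l)
    (hp : IsPrimitiveMod S (multihomogPart I) x) (hone : qf q d d = 1)
    (hne : qf q (δ θ l) d * qf q d (δ θ l) ≠ 1) : x ∈ I := by
  by_contra hxI
  have hf := finiteRootSystem_of_isPrimitiveMod hI hGK hAAH l hx hd hp hxI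
  exact hne ((degreeMatrix_tri q (δ θ l) d).symm.edge_eq_one (by simp) hone hf (Reach.refl _ 0))

lemma mem_of_stableTri (hI : IsPreNicholsIdeal S I) (hGK : FinGK I) (hAAH : AAH) (l : Fin θ)
    {x : TV θ} {d : Fin θ → ℕ} (hx : x ∈ homogD θ d) (hd : 2 ≤ ∑ l, d l)
    (hp : IsPrimitiveMod S (multihomogPart I) x) {M a e b m n : ℕ} (h : StableTri M a e b m n)
    {ω : ℂ} (hω : IsPrimitiveRoot ω M) (ha : (q l l : ℂ) = ω ^ a)
    (he : qf q (δ θ l) d * qf q d (δ θ l) = ω ^ e) (hb : qf q d d = ω ^ b) : x ∈ I := by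
  by_contra hxI
  have ht := degreeMatrix_tri q (δ θ l) d
  rw [he, hb, qf_delta, ha] at ht
  exact h.not_finiteRootSystem hω ht
    (finiteRootSystem_of_isPrimitiveMod hI hGK hAAH l hx hd hp hxI)

lemma sq_mem (hI : IsPreNicholsIdeal S I) (hGK : FinGK I) (hAAH : AAH) (l : Fin θ)
    (hjj : (q j j : ℂ) = -1) (h : qtil q l j ^ 2 ≠ 1) : gen θ j * gen θ j ∈ I := by
  refine mem_of_qf_eq_one hI hGK hAAH l (sq_mem_homogD j) (by simp [Finset.sum_add_distrib, δ])
    (isPrimitiveMod_sq S _ hjj) ?_ ?_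
  · simp [qf_pair_self, qtil, hjj]
  · rwa [qf_delta_pair, ← sq]

lemma comm₂_mem_of_stableTri (hI : IsPreNicholsIdeal S I) (hGK : FinGK I) (hAAH : AAH)
    (hik : qtil q i k = 1) {M a b m n : ℕ} (h : StableTri M a (a * 2) (a + b) m n) {ω : ℂ}
    (hω : IsPrimitiveRoot ω M) (hii : (q i i : ℂ) = ω ^ a) (hkk : (q k k : ℂ) = ω ^ b) :
    comm₂ q i k ∈ I := by
  refine mem_of_stableTri hI hGK hAAH i (comm₂_mem_homogD i k)
    (by simp [Finset.sum_add_distrib, δ]) (isPrimitiveMod_comm₂ S _ hik) h hω hii ?_ ?_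
  · rw [qf_delta_pair, hik, mul_one, qtil, hii, pow_mul, sq]
  · rw [qf_pair_self, hik, mul_one, hii, hkk, pow_add]

lemma qf_comm₄_self (hik : qtil q i k = 1) :
    qf q (δ θ i + δ θ j + (δ θ k + δ θ j)) (δ θ i + δ θ j + (δ θ k + δ θ j))
      = (q i i : ℂ) * q j j ^ 4 * q k k * qtil q i j ^ 2 * qtil q j k ^ 2 := by
  rw [← mul_one (_ * _), ← hik]
  simp only [qf_add_left, qf_add_right, qf_delta, qtil]
  ring

lemma qf_delta_comm₄ (hik : qtil q i k = 1) :
    qf q (δ θ i) (δ θ i + δ θ j + (δ θ k + δ θ j))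
      * qf q (δ θ i + δ θ j + (δ θ k + δ θ j)) (δ θ i) = (q i i : ℂ) ^ 2 * qtil q i j ^ 2 := by
  rw [← mul_one (_ * qtil q i j ^ 2), ← hik]
  simp only [qf_add_left, qf_add_right, qf_delta, qtil]
  ring

lemma qf_comm₆_self (hik : qtil q i k = 1) :
    qf q (δ θ i + δ θ j + (δ θ i + δ θ j + (δ θ k + δ θ j)))
      (δ θ i + δ θ j + (δ θ i + δ θ j + (δ θ k + δ θ j)))
      = (q i i : ℂ) ^ 4 * q j j ^ 9 * q k k * qtil q i j ^ 6 * qtil q j k ^ 3 := by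
  rw [← mul_one (_ * _), ← one_pow 2, ← hik]
  simp only [qf_add_left, qf_add_right, qf_delta, qtil]
  ring

lemma qf_delta_comm₆ (hik : qtil q i k = 1) :
    qf q (δ θ i) (δ θ i + δ θ j + (δ θ i + δ θ j + (δ θ k + δ θ j)))
      * qf q (δ θ i + δ θ j + (δ θ i + δ θ j + (δ θ k + δ θ j))) (δ θ i)
      = (q i i : ℂ) ^ 4 * qtil q i j ^ 3 := by
  rw [← mul_one (_ * qtil q i j ^ 3), ← hik]
  simp only [qf_add_left, qf_add_right, qf_delta, qtil]
  ring

lemma qf_skewDer_comm₆_self (hik : qtil q i k = 1) :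
    qf q (δ θ i + δ θ j + (δ θ i + δ θ j + δ θ k)) (δ θ i + δ θ j + (δ θ i + δ θ j + δ θ k))
      = (q i i : ℂ) ^ 4 * q j j ^ 4 * q k k * qtil q i j ^ 4 * qtil q j k ^ 2 := by
  rw [← mul_one (_ * _), ← one_pow 2, ← hik]
  simp only [qf_add_left, qf_add_right, qf_delta, qtil]
  ring

lemma qf_delta_skewDer_comm₆ (i j k : Fin θ) :
    qf q (δ θ j) (δ θ i + δ θ j + (δ θ i + δ θ j + δ θ k))
      * qf q (δ θ i + δ θ j + (δ θ i + δ θ j + δ θ k)) (δ θ j)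
      = (q j j : ℂ) ^ 4 * qtil q i j ^ 2 * qtil q j k := by
  simp only [qf_add_left, qf_add_right, qf_delta, qtil]
  ring

lemma skewDer_comm₆_mem_homogD (i j k : Fin θ) : skewDer q j (comm₆ q i j k)
    ∈ homogD θ (δ θ i + δ θ j + (δ θ i + δ θ j + δ θ k)) := by
  have h := skewDer_mem_homogD (q := q) j (comm₆_mem_homogD (q := q) i j k)
  rwa [show δ θ i + δ θ j + (δ θ i + δ θ j + (δ θ k + δ θ j)) - δ θ j
    = δ θ i + δ θ j + (δ θ i + δ θ j + δ θ k) by ext l; simp; omega] at h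

/-! ### Sixth roots of unity -/

section six
variable {ω : ℂ}

lemma Tri.not_finiteRootSystem_six {p : Fin 2 → Fin 2 → ℂˣ} (hω : IsPrimitiveRoot ω 6)
    (h : Tri p 0 1 (ω ^ 3) (ω ^ 1) (ω ^ 1)) : ¬ FiniteRootSystem p := by
  refine not_finiteRootSystem_of_stable (m := 1) (n := 5) (T := fun p =>
    Tri p 0 1 (ω ^ 3) (ω ^ 1) (ω ^ 1) ∨ Tri p 0 1 (ω ^ 3) (ω ^ 5) (ω ^ 5)) (by norm_num) ?_
    (Or.inl h)
  rintro p (hp | hp)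
  · exact ⟨cij_eq_neg (by simp) (hp.isLeast_cSet hω (by decide)),
      cij_eq_neg (by simp) (hp.symm.isLeast_cSet hω (by decide)),
      Or.inr (hp.reflect_pow (n := 1) hω (by simp) (by decide) (by decide) (by decide)),
      Or.inl (hp.symm.reflect_pow (n := 5) hω (by simp) (by decide) (by decide) (by decide)).symm⟩
  · exact ⟨cij_eq_neg (by simp) (hp.isLeast_cSet hω (by decide)),
      cij_eq_neg (by simp) (hp.symm.isLeast_cSet hω (by decide)),
      Or.inl (hp.reflect_pow (n := 1) hω (by simp) (by decide) (by decide) (by decide)),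
      Or.inr (hp.symm.reflect_pow (n := 5) hω (by simp) (by decide) (by decide) (by decide)).symm⟩

lemma skewDer_comm₆_mem_of_six (hI : IsPreNicholsIdeal S I) (hGK : FinGK I) (hAAH : AAH)
    (hω : IsPrimitiveRoot ω 6) {τ : ℕ} (hτ : τ = 5 ∨ τ = 2) (hii : (q i i : ℂ) = ω ^ 2)
    (hjj : (q j j : ℂ) = ω ^ 3) (hkk : (q k k : ℂ) = ω ^ 3) (hij : qtil q i j = ω ^ τ)
    (hjk : qtil q j k = ω ^ 3) (hik : qtil q i k = 1)
    (hp : IsPrimitiveMod S (multihomogPart I) (skewDer q j (comm₆ q i j k))) :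
    skewDer q j (comm₆ q i j k) ∈ I := by
  by_contra hnot
  have hedge : ω ^ (3 * 4 + τ * 2 + 3) = ω ^ 1 :=
    pow_eq_pow_of_modEq hω (show _ % 6 = _ by omega)
  have hself : ω ^ (2 * 4 + 3 * 4 + 3 + τ * 4 + 3 * 2) = ω ^ 1 :=
    pow_eq_pow_of_modEq hω (show _ % 6 = _ by omega)
  have ht := degreeMatrix_tri q (δ θ j) (δ θ i + δ θ j + (δ θ i + δ θ j + δ θ k))
  rw [qf_delta_skewDer_comm₆, qf_skewDer_comm₆_self hik, qf_delta, hii, hjj, hkk, hij, hjk] at ht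
  simp only [← pow_mul, ← pow_add, hedge, hself] at ht
  exact ht.not_finiteRootSystem_six hω (finiteRootSystem_of_isPrimitiveMod hI hGK hAAH j
    (skewDer_comm₆_mem_homogD i j k) (by simp [Finset.sum_add_distrib, δ]) hp hnot)

lemma comm₆_mem_of_six_of_isPrimitiveMod (hI : IsPreNicholsIdeal S I) (hGK : FinGK I)
    (hAAH : AAH) (hω : IsPrimitiveRoot ω 6) {τ : ℕ} (hτ : τ = 5 ∨ τ = 2)
    (hii : (q i i : ℂ) = ω ^ 2) (hjj : (q j j : ℂ) = ω ^ 3) (hkk : (q k k : ℂ) = ω ^ 3)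
    (hij : qtil q i j = ω ^ τ) (hjk : qtil q j k = ω ^ 3) (hik : qtil q i k = 1)
    (hp : IsPrimitiveMod S (multihomogPart I) (comm₆ q i j k)) : comm₆ q i j k ∈ I := by
  have hself : qf q (δ θ i + δ θ j + (δ θ i + δ θ j + (δ θ k + δ θ j)))
      (δ θ i + δ θ j + (δ θ i + δ θ j + (δ θ k + δ θ j))) = ω ^ 5 := by
    rw [qf_comm₆_self hik, hii, hjj, hkk, hij, hjk]
    simp only [← pow_mul, ← pow_add]
    exact pow_eq_pow_of_modEq hω (show _ % 6 = _ by omega)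
  obtain ⟨m, n, h⟩ : ∃ m n, StableTri 6 2 (2 * 4 + τ * 3) 5 m n := by
    rcases hτ with rfl | rfl
    exacts [⟨2, 5, by decide⟩, ⟨2, 2, by decide⟩]
  refine mem_of_stableTri hI hGK hAAH i (comm₆_mem_homogD i j k)
    (by simp [Finset.sum_add_distrib, δ]) hp h hω hii ?_ hself
  rw [qf_delta_comm₆ hik, hii, hij, ← pow_mul, ← pow_mul, ← pow_add]

lemma relations_of_six (hI : IsPreNicholsIdeal S I) (hGK : FinGK I) (hAAH : AAH)
    (hω : IsPrimitiveRoot ω 6) {τ : ℕ} (hτ : τ = 5 ∨ τ = 2) (hii : (q i i : ℂ) = ω ^ 2)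
    (hjj : (q j j : ℂ) = ω ^ 3) (hkk : (q k k : ℂ) = ω ^ 3) (hij : qtil q i j = ω ^ τ)
    (hjk : qtil q j k = ω ^ 3) (hik : qtil q i k = 1) :
    gen θ j * gen θ j ∈ I ∧ comm₂ q i k ∈ I ∧ comm₆ q i j k ∈ I := by
  have h₃ : ω ^ 3 = -1 := pow_eq_neg_one hω three_ne_zero
  have hjj' : (q j j : ℂ) = -1 := hjj.trans h₃
  have hj : gen θ j * gen θ j ∈ I := by
    refine sq_mem hI hGK hAAH i hjj' ?_
    rw [hij, ← pow_mul, Ne, hω.pow_eq_one_iff_dvd]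
    omega
  have hik' : comm₂ q i k ∈ I := comm₂_mem_of_stableTri hI hGK hAAH hik
    (show StableTri 6 2 (2 * 2) (2 + 3) 1 4 by decide) hω hii hkk
  have hl : q i i * qtil q i j ^ 2 * qtil q j k = -1 := by
    rw [hii, hij, hjk, ← pow_mul, ← pow_add, ← pow_add, ← h₃]
    exact pow_eq_pow_of_modEq hω (show _ % 6 = _ by omega)
  have hΔ := Δ_comm₆_sub_mem hI hjj' hj hik' hik hl
  have hd : 2 ≤ ∑ l, (δ θ i + δ θ j + (δ θ i + δ θ j + (δ θ k + δ θ j))) l := by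
    simp [Finset.sum_add_distrib, δ]
  have hder := skewDer_comm₆_mem_of_six hI hGK hAAH hω hτ hii hjj hkk hij hjk hik
    (isPrimitiveMod_skewDer hI (comm₆_mem_homogD i j k) hd hΔ)
  exact ⟨hj, hik', comm₆_mem_of_six_of_isPrimitiveMod hI hGK hAAH hω hτ hii hjj hkk hij hjk hik
    (isPrimitiveMod_of_skewDer_mem hI (comm₆_mem_homogD i j k) hd hΔ hder)⟩

end six

lemma relations_of_ten (hI : IsPreNicholsIdeal S I) (hGK : FinGK I) (hAAH : AAH) {ω : ℂ}
    (hω : IsPrimitiveRoot ω 10) (hii : (q i i : ℂ) = ω ^ 1)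
    (hjj : (q j j : ℂ) = -1) (hkk : (q k k : ℂ) = ω ^ 8) (hij : qtil q i j = ω ^ 8)
    (hjk : qtil q j k = ω ^ 2) (hik : qtil q i k = 1) :
    gen θ j * gen θ j ∈ I ∧ comm₂ q i k ∈ I ∧ comm₆ q i j k ∈ I := by
  have hj : gen θ j * gen θ j ∈ I := by
    refine sq_mem hI hGK hAAH i hjj ?_
    rw [hij, ← pow_mul, Ne, hω.pow_eq_one_iff_dvd]
    omega
  have hik' : comm₂ q i k ∈ I := comm₂_mem_of_stableTri hI hGK hAAH hik
    (show StableTri 10 1 (1 * 2) (1 + 8) 8 2 by decide) hω hii hkk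
  have hp : IsPrimitiveMod S (multihomogPart I) (comm₄ q i j k) :=
    isPrimitiveMod_comm₄ hI hjj hj hik' hik (by rw [hij, hjk, ← pow_add]; exact hω.pow_eq_one)
  refine ⟨hj, hik', comm₆_mem_of_comm₄_mem hI ?_⟩
  refine mem_of_stableTri hI hGK hAAH i (comm₄_mem_homogD i j k)
    (by simp [Finset.sum_add_distrib, δ]) hp (show StableTri 10 1 8 9 2 8 by decide) hω hii ?_ ?_
  · rw [qf_delta_comm₄ hik, hii, hij, ← pow_mul, ← pow_mul, ← pow_add]
    exact pow_eq_pow_of_modEq hω (by decide)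
  · rw [qf_comm₄_self hik, hii, hij, hjk, hkk, hjj, Even.neg_one_pow (by decide), mul_one]
    simp only [← pow_mul, ← pow_add]
    exact pow_eq_pow_of_modEq hω (by decide)

lemma relations_of_neg_one (hI : IsPreNicholsIdeal S I) (hGK : FinGK I) (hAAH : AAH)
    (hii : (q i i : ℂ) = -1) (hjj : (q j j : ℂ) = -1) (hkk : (q k k : ℂ) = -1)
    (hij : qtil q i j = -qtil q j k) (hω : IsPrimitiveRoot (qtil q j k) 3)
    (hik : qtil q i k = 1) :
    gen θ j * gen θ j ∈ I ∧ comm₂ q i k ∈ I ∧ comm₆ q i j k ∈ I := by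
  set ω := qtil q j k with hjk
  have h₃ : ω ^ 3 = 1 := hω.pow_eq_one
  have h₂ : ω ^ 2 ≠ 1 := hω.pow_ne_one_of_pos_of_lt two_ne_zero (by norm_num)
  have hneg : (-1 : ℂ) ≠ 1 := by norm_num
  have hj : gen θ j * gen θ j ∈ I := sq_mem hI hGK hAAH i hjj (by rwa [hij, neg_sq])
  have hi : gen θ i * gen θ i ∈ I := sq_mem hI hGK hAAH j hii (by rwa [qtil_comm, hij, neg_sq])
  have hik' : comm₂ q i k ∈ I := by
    refine mem_of_qf_eq_one hI hGK hAAH j (comm₂_mem_homogD i k)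
      (by simp [Finset.sum_add_distrib, δ]) (isPrimitiveMod_comm₂ S _ hik) ?_ ?_
    · simp [qf_pair_self, hik, hii, hkk]
    · rw [qf_delta_pair, qtil_comm j i, hij, ← hjk]
      exact fun h => hneg (by linear_combination (ω ^ 4 - ω ^ 2 + 1) * h + (ω ^ 3 + 1) * h₃)
  refine ⟨hj, hik', mem_of_qf_eq_one hI hGK hAAH i (comm₆_mem_homogD i j k)
    (by simp [Finset.sum_add_distrib, δ])
    (isPrimitiveMod_comm₆_of_sq_mem hI hii hjj hi hj hik' hik ?_) ?_ ?_⟩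
  · rw [hij, ← hjk]; linear_combination h₃
  · rw [qf_comm₆_self hik, hii, hjj, hkk, hij, ← hjk]
    linear_combination (ω ^ 6 + ω ^ 3 + 1) * h₃
  · rw [qf_delta_comm₆ hik, hii, hij]
    exact fun h => hneg (by linear_combination h + h₃)

end

/-! ### Fifth and sixth roots of unity in family (c) -/

lemma skewDer_brk_gen (a l : Fin θ) {d : Fin θ → ℕ} {y : TV θ} (hy : y ∈ homogD θ d) :
    skewDer q l (brk q (δ θ a) d (gen θ a) y)
      = gen θ a * skewDer q l y - (qf q (δ θ a) d * q l a) • (skewDer q l y * gen θ a) := by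
  rw [brk, map_sub, map_smul, skewDer_gen_mul, skewDer_mul, skewDer_gen, twist_gen,
    twist_of_mem_homogD hy, qf_delta]
  rcases eq_or_ne a l with rfl | h
  · simp [smul_smul]; abel
  · simp [h, smul_smul]

lemma skewDer_comm₂ (l a b : Fin θ) :
    skewDer q l (comm₂ q a b) = if b = l then (1 - qtil q a b) • gen θ a else 0 := by
  rw [comm₂, skewDer_brk_gen _ _ (gen_mem_homogD b), skewDer_gen, qf_delta]
  split_ifs with h
  · subst h
    simp [qtil, sub_smul]
  · simp

section ranktwo
variable {p : Fin 2 → Fin 2 → ℂˣ} {a : ℂ}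

lemma FiniteRootSystem.exists_isPrimitiveRoot (hf : FiniteRootSystem p) {b : ℂ} {e : ℕ}
    (h : Tri p 0 1 a (a ^ e) b) (he : e ≠ 0) (ha : a ≠ 1) : ∃ N, N ≠ 0 ∧ IsPrimitiveRoot a N := by
  obtain ⟨n, hn⟩ := hf.nonempty_cSet (Reach.refl p 0) (i := 0) (j := 1) (by simp)
  rw [mem_cSet_of_ne_one (by rwa [h.fst]), h.fst, h.edge, ← pow_add] at hn
  obtain ⟨m, hm, hm'⟩ : ∃ m, 0 < m ∧ a ^ m = 1 := by
    rcases hn with hn | hn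
    exacts [⟨_, n.succ_pos, hn⟩, ⟨_, by omega, hn⟩]
  exact ⟨orderOf a, (orderOf_pos_iff.2 (isOfFinOrder_iff_pow_eq_one.2 ⟨m, hm, hm'⟩)).ne',
    IsPrimitiveRoot.orderOf a⟩

lemma Tri.not_finiteRootSystem_of_four (ha : IsPrimitiveRoot a 4) (h : Tri p 0 1 a a (a ^ 2)) :
    ¬ FiniteRootSystem p := by
  intro hf
  nth_rw 1 2 [← pow_one a] at h
  have h' := h.symm.reflect_pow (n := 1) (e' := 3) (b' := 0) ha (by simp) (by decide)
    (by decide) (by decide)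
  have h₃ := h'.symm.edge_eq_one (by simp) (pow_zero a) hf ((Reach.refl _ 0).reflect 1)
  exact ha.pow_ne_one_of_pos_of_lt three_ne_zero (by norm_num) h₃

lemma stableTri_seven_add (n : ℕ) : StableTri (7 + n) 1 3 (4 + n) (4 + n) 1 := by
  have hnd (m : ℕ) : 0 < m → m < 7 + n → ¬ 7 + n ∣ m := Nat.not_dvd_of_pos_of_lt
  refine ⟨⟨hnd _ (by omega) (by omega), Or.inr ⟨1, by ring⟩, fun l hl =>
      ⟨hnd _ (by omega) (by omega), hnd _ (by omega) (by omega)⟩⟩,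
    ⟨hnd _ (by omega) (by omega), Or.inr ⟨1, by ring⟩, fun l hl => ?_⟩,
    by omega, ⟨2, by ring⟩, ?_, ⟨2, by ring⟩, ?_⟩
  · obtain rfl : l = 0 := by omega
    exact ⟨hnd _ (by omega) (by omega), hnd _ (by omega) (by omega)⟩
  · rw [show 4 + n + 3 * (4 + n) + 1 * ((4 + n) * (4 + n)) = 4 + n + (7 + n) * (4 + n) by ring]
    exact Nat.add_mul_mod_self_left _ _ _
  · rw [show 1 + 3 * 1 + (4 + n) * (1 * 1) = 1 + (7 + n) by ring]
    exact Nat.add_mod_right _ _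

lemma FiniteRootSystem.order_lt_seven (hf : FiniteRootSystem p) {b : ℂ}
    (h : Tri p 0 1 a (a ^ 3) b) (hb : b * a ^ 3 = 1) {N : ℕ} (ha : IsPrimitiveRoot a N) :
    N < 7 := by
  by_contra! hN
  obtain ⟨n, rfl⟩ := Nat.exists_eq_add_of_le hN
  have h₁ : a ^ (4 + n) * a ^ 3 = 1 := by
    rw [← pow_add, ← ha.pow_eq_one]; congr 1; omega
  rw [eq_inv_of_mul_eq_one_left hb, ← eq_inv_of_mul_eq_one_left h₁] at h
  exact (stableTri_seven_add n).not_finiteRootSystem ha (by rwa [pow_one]) hf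

end ranktwo

section
variable {i j k : Fin θ}

lemma finiteRootSystem_comm₂_gen (hGK : FinGK (skewRad q)) (hAAH : AAH) (hij : i ≠ j)
    (hik : i ≠ k) (hjk : j ≠ k) (ht : qtil q i j ≠ 1) :
    FiniteRootSystem (degreeMatrix q ![δ θ j + δ θ i, δ θ k]) :=
  finiteRootSystem_of_skewDers hGK hAAH (comm₂_mem_homogD (q := q) j i) (gen_mem_homogD k)
    (u₀ := i) (u₁ := k) (w₀ := [j]) (w₁ := [])
    (by simp [degW_cons, add_comm]) (by simp [degW_cons])
    (by simp [skewDer_comm₂, skewDer_gen, hij, hjk.symm]) (by simp)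
    (sub_ne_zero.2 (by rwa [qtil_comm, ne_comm] : 1 ≠ qtil q j i)) one_ne_zero
    (by simp [skewDers, skewDer_comm₂, skewDer_gen])
    (by simp [skewDers, skewDer_gen, hik.symm])
    (by simp [skewDers, skewDer_comm₂, hik])
    (by simp [skewDers, skewDer_gen])

lemma finiteRootSystem_comm₂_comm₂ (hGK : FinGK (skewRad q)) (hAAH : AAH) (hij : i ≠ j)
    (hik : i ≠ k) (hjk : j ≠ k) (ht : qtil q i j ≠ 1) (ht' : qtil q j k ≠ 1) :
    FiniteRootSystem (degreeMatrix q ![δ θ j + δ θ i, δ θ j + δ θ k]) :=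
  have hw : ∀ l ∈ [j], skewDer q l (comm₂ q j i) = 0 ∧ skewDer q l (comm₂ q j k) = 0 := by
    simp [skewDer_comm₂, hij, hjk.symm]
  finiteRootSystem_of_skewDers hGK hAAH (comm₂_mem_homogD (q := q) j i)
    (comm₂_mem_homogD j k) (u₀ := i) (u₁ := k) (by simp [degW_cons, add_comm])
    (by simp [degW_cons, add_comm]) hw hw
    (sub_ne_zero.2 (by rwa [qtil_comm, ne_comm] : 1 ≠ qtil q j i)) (sub_ne_zero.2 ht'.symm)
    (by simp [skewDers, skewDer_comm₂, skewDer_gen])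
    (by simp [skewDers, skewDer_comm₂, hik.symm])
    (by simp [skewDers, skewDer_comm₂, hik])
    (by simp [skewDers, skewDer_comm₂, skewDer_gen])

lemma qf_pair_pair (i j k : Fin θ) :
    qf q (δ θ j + δ θ i) (δ θ j + δ θ k) * qf q (δ θ j + δ θ k) (δ θ j + δ θ i)
      = (q j j : ℂ) ^ 2 * qtil q i j * qtil q j k * qtil q i k := by
  simp only [qf_add_left, qf_add_right, qf_delta, qtil]
  ring

lemma not_isPrimitiveRoot_four (hGK : FinGK (skewRad q)) (hAAH : AAH) (hij : i ≠ j) (hik : i ≠ k)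
    (hjk : j ≠ k) {a : ℂ} (hii : (q i i : ℂ) * a = -1) (hjj : (q j j : ℂ) = -1)
    (hkk : (q k k : ℂ) * a ^ 3 = 1) (tij : qtil q i j = a ^ 2) (tjk : qtil q j k = a ^ 3)
    (tik : qtil q i k = 1) : ¬ IsPrimitiveRoot a 4 := by
  intro ha
  have h₂ : a ^ 2 = -1 := pow_eq_neg_one ha two_ne_zero
  have hf := finiteRootSystem_comm₂_comm₂ hGK hAAH hij hik hjk
    (tij ▸ ha.pow_ne_one_of_pos_of_lt two_ne_zero (by norm_num))
    (tjk ▸ ha.pow_ne_one_of_pos_of_lt three_ne_zero (by norm_num))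
  have hT := degreeMatrix_tri q (δ θ j + δ θ i) (δ θ j + δ θ k)
  rw [qf_pair_self, qf_pair_pair, qf_pair_self, qtil_comm j i, hjj, tij, tjk, tik,
    show -1 * (q i i : ℂ) * a ^ 2 = a by linear_combination -a * hii,
    show (-1 : ℂ) ^ 2 * a ^ 2 * a ^ 3 * 1 = a by linear_combination a * ha.pow_eq_one,
    show -1 * (q k k : ℂ) * a ^ 3 = a ^ 2 by linear_combination -hkk - h₂] at hT
  exact hT.not_finiteRootSystem_of_four ha hf

lemma isPrimitiveRoot_five_or_six (hconn : (dynkin q).Connected) (hGK : FinGK (skewRad q))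
    (hAAH : AAH) (hij : i ≠ j) (hik : i ≠ k) (hjk : j ≠ k) {a : ℂ}
    (hii : (q i i : ℂ) * a = -1) (hjj : (q j j : ℂ) = -1) (hkk : (q k k : ℂ) * a ^ 3 = 1)
    (tij : qtil q i j = a ^ 2) (tjk : qtil q j k = a ^ 3) (tik : qtil q i k = 1)
    (ht : qtil q i j ≠ 1) : IsPrimitiveRoot a 5 ∨ IsPrimitiveRoot a 6 := by
  have hf := finiteRootSystem_comm₂_gen hGK hAAH hij hik hjk ht
  have hT := degreeMatrix_tri q (δ θ j + δ θ i) (δ θ k)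
  rw [mul_comm (qf q _ (δ θ k)), qf_delta_pair, qf_pair_self, qf_delta, qtil_comm j i,
    qtil_comm k j, qtil_comm k i, hjj, tij, tjk, tik, mul_one,
    show -1 * (q i i : ℂ) * a ^ 2 = a by linear_combination -a * hii] at hT
  have ha : a ≠ 1 := fun h => ht (by rw [tij, h, one_pow])
  obtain ⟨N, hN₀, hN⟩ := hf.exists_isPrimitiveRoot hT three_ne_zero ha
  have hlt : N < 7 := hf.order_lt_seven hT hkk hN
  have h₁ : N ≠ 1 := by rintro rfl; exact ha (IsPrimitiveRoot.one_right_iff.1 hN)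
  have h₂ : N ≠ 2 := by rintro rfl; exact ht (tij.trans hN.pow_eq_one)
  have h₃ : N ≠ 3 := by
    rintro rfl
    rw [hN.pow_eq_one, mul_one] at hkk
    have : Nontrivial (Fin θ) := ⟨_, _, hij⟩
    obtain ⟨l, hl⟩ := hconn.preconnected.exists_adj_of_nontrivial k
    rw [dynkin, SimpleGraph.fromRel_adj] at hl
    have hkl := (finiteRootSystem_of_finGK_skewRad hGK hAAH).qtil_eq_one (Reach.refl q k)
      hl.1.symm hkk
    simp [qtil_comm l k, hkl] at hl
  have h₄ : N ≠ 4 := by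
    rintro rfl
    exact not_isPrimitiveRoot_four hGK hAAH hij hik hjk hii hjj hkk tij tjk tik hN
  obtain rfl | rfl : N = 5 ∨ N = 6 := by omega
  exacts [Or.inl hN, Or.inr hN]

end

/-! ### A family with infinite-dimensional Nichols algebra -/

lemma xw_cons (a : Fin θ) {w : List (Fin θ)} (hw : w ≠ []) :
    xw q (a :: w) = brk q (δ θ a) (degW θ w) (gen θ a) (xw q w) := by
  cases w with
  | nil => exact absurd rfl hw
  | cons b w => rfl

lemma xw_mem_homogD (w : List (Fin θ)) : xw q w ∈ homogD θ (degW θ w) := by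
  induction w with
  | nil => exact degW_nil (θ := θ) ▸ one_mem_homogD
  | cons a w ih =>
    rcases eq_or_ne w [] with rfl | hw
    · exact degW_singleton a ▸ gen_mem_homogD a
    · rw [xw_cons a hw, degW_cons]
      exact brk_mem_homogD (gen_mem_homogD a) ih

lemma skewDer_xw_cons (a l : Fin θ) {w : List (Fin θ)} (hw : w ≠ []) :
    skewDer q l (xw q (a :: w)) = gen θ a * skewDer q l (xw q w)
      - (qf q (δ θ a) (degW θ w) * q l a) • (skewDer q l (xw q w) * gen θ a) := by
  rw [xw_cons a hw, skewDer_brk_gen _ _ (xw_mem_homogD w)]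

lemma skewDer_xw_append_singleton {k l : Fin θ} (hkl : k ≠ l) (w : List (Fin θ)) :
    skewDer q l (xw q (w ++ [k])) = 0 := by
  induction w with
  | nil =>
    change skewDer q l (gen θ k) = 0
    rw [skewDer_gen, if_neg hkl]
  | cons a w ih =>
    rw [List.cons_append, skewDer_xw_cons _ _ (by simp), ih, mul_zero, zero_mul, smul_zero,
      sub_zero]

lemma skewDer_xw_triple (a b l : Fin θ) :
    skewDer q l (xw q [a, a, b])
      = if b = l then ((1 - qtil q a b) * (1 - q a a * qtil q a b)) • (gen θ a * gen θ a)
        else 0 := by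
  rw [skewDer_xw_cons _ _ (by simp), xw_pair, skewDer_comm₂]
  split_ifs with h
  · subst h
    simp only [degW_cons, degW_nil, qf_add_right, qf_delta, mul_smul_comm, smul_mul_assoc, qtil,
      add_zero]
    module
  · simp

lemma finiteRootSystem_gen_xw_triple (hGK : FinGK (skewRad q)) (hAAH : AAH) {a b c : Fin θ}
    (hab : a ≠ b) (hac : a ≠ c) (hbc : b ≠ c) (h₁ : 1 + (q a a : ℂ) ≠ 0)
    (h₂ : 1 - qtil q a b ≠ 0) (h₃ : 1 - q a a * qtil q a b ≠ 0) :
    FiniteRootSystem (degreeMatrix q ![δ θ c, degW θ [a, a, b]]) := by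
  refine finiteRootSystem_of_skewDers hGK hAAH (gen_mem_homogD c) (xw_mem_homogD (q := q) _)
    (u₀ := c) (u₁ := b) (w₀ := []) (w₁ := [a, a]) (degW_singleton c)
    (by simp only [degW_cons, degW_nil]; abel) (by simp)
    (by simp [skewDer_xw_triple, hab.symm, skewDer_gen, hac.symm]) one_ne_zero
    (mul_ne_zero (mul_ne_zero h₂ h₃) h₁) (by simp [skewDers, skewDer_gen])
    (by simp [skewDers, skewDer_xw_triple, hbc])
    (by simp [skewDers, skewDer_gen, hbc.symm]) ?_
  simp only [skewDers_cons, skewDers_nil, skewDer_xw_triple, if_true,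
    map_smul, skewDer_gen_mul, skewDer_gen, twist_gen, qf_delta, map_add, mul_one]
  module

lemma stableTri_four_add (n : ℕ) : StableTri (4 + n) 1 2 1 (2 + n) (2 + n) := by
  have hnd (m : ℕ) : 0 < m → m < 4 + n → ¬ 4 + n ∣ m := Nat.not_dvd_of_pos_of_lt
  have hC : CartanNum (4 + n) 1 2 (2 + n) :=
    ⟨hnd _ (by omega) (by omega), Or.inr ⟨1, by ring⟩,
      fun l hl => ⟨hnd _ (by omega) (by omega), hnd _ (by omega) (by omega)⟩⟩
  have hfix : 1 + 2 * (2 + n) + 1 * ((2 + n) * (2 + n)) ≡ 1 [MOD 4 + n] := by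
    rw [show 1 + 2 * (2 + n) + 1 * ((2 + n) * (2 + n)) = 1 + (4 + n) * (2 + n) by ring]
    exact Nat.add_mul_mod_self_left _ _ _
  exact ⟨hC, hC, by nlinarith, ⟨2, by ring⟩, hfix, ⟨2, by ring⟩, hfix⟩

lemma FiniteRootSystem.sq_eq_one_or_pow_three_eq_one {p : Fin 2 → Fin 2 → ℂˣ}
    (hf : FiniteRootSystem p) {a : ℂ} (h : Tri p 0 1 a (a ^ 2) a) : a ^ 2 = 1 ∨ a ^ 3 = 1 := by
  by_cases ha : a = 1
  · simp [ha]
  obtain ⟨N, hN₀, hN⟩ := hf.exists_isPrimitiveRoot h two_ne_zero ha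
  have hlt : N < 4 := by
    by_contra! hlt
    obtain ⟨n, rfl⟩ := Nat.exists_eq_add_of_le hlt
    exact (stableTri_four_add n).not_finiteRootSystem hN (by rwa [pow_one]) hf
  have h₁ : N ≠ 1 := by rintro rfl; exact ha (IsPrimitiveRoot.one_right_iff.1 hN)
  obtain rfl | rfl : N = 2 ∨ N = 3 := by omega
  exacts [Or.inl hN.pow_eq_one, Or.inr hN.pow_eq_one]

section
variable {i j k : Fin θ}

lemma coe_eq_neg_inv_of_qtil_eq_neg_one (h : qtil q i j = -1) : (q j i : ℂ) = -(q i j : ℂ)⁻¹ := by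
  rw [← inv_neg]
  exact eq_inv_of_mul_eq_one_right (by rw [neg_mul, ← qtil, h, neg_neg])

lemma skewDer_xw_ijk (j : Fin θ) (tik : qtil q i k = 1) :
    skewDer q k (xw q [i, j, k]) = (1 - qtil q j k) • comm₂ q i j := by
  rw [skewDer_xw_cons _ _ (by simp), xw_pair, skewDer_comm₂, if_pos rfl, comm₂_eq, degW_cons,
    degW_singleton, qf_add_right, qf_delta, qf_delta, mul_assoc, ← qtil, tik, mul_one]
  simp only [smul_mul_assoc, mul_smul_comm, smul_sub, smul_comm (q i j : ℂ)]

lemma skewDer_xw_ijijk (tik : qtil q i k = 1) :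
    skewDer q k (xw q [i, j, i, j, k])
      = (1 - qtil q j k) • (gen θ i * (gen θ j * comm₂ q i j
        - (q j i * q j j * qtil q j k) • (comm₂ q i j * gen θ j))
        - (q i j ^ 2 * q i i : ℂ) • ((gen θ j * comm₂ q i j
        - (q j i * q j j * qtil q j k) • (comm₂ q i j * gen θ j)) * gen θ i)) := by
  have hki : (q k i : ℂ) = (q i k : ℂ)⁻¹ := eq_inv_of_mul_eq_one_right tik
  rw [skewDer_xw_cons _ _ (by simp), skewDer_xw_cons _ _ (by simp), skewDer_xw_ijk j tik]
  simp only [comm₂_eq, degW_cons, degW_nil, qf_zero_right, mul_one, qf_delta, qf_add_right,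
    mul_smul_comm, smul_mul_assoc, mul_sub, sub_mul, mul_assoc, hki, qtil]
  match_scalars <;> field_simp

lemma skewDer_xw_jiijk (tik : qtil q i k = 1) :
    skewDer q k (xw q [j, i, i, j, k])
      = (1 - qtil q j k) • (gen θ j * (gen θ i * comm₂ q i j
        - (q i i * q i j : ℂ) • (comm₂ q i j * gen θ i))
        - (q j i ^ 2 * q j j * qtil q j k) • ((gen θ i * comm₂ q i j
        - (q i i * q i j : ℂ) • (comm₂ q i j * gen θ i)) * gen θ j)) := by
  have hki : (q k i : ℂ) = (q i k : ℂ)⁻¹ := eq_inv_of_mul_eq_one_right tik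
  rw [skewDer_xw_cons _ _ (by simp), skewDer_xw_cons _ _ (by simp), skewDer_xw_ijk j tik]
  simp only [comm₂_eq, degW_cons, degW_nil, qf_zero_right, mul_one, qf_delta, qf_add_right,
    mul_smul_comm, smul_mul_assoc, mul_sub, sub_mul, mul_assoc, hki, qtil]
  match_scalars <;> field_simp

lemma skewDers_xw_ijijk (hij : i ≠ j) (hjj : (q j j : ℂ) = -1) (tij : qtil q i j = -1)
    (tik : qtil q i k = 1) :
    skewDers q [k, j, i, i, j] (xw q [i, j, i, j, k])
      = (2 * (1 - qtil q j k ^ 2) * (1 + q i i) ^ 2 * q i j) • (1 : TV θ) ∧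
    skewDers q [k, j, i, j, i] (xw q [i, j, i, j, k])
      = (2 * (1 - qtil q j k ^ 2) * (1 - q i i ^ 2)) • (1 : TV θ) := by
  rw [skewDers_cons k, skewDers_cons k, skewDer_xw_ijijk tik]
  simp only [comm₂_eq, skewDers_cons, skewDers_nil, map_sub, map_smul, map_add, skewDer_gen_mul,
    skewDer_gen, map_mul, twist_gen, qf_delta, if_true, hij, hij.symm, if_false, mul_smul_comm,
    smul_mul_assoc, mul_sub, sub_mul, mul_add, mul_one, mul_zero, add_zero, zero_add, mul_assoc,
    hjj, coe_eq_neg_inv_of_qtil_eq_neg_one tij]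
  constructor <;> match_scalars <;> field_simp <;> ring

lemma skewDers_xw_jiijk (hij : i ≠ j) (hjj : (q j j : ℂ) = -1) (tij : qtil q i j = -1)
    (tik : qtil q i k = 1) :
    skewDers q [k, j, i, i, j] (xw q [j, i, i, j, k])
      = (2 * (1 - qtil q j k) ^ 2 * (1 + q i i) ^ 2) • (1 : TV θ) ∧
    skewDers q [k, j, i, j, i] (xw q [j, i, i, j, k])
      = (2 * (1 - qtil q j k ^ 2) * (1 + q i i) ^ 2 * q j i) • (1 : TV θ) := by
  rw [skewDers_cons k, skewDers_cons k, skewDer_xw_jiijk tik]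
  simp only [comm₂_eq, skewDers_cons, skewDers_nil, map_sub, map_smul, map_add, skewDer_gen_mul,
    skewDer_gen, map_mul, twist_gen, qf_delta, if_true, hij, hij.symm, if_false, mul_smul_comm,
    smul_mul_assoc, mul_sub, sub_mul, mul_add, mul_one, mul_zero, add_zero, zero_add, mul_assoc,
    hjj, coe_eq_neg_inv_of_qtil_eq_neg_one tij]
  constructor <;> match_scalars <;> field_simp <;> ring

lemma det_skewDers_xw (tij : qtil q i j = -1) :
    2 * (1 - qtil q j k ^ 2) * (1 + q i i) ^ 2 * q i j
        * (2 * (1 - qtil q j k ^ 2) * (1 + q i i) ^ 2 * q j i)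
      - 2 * (1 - qtil q j k ^ 2) * (1 - (q i i : ℂ) ^ 2)
        * (2 * (1 - qtil q j k) ^ 2 * (1 + (q i i : ℂ)) ^ 2)
      = -8 * (1 - qtil q j k ^ 2) * (1 - qtil q j k) * (1 + q i i) ^ 3
        * (1 + q i i * qtil q j k) := by
  rw [qtil] at tij
  linear_combination 4 * (1 - qtil q j k ^ 2) ^ 2 * (1 + (q i i : ℂ)) ^ 4 * tij

lemma finiteRootSystem_of_det_ne_zero (hGK : FinGK (skewRad q)) (hAAH : AAH) {d : Fin θ → ℕ}
    {x y : TV θ} (hx : x ∈ homogD θ d) (hy : y ∈ homogD θ d) {u : Fin θ} {w₀ w₁ : List (Fin θ)}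
    (hd₀ : degW θ (u :: w₀) = d) (hd₁ : degW θ (u :: w₁) = d) (hu₀ : u ∉ w₀) (hu₁ : u ∉ w₁)
    (hx₀ : ∀ l ≠ u, skewDer q l x = 0) (hy₀ : ∀ l ≠ u, skewDer q l y = 0) {a b c e : ℂ}
    (ha : skewDers q (u :: w₀) x = a • 1) (hb : skewDers q (u :: w₁) x = b • 1)
    (hc : skewDers q (u :: w₀) y = c • 1) (he : skewDers q (u :: w₁) y = e • 1)
    (hdet : a * e - b * c ≠ 0) : FiniteRootSystem (degreeMatrix q ![d, d]) := by
  have hker (r s : ℂ) {w : List (Fin θ)} (hw : u ∉ w) :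
      ∀ l ∈ w, skewDer q l (r • x - s • y) = 0 := fun l hl => by
    have hl : l ≠ u := ne_of_mem_of_not_mem hl hw
    simp [hx₀ l hl, hy₀ l hl]
  have hmem (r s : ℂ) : r • x - s • y ∈ homogD θ d :=
    Submodule.sub_mem _ (Submodule.smul_mem _ r hx) (Submodule.smul_mem _ s hy)
  refine finiteRootSystem_of_skewDers hGK hAAH (hmem e b) (hmem c a) hd₀ hd₁
    (fun l hl => ⟨hker e b hu₀ l hl, hker c a hu₀ l hl⟩)
    (fun l hl => ⟨hker e b hu₁ l hl, hker c a hu₁ l hl⟩) hdet (neg_ne_zero.2 hdet) ?_ ?_ ?_ ?_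
  all_goals
    simp only [map_sub, map_smul, ha, hb, hc, he]
    module

lemma finiteRootSystem_xw_ijijk (hGK : FinGK (skewRad q)) (hAAH : AAH) (hij : i ≠ j) (hik : i ≠ k)
    (hjk : j ≠ k) (hjj : (q j j : ℂ) = -1) (tij : qtil q i j = -1) (tik : qtil q i k = 1)
    (h₁ : 1 - qtil q j k ^ 2 ≠ 0) (h₂ : 1 + (q i i : ℂ) ≠ 0) (h₃ : 1 + q i i * qtil q j k ≠ 0) :
    FiniteRootSystem (degreeMatrix q ![degW θ [i, j, i, j, k], degW θ [i, j, i, j, k]]) := by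
  obtain ⟨ha, hb⟩ := skewDers_xw_ijijk hij hjj tij tik
  obtain ⟨hc, he⟩ := skewDers_xw_jiijk hij hjj tij tik
  have h₁' : 1 - qtil q j k ≠ 0 := fun h => h₁ (by linear_combination (1 + qtil q j k) * h)
  have hdeg : degW θ [j, i, i, j, k] = degW θ [i, j, i, j, k] := by
    simp only [degW_cons, degW_nil]; abel
  refine finiteRootSystem_of_det_ne_zero hGK hAAH (xw_mem_homogD _) (hdeg ▸ xw_mem_homogD _)
    (by simp only [degW_cons, degW_nil]; abel) (by simp only [degW_cons, degW_nil]; abel)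
    (by simp [hik.symm, hjk.symm]) (by simp [hik.symm, hjk.symm])
    (fun l hl => skewDer_xw_append_singleton hl.symm [i, j, i, j])
    (fun l hl => skewDer_xw_append_singleton hl.symm [j, i, i, j]) ha hb hc he ?_
  rw [det_skewDers_xw tij]
  simp [h₁, h₁', h₂, h₃]

end

lemma qf_degW_ijijk (i j k : Fin θ) :
    qf q (degW θ [i, j, i, j, k]) (degW θ [i, j, i, j, k])
      = (q i i : ℂ) ^ 4 * q j j ^ 4 * qtil q i j ^ 4 * qtil q j k ^ 2 * q k k * qtil q i k ^ 2 := by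
  simp only [degW_cons, degW_nil, add_zero, qf_add_left, qf_add_right, qf_delta, qtil]
  ring

lemma qf_degW_triple (a b : Fin θ) :
    qf q (degW θ [a, a, b]) (degW θ [a, a, b]) = (q a a : ℂ) ^ 4 * q b b * qtil q a b ^ 2 := by
  simp only [degW_cons, degW_nil, add_zero, qf_add_left, qf_add_right, qf_delta, qtil]
  ring

lemma qf_delta_degW_triple (a b c : Fin θ) :
    qf q (δ θ c) (degW θ [a, a, b]) * qf q (degW θ [a, a, b]) (δ θ c)
      = qtil q c a ^ 2 * qtil q c b := by
  simp only [degW_cons, degW_nil, add_zero, qf_add_left, qf_add_right, qf_delta, qtil]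
  ring

section
variable {i j k : Fin θ} {p : ℂ}

lemma one_sub_pow_ne_zero {N m : ℕ} (hp : IsPrimitiveRoot p N) (hm : ¬ N ∣ m) : 1 - p ^ m ≠ 0 :=
  sub_ne_zero.2 fun h => hm ((hp.pow_eq_one_iff_dvd m).1 h.symm)

lemma one_add_pow_ne_zero {m : ℕ} (hp : IsPrimitiveRoot p 12) (hm : ¬ 12 ∣ m + 6) :
    1 + p ^ m ≠ 0 := by
  have h₆ : p ^ 6 = -1 := pow_eq_neg_one hp (by norm_num)
  have h := one_sub_pow_ne_zero hp hm
  rwa [pow_add, h₆, mul_neg_one, sub_neg_eq_add] at h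

lemma exists_eq_pow_of_twelve (hGK : FinGK (skewRad q)) (hAAH : AAH) (hij : i ≠ j) (hik : i ≠ k)
    (hjk : j ≠ k) (hp : IsPrimitiveRoot p 12) (hii : (q i i : ℂ) = p ^ 8)
    (hjj : (q j j : ℂ) = p ^ 6) (tij : qtil q i j = p ^ 6) (tjk : qtil q j k = p ^ 1)
    (tik : qtil q i k = 1) :
    ∃ n, (n = 2 ∨ n = 6 ∨ n = 8 ∨ n = 10) ∧ (q k k : ℂ) = p ^ n := by
  have h₆ : p ^ 6 = -1 := pow_eq_neg_one hp (by norm_num)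
  have hf := finiteRootSystem_xw_ijijk hGK hAAH hij hik hjk (hjj.trans h₆) (tij.trans h₆) tik
    (by rw [tjk, ← pow_mul]; exact one_sub_pow_ne_zero hp (by decide))
    (by rw [hii]; exact one_add_pow_ne_zero hp (by decide))
    (by rw [hii, tjk, ← pow_add]; exact one_add_pow_ne_zero hp (by decide))
  have hT := degreeMatrix_tri q (degW θ [i, j, i, j, k]) (degW θ [i, j, i, j, k])
  have hself : qf q (degW θ [i, j, i, j, k]) (degW θ [i, j, i, j, k]) = q k k * p ^ 10 := by
    rw [qf_degW_ijijk, hii, hjj, tij, tjk, tik, one_pow, mul_one, mul_comm (q k k : ℂ)]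
    simp only [← pow_mul, ← pow_add]
    rw [pow_eq_pow_of_modEq hp (b := 10) (by decide)]
  rw [hself, ← sq] at hT
  have h := hf.sq_eq_one_or_pow_three_eq_one hT
  obtain ⟨m, hm, hpm⟩ := hp.eq_pow_of_pow_eq_one (ξ := q k k * p ^ 10) (by
    rcases h with h | h
    · rw [pow_mul _ 2 6, h, one_pow]
    · rw [pow_mul _ 3 4, h, one_pow])
  rw [← hpm, ← pow_mul, ← pow_mul, hp.pow_eq_one_iff_dvd, hp.pow_eq_one_iff_dvd] at h
  refine ⟨m + 2, by omega, ?_⟩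
  linear_combination -(q k k : ℂ) * hp.pow_eq_one - p ^ 2 * hpm

lemma coe_ne_pow_six (hGK : FinGK (skewRad q)) (hAAH : AAH) (hij : i ≠ j) (hik : i ≠ k)
    (hjk : j ≠ k) (hp : IsPrimitiveRoot p 12) (hii : (q i i : ℂ) = p ^ 8)
    (hjj : (q j j : ℂ) = p ^ 6) (tij : qtil q i j = p ^ 6) (tjk : qtil q j k = p ^ 1)
    (tik : qtil q i k = 1) : (q k k : ℂ) ≠ p ^ 6 := by
  intro hkk
  have hf := finiteRootSystem_gen_xw_triple hGK hAAH hij hik hjk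
    (by rw [hii]; exact one_add_pow_ne_zero hp (by decide))
    (by rw [tij]; exact one_sub_pow_ne_zero hp (by decide))
    (by rw [hii, tij, ← pow_add]; exact one_sub_pow_ne_zero hp (by decide))
  have hT := degreeMatrix_tri q (δ θ k) (degW θ [i, i, j])
  rw [qf_degW_triple, qf_delta_degW_triple, qtil_comm k i, qtil_comm k j, hii, hjj, tij, tjk, tik,
    qf_delta, hkk, one_pow, one_mul, ← pow_mul, ← pow_mul, ← pow_add, ← pow_add,
    pow_eq_pow_of_modEq hp (show 8 * 4 + 6 + 6 * 2 ≡ 2 [MOD 12] by decide)] at hT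
  have hT₁ := hT.reflect_pow (n := 1) (e' := 11) (b' := 9) hp (by simp) (by decide)
    (by decide) (by decide)
  have hT₂ := hT₁.symm.reflect_pow (n := 3) (e' := 7) (b' := 0) hp (by simp) (by decide)
    (by decide) (by decide)
  have hedge := hT₂.symm.edge_eq_one (by simp) (pow_zero p) hf
    (((Reach.refl _ 0).reflect 0).reflect 1)
  exact hp.pow_ne_one_of_pos_of_lt (by norm_num) (by norm_num) hedge

lemma finiteRootSystem_tri_of_twelve (hGK : FinGK (skewRad q)) (hAAH : AAH) (hij : i ≠ j)
    (hik : i ≠ k) (hjk : j ≠ k) (hp : IsPrimitiveRoot p 12) (hii : (q i i : ℂ) = p ^ 8)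
    (hjj : (q j j : ℂ) = p ^ 6) (tij : qtil q i j = p ^ 6) (tjk : qtil q j k = p ^ 1)
    (tik : qtil q i k = 1) {n : ℕ} (hkk : (q k k : ℂ) = p ^ n) (hn : ¬ 12 ∣ n + 6)
    (hn' : ¬ 12 ∣ n + 1) :
    ∃ r : Fin 2 → Fin 2 → ℂˣ, FiniteRootSystem r ∧
      Tri r 0 1 (p ^ 8) (p ^ 6) (p ^ (n * 4 + 6 + 1 * 2)) := by
  have hf := finiteRootSystem_gen_xw_triple hGK hAAH hjk.symm hik.symm hij.symm
    (by rw [hkk]; exact one_add_pow_ne_zero hp hn)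
    (by rw [qtil_comm, tjk]; exact one_sub_pow_ne_zero hp (by decide))
    (by rw [hkk, qtil_comm, tjk, ← pow_add]; exact one_sub_pow_ne_zero hp hn')
  have hT := degreeMatrix_tri q (δ θ i) (degW θ [k, k, j])
  rw [qf_degW_triple, qf_delta_degW_triple, qtil_comm k j, hjj, tij, tjk, tik, qf_delta, hii, hkk,
    one_pow, one_mul, ← pow_mul, ← pow_mul, ← pow_add, ← pow_add] at hT
  exact ⟨_, hf, hT⟩

lemma Tri.not_finiteRootSystem_of_twelve {r : Fin 2 → Fin 2 → ℂˣ} (hp : IsPrimitiveRoot p 12)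
    {b : ℕ} (h : Tri r 0 1 (p ^ 8) (p ^ 6) (p ^ b)) (hb : b ≡ 0 [MOD 12] ∨ b ≡ 4 [MOD 12]) :
    ¬ FiniteRootSystem r := by
  intro hf
  rcases hb with hb | hb
  · rw [pow_eq_pow_of_modEq hp hb] at h
    have hedge := h.symm.edge_eq_one (by simp) (pow_zero p) hf (Reach.refl _ 0)
    exact hp.pow_ne_one_of_pos_of_lt (by norm_num) (by norm_num) hedge
  · rw [pow_eq_pow_of_modEq hp hb] at h
    have h' := h.reflect_pow (n := 2) (e' := 10) (b' := 0) hp (by simp) (by decide)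
      (by decide) (by decide)
    have hedge := h'.symm.edge_eq_one (by simp) (pow_zero p) hf ((Reach.refl _ 0).reflect 0)
    exact hp.pow_ne_one_of_pos_of_lt (by norm_num) (by norm_num) hedge

lemma not_finGK_skewRad_of_twelve (hAAH : AAH) (hij : i ≠ j) (hik : i ≠ k) (hjk : j ≠ k)
    (hp : IsPrimitiveRoot p 12) (hii : (q i i : ℂ) = p ^ 8) (hjj : (q j j : ℂ) = p ^ 6)
    (tij : qtil q i j = p ^ 6) (tjk : qtil q j k = p ^ 1) (tik : qtil q i k = 1) :
    ¬ FinGK (skewRad q) := by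
  intro hGK
  obtain ⟨n, hn, hkk⟩ := exists_eq_pow_of_twelve hGK hAAH hij hik hjk hp hii hjj tij tjk tik
  have hn₆ : n ≠ 6 := fun h =>
    coe_ne_pow_six hGK hAAH hij hik hjk hp hii hjj tij tjk tik (h ▸ hkk)
  obtain ⟨r, hf, hT⟩ := finiteRootSystem_tri_of_twelve hGK hAAH hij hik hjk hp hii hjj tij tjk tik
    hkk (by omega) (by omega)
  refine hT.not_finiteRootSystem_of_twelve hp ?_ hf
  obtain rfl | rfl | rfl : n = 10 ∨ n = 2 ∨ n = 8 := by omega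
  exacts [Or.inl (by decide), Or.inr (by decide), Or.inr (by decide)]

end

/-! ### The four families -/

section
variable {S : BraidedStr θ q} {I : Submodule ℂ (TV θ)} {i j k : Fin θ}

lemma isPrimitiveRoot_neg_of_odd {x : ℂ} {n : ℕ} (h : IsPrimitiveRoot x n) (hn : Odd n) :
    IsPrimitiveRoot (-x) (2 * n) := by
  have h₂ : IsPrimitiveRoot (-1 : ℂ) 2 := IsPrimitiveRoot.neg_one 0 two_ne_zero.symm
  rw [h.eq_orderOf, h₂.eq_orderOf, ← Commute.orderOf_mul_eq_mul_orderOf_of_coprime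
    (Commute.all _ _) (by rw [← h.eq_orderOf, ← h₂.eq_orderOf]; exact hn.coprime_two_left),
    neg_one_mul]
  exact IsPrimitiveRoot.orderOf _

lemma isPrimitiveRoot_twelve {p : ℂ} (h : IsPrimitiveRoot (-p ^ 2) 3) : IsPrimitiveRoot p 12 := by
  have h₆ : p ^ 6 = -1 := by linear_combination -h.pow_eq_one
  have h₄ : ¬ orderOf p ∣ 4 := fun hd => by
    rw [orderOf_dvd_iff_pow_eq_one] at hd
    have h₃ := (h.pow_eq_one_iff_dvd 2).1 (by linear_combination hd)
    omega
  have h₆' : ¬ orderOf p ∣ 6 := fun hd => by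
    rw [orderOf_dvd_iff_pow_eq_one, h₆] at hd
    norm_num at hd
  have h₁₂ : orderOf p ∣ 12 := orderOf_dvd_of_pow_eq_one (by linear_combination (p ^ 6 - 1) * h₆)
  have hord : orderOf p = 12 := by
    have := Nat.le_of_dvd (by norm_num) h₁₂
    interval_cases orderOf p <;> omega
  exact hord ▸ IsPrimitiveRoot.orderOf p

lemma not_finGK_skewRad_of_neg_sq (hAAH : AAH) (hij : i ≠ j) (hik : i ≠ k) (hjk : j ≠ k)
    (tij : qtil q i j = -1) (hjj : (q j j : ℂ) = -1) (hii : (q i i : ℂ) = -(qtil q j k) ^ 2)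
    (h₃ : IsPrimitiveRoot (q i i : ℂ) 3) (tik : qtil q i k = 1) : ¬ FinGK (skewRad q) := by
  have hp : IsPrimitiveRoot (qtil q j k) 12 := isPrimitiveRoot_twelve (hii ▸ h₃)
  have h₆ : qtil q j k ^ 6 = -1 := pow_eq_neg_one hp (by norm_num)
  exact not_finGK_skewRad_of_twelve hAAH hij hik hjk hp
    (by rw [hii]; linear_combination -(qtil q j k) ^ 2 * h₆) (hjj.trans h₆.symm)
    (tij.trans h₆.symm) (pow_one _).symm tik

lemma relations_of_eq_neg_qtil (hI : IsPreNicholsIdeal S I) (hGK : FinGK I) (hAAH : AAH)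
    (hkk : (q k k : ℂ) = -1) (tjk : qtil q j k = -1) (hjj : (q j j : ℂ) = -1)
    (hii : (q i i : ℂ) = -qtil q i j) (h₃ : IsPrimitiveRoot (q i i : ℂ) 3)
    (tik : qtil q i k = 1) :
    gen θ j * gen θ j ∈ I ∧ comm₂ q i k ∈ I ∧ comm₆ q i j k ∈ I := by
  have hω : IsPrimitiveRoot (-(q i i : ℂ) ^ 2) 6 :=
    isPrimitiveRoot_neg_of_odd (h₃.pow_of_coprime 2 (by decide)) (by decide)
  have hq := h₃.pow_eq_one
  have hω₃ : (-(q i i : ℂ) ^ 2) ^ 3 = -1 := by linear_combination (-(q i i : ℂ) ^ 3 - 1) * hq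
  exact relations_of_six hI hGK hAAH hω (Or.inl rfl) (by linear_combination -(q i i : ℂ) * hq)
    (hjj.trans hω₃.symm) (hkk.trans hω₃.symm)
    (by linear_combination hii + (q i i : ℂ) * ((q i i : ℂ) ^ 6 + (q i i : ℂ) ^ 3 + 1) * hq)
    (tjk.trans hω₃.symm) tik

lemma relations_of_eq_inv_sq (hconn : (dynkin q).Connected) (hI : IsPreNicholsIdeal S I)
    (hGK : FinGK I) (hAAH : AAH) (hij : i ≠ j) (hik : i ≠ k) (hjk : j ≠ k)
    (hjj : (q j j : ℂ) = -1) (tij : qtil q i j = ((q i i : ℂ) ^ 2)⁻¹) (ht : qtil q i j ≠ 1)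
    (hkk : (q k k : ℂ) = -(q i i : ℂ) ^ 3) (tjk : (qtil q j k)⁻¹ = -(q i i : ℂ) ^ 3)
    (tik : qtil q i k = 1) :
    gen θ j * gen θ j ∈ I ∧ comm₂ q i k ∈ I ∧ comm₆ q i j k ∈ I := by
  set a : ℂ := -(q i i : ℂ)⁻¹ with ha_def
  have h₀ : (q i i : ℂ) ≠ 0 := (q i i).ne_zero
  have tij' : qtil q i j = a ^ 2 := by rw [tij, ha_def]; field_simp
  have tjk' : qtil q j k = a ^ 3 := by rw [← inv_inv (qtil q j k), tjk, ha_def]; field_simp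
  have hii : (q i i : ℂ) * a = -1 := by rw [ha_def]; field_simp
  rcases isPrimitiveRoot_five_or_six hconn (hGK.mono hI.le_skewRad) hAAH hij hik hjk hii hjj
    (by rw [hkk, ha_def]; field_simp) tij' tjk' tik ht with ha | ha
  · have hω : IsPrimitiveRoot (q i i : ℂ) 10 := by
      have := isPrimitiveRoot_neg_of_odd ha.inv (by decide)
      rwa [ha_def, ← neg_inv, inv_inv, neg_neg] at this
    have h₅ : (q i i : ℂ) ^ 5 = -1 := pow_eq_neg_one hω (by norm_num)
    exact relations_of_ten hI hGK hAAH hω (pow_one _).symm hjj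
      (by rw [hkk]; linear_combination -(q i i : ℂ) ^ 3 * h₅)
      (by rw [tij]; field_simp; linear_combination (1 - (q i i : ℂ) ^ 5) * h₅)
      (by rw [tjk', ha_def]; field_simp; linear_combination -h₅) tik
  · have ha₃ : a ^ 3 = -1 := pow_eq_neg_one ha three_ne_zero
    have hq₃ : (q i i : ℂ) ^ 3 = 1 := by
      linear_combination (q i i : ℂ) ^ 3 * ha₃ - ((q i i : ℂ) ^ 2 * a ^ 2 - q i i * a + 1) * hii
    exact relations_of_six hI hGK hAAH ha (Or.inr rfl)
      (by rw [ha_def]; field_simp; linear_combination hq₃) (hjj.trans ha₃.symm)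
      (by rw [hkk, hq₃, ha₃]) tij' tjk' tik

end

theorem statement_6_general {S : BraidedStr θ q} (hconn : (dynkin q).Connected) (hAAH : AAH)
    {I : Submodule ℂ (TV θ)} (hI : IsPreNicholsIdeal S I) (hGK : FinGK I)
    {i j k : Fin θ} (hij : i ≠ j) (hik : i ≠ k) (hjk : j ≠ k)
    (hyp :
      (qtil q i j = -1 ∧ (q j j : ℂ) = -1 ∧ (q i i : ℂ) = -(qtil q j k) ^ 2 ∧
        IsPrimitiveRoot (q i i : ℂ) 3 ∧ qtil q i k = 1) ∨
      ((q k k : ℂ) = -1 ∧ qtil q j k = -1 ∧ (q j j : ℂ) = -1 ∧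
        (q i i : ℂ) = -(qtil q i j) ∧ IsPrimitiveRoot (q i i : ℂ) 3 ∧ qtil q i k = 1) ∨
      ((q j j : ℂ) = -1 ∧ qtil q i j = ((q i i : ℂ) ^ 2)⁻¹ ∧ qtil q i j ≠ 1 ∧
        (q k k : ℂ) = -(q i i : ℂ) ^ 3 ∧ (qtil q j k)⁻¹ = -(q i i : ℂ) ^ 3 ∧
        qtil q i k = 1) ∨
      ((q i i : ℂ) = -1 ∧ (q j j : ℂ) = -1 ∧ (q k k : ℂ) = -1 ∧
        qtil q j k = -(qtil q i j) ∧ IsPrimitiveRoot (qtil q j k) 3 ∧ qtil q i k = 1)) :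
    brk q (δ θ i + δ θ j + (δ θ i + δ θ j + δ θ k)) (δ θ j)
      (brk q (δ θ i + δ θ j) (δ θ i + δ θ j + δ θ k) (xw q [i, j]) (xw q [i, j, k]))
      (gen θ j) ∈ I := by
  have hrel : (q j j : ℂ) = -1 ∧ gen θ j * gen θ j ∈ I ∧ comm₂ q i k ∈ I ∧ comm₆ q i j k ∈ I := by
    rcases hyp with ⟨tij, hjj, hii, h₃, tik⟩ | ⟨hkk, tjk, hjj, hii, h₃, tik⟩ |
      ⟨hjj, tij, ht, hkk, tjk, tik⟩ | ⟨hii, hjj, hkk, tjk, h₃, tik⟩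
    · exact absurd (hGK.mono hI.le_skewRad)
        (not_finGK_skewRad_of_neg_sq hAAH hij hik hjk tij hjj hii h₃ tik)
    · exact ⟨hjj, relations_of_eq_neg_qtil hI hGK hAAH hkk tjk hjj hii h₃ tik⟩
    · exact ⟨hjj, relations_of_eq_inv_sq hconn hI hGK hAAH hij hik hjk hjj tij ht hkk tjk tik⟩
    · exact ⟨hjj, relations_of_neg_one hI hGK hAAH hii hjj hkk (by rw [tjk, neg_neg]) h₃ tik⟩
  obtain ⟨hjj, hj, hx, h₆⟩ := hrel
  exact brk_brk_xw_mem hI hjj hj hx h₆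

end

/-- Lemma 3.2: under any of the four listed conditions (a)–(d),
`[[x_{ij}, x_{ijk}]_c, x_j]_c = 0` in every finite-GKdim pre-Nichols algebra of `q`. -/
theorem statement_6 (θ : ℕ) (q : Fin θ → Fin θ → ℂˣ) (S : BraidedStr θ q)
    (hconn : (dynkin q).Connected)
    (hfd : FiniteDimensional ℂ (TV θ ⧸ Jq S))
    (hAAH : AAH)
    (I : Submodule ℂ (TV θ)) (hI : IsPreNicholsIdeal S I) (hGK : FinGK I)
    (i j k : Fin θ) (hij : i ≠ j) (hik : i ≠ k) (hjk : j ≠ k)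
    (hyp :
      -- (a)
      (qtil q i j = -1 ∧ (q j j : ℂ) = -1 ∧ (q i i : ℂ) = -(qtil q j k) ^ 2 ∧
        IsPrimitiveRoot (q i i : ℂ) 3 ∧ qtil q i k = 1) ∨
      -- (b)
      ((q k k : ℂ) = -1 ∧ qtil q j k = -1 ∧ (q j j : ℂ) = -1 ∧
        (q i i : ℂ) = -(qtil q i j) ∧ IsPrimitiveRoot (q i i : ℂ) 3 ∧ qtil q i k = 1) ∨
      -- (c)
      ((q j j : ℂ) = -1 ∧ qtil q i j = ((q i i : ℂ) ^ 2)⁻¹ ∧ qtil q i j ≠ 1 ∧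
        (q k k : ℂ) = -(q i i : ℂ) ^ 3 ∧ (qtil q j k)⁻¹ = -(q i i : ℂ) ^ 3 ∧
        qtil q i k = 1) ∨
      -- (d)
      ((q i i : ℂ) = -1 ∧ (q j j : ℂ) = -1 ∧ (q k k : ℂ) = -1 ∧
        qtil q j k = -(qtil q i j) ∧ IsPrimitiveRoot (qtil q j k) 3 ∧ qtil q i k = 1)) :
    brk q (δ θ i + δ θ j + (δ θ i + δ θ j + δ θ k)) (δ θ j)
      (brk q (δ θ i + δ θ j) (δ θ i + δ θ j + δ θ k) (xw q [i, j]) (xw q [i, j, k]))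
      (gen θ j) ∈ I :=
  statement_6_general hconn hAAH hI hGK hij hik hjk hyp

end PreNicholsPaper
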